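/- Let π : G → Q be a surjective group homomorphism whose kernel N is abelian, where G is countable and Q is polycyclic (i.e., Q is solvable and every subgroup of Q is finitely generated). Then for every proper left-invariant metric d on G, every subgroup of G has bounded packing in G with respect to d. -/

import Mathlib

/-!
Since balls are finite, bounded packing with respect to a proper left-invariant metric follows from
the combinatorial property `BPc`, in which distance at most `D` is replaced by `x⁻¹ y` lying in
`H F H` for a finite set `F`. This property lifts through extensions with abelian kernel `N`
(`BPc.lift_abelian`): a set of pairwise close cosets is split according to the images in the
quotient, which are boundedly many by the property there, and what remains is a packing problem for
subgroups `B` of the module `N` over the polycyclic group acting on it (`pack_module`). The property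
for polycyclic groups themselves (`IsPC.bpc`) is the same argument by induction on the derived
length.

The module problem is solved by induction on `F`. If the module `N` generated by `F` over `B` is not
`B` itself, then `N / B` has a simple quotient (`exists_simp_quotient`), and simple modules over
polycyclic groups are finite by Roseblade's theorem (`Simp.finite`). So the points can be coloured
by a finite quotient of `N`; within a colour, at least one element of `F` is no longer needed.

Roseblade's theorem is proved by induction on the Hirsch length, which is encoded by `HS`. After
passing to a subgroup of finite index there is a plinth `A` (`IsPC.exists_plinth`): a free abelian
normal subgroup on which the group `Γ` acts strongly irreducibly. Mal'cev's theorem on common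
eigenvectors (`IsPC.exists_eigenvector`) gives an embedding of `A` in the algebraic closure of `ℚ`
on which a finite-index subgroup acts by scalars (`exists_hom_algClosure`); for suitable primes `l`
it can be moved to `ℤ_l` (`exists_hom_padic`). The simple module `M` is a module over `F_p[A]` with
a compatible action of `Γ`; let `P` be maximal among the annihilators of nonzero elements, a prime
ideal (`exists_max_ann`).

* `P = 0` is impossible, by generic freeness of finitely generated modules (Hall; `noe_gfree`,
  `exists_torsion_or`) and the existence of invariant ideals that avoid finitely many elements, cut
  out by roots of unity of `l`-power order (`exists_good_ideal`).
* If `P ≠ 0` has a stabilizer of finite index, Bergman's theorem on invariant ideals (`bergman`)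
  shows that a power of `A` is trivial modulo `P`.
* If the stabilizer has infinite index, it acts on a simple submodule (`gen_stab_simple`), which is
  finite by induction.

In the last two cases a power of `A` acts trivially on `M` (`core`), so that `M` is a module for a
group of smaller Hirsch length (`finite_of_eigen`, `finSimp_succ`).
-/

open Pointwise

/-- A proper left-invariant metric on a group `G`, given as a distance
function `d : G → G → ℝ`. -/
structure IsProperLeftInvMetric (G : Type*) [Group G] (d : G → G → ℝ) : Prop where
  self : ∀ x, d x x = 0
  eq_of_dist_eq_zero : ∀ x y, d x y = 0 → x = y
  symm : ∀ x y, d x y = d y x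
  triangle : ∀ x y z, d x z ≤ d x y + d y z
  left_invariant : ∀ g x y, d (g * x) (g * y) = d x y
  proper : ∀ r : ℝ, 0 < r → {g : G | d 1 g ≤ r}.Finite

/-- The distance between two subsets of `G`: the infimum of distances between
their points. -/
noncomputable def cosetDist {G : Type*} [Group G] (d : G → G → ℝ) (A B : Set G) : ℝ :=
  sInf {r : ℝ | ∃ x ∈ A, ∃ y ∈ B, d x y = r}

/-- A subgroup `H` has bounded packing in `G` with respect to `d` if for every
`D > 0` there is `n` such that any collection of (pairwise distinct) left cosets
of `H`, any two of which are at distance at most `D`, has at most `n` elements. -/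
def HasBoundedPacking {G : Type*} [Group G] (d : G → G → ℝ) (H : Subgroup G) : Prop :=
  ∀ D : ℝ, 0 < D → ∃ n : ℕ, ∀ S : Set (Set G),
    (∀ A ∈ S, ∃ g : G, A = g • (H : Set G)) →
    (∀ A ∈ S, ∀ B ∈ S, cosetDist d A B ≤ D) →
    ∀ T : Finset (Set G), ↑T ⊆ S → T.card ≤ n

namespace BPack

/-! ### Polycyclic groups -/

section
/-- A polycyclic group: solvable with all subgroups finitely generated. -/
def IsPC (Γ : Type*) [Group Γ] : Prop := Group.IsSolvable Γ ∧ ∀ K : Subgroup Γ, K.FG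

open scoped commutatorElement

section PC
variable {Γ : Type*} [Group Γ]

theorem IsPC.subgroup (h : IsPC Γ) (K : Subgroup Γ) : IsPC K := by
  have := h.1
  refine ⟨inferInstance, fun L => ?_⟩
  have := h.2 (L.map K.subtype)
  rw [Subgroup.fg_iff_submonoid_fg] at this ⊢
  exact Submonoid.FG.map_injective K.subtype K.subtype_injective this

theorem IsPC.of_surjective {Δ : Type*} [Group Δ] (h : IsPC Γ) (f : Γ →* Δ)
    (hf : Function.Surjective f) : IsPC Δ := by
  have := h.1
  refine ⟨Group.isSolvable_of_surjective hf, fun L => ?_⟩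
  have := h.2 (L.comap f)
  rw [Subgroup.fg_iff_submonoid_fg] at this ⊢
  have := this.map f
  rwa [← Subgroup.map_toSubmonoid, Subgroup.map_comap_eq_self_of_surjective hf] at this

/-- Induction along a polycyclic series. -/
theorem IsPC.induct (h : IsPC Γ) (p : Subgroup Γ → Prop) (h0 : p ⊥)
    (hstep : ∀ (K : Subgroup Γ) (t : Γ), (∀ k ∈ K, t * k * t⁻¹ ∈ K ∧ t⁻¹ * k * t ∈ K) → p K →
      p (K ⊔ Subgroup.zpowers t)) : p ⊤ := by
  obtain ⟨hs, hfg⟩ := h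
  obtain ⟨n, hn⟩ := hs.solvable
  have key : ∀ i, p (derivedSeries Γ (i + 1)) → p (derivedSeries Γ i) := by
    intro i hi
    obtain ⟨S, hS⟩ := hfg (derivedSeries Γ i)
    have : ∀ S' : Finset Γ, (S' : Set Γ) ⊆ derivedSeries Γ i →
        p (derivedSeries Γ (i + 1) ⊔ Subgroup.closure S') := by
      classical
      intro S'
      induction S' using Finset.induction_on with
      | empty => intro _; simpa using hi
      | insert t S' _ ih =>
        intro hsub
        rw [Finset.coe_insert, Set.insert_subset_iff] at hsub
        have := hstep _ t ?_ (ih hsub.2)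
        · rwa [sup_assoc, sup_comm (Subgroup.closure _), Subgroup.zpowers_eq_closure,
            ← Subgroup.closure_union, ← Set.insert_eq, ← Finset.coe_insert] at this
        · have hle : derivedSeries Γ (i + 1) ⊔ Subgroup.closure (S' : Set Γ) ≤
              derivedSeries Γ i :=
            sup_le (derivedSeries_antitone Γ (Nat.le_succ i)) ((Subgroup.closure_le _).2 hsub.2)
          have hn : ∀ t ∈ derivedSeries Γ i,
              ∀ k ∈ derivedSeries Γ (i + 1) ⊔ Subgroup.closure (S' : Set Γ),
              t * k * t⁻¹ ∈ derivedSeries Γ (i + 1) ⊔ Subgroup.closure (S' : Set Γ) := by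
            intro t ht k hk
            have : ⁅t, k⁆ ∈ derivedSeries Γ (i + 1) := by
              rw [derivedSeries_succ]
              exact Subgroup.commutator_mem_commutator ht (hle hk)
            have h2 := mul_mem (Subgroup.mem_sup_left (T := Subgroup.closure (S' : Set Γ)) this) hk
            simpa [commutatorElement_def] using h2
          intro k hk
          refine ⟨hn t hsub.1 k hk, ?_⟩
          simpa using hn t⁻¹ (inv_mem hsub.1) k hk
    have h1 := this S (by rw [← hS]; exact Subgroup.subset_closure)
    rwa [hS, sup_eq_right.2 (derivedSeries_antitone Γ (Nat.le_succ i))] at h1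
  have : ∀ j ≤ n, p (derivedSeries Γ (n - j)) := by
    intro j
    induction j with
    | zero => intro _; simpa [hn] using h0
    | succ j ih =>
      intro hj
      apply key
      have := ih (by omega)
      rwa [show n - (j + 1) + 1 = n - j by omega]
  simpa using this n le_rfl

end PC

end

/-! ### Hirsch length -/

section
section HS
variable {Γ Δ : Type*} [Group Γ] [Group Δ]

theorem mem_sup_of_normalizes {L D : Subgroup Γ} (h : ∀ l ∈ L, ∀ d ∈ D, l * d * l⁻¹ ∈ D)
    {x : Γ} : x ∈ L ⊔ D ↔ ∃ l ∈ L, ∃ d ∈ D, x = l * d := by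
  constructor
  · intro hx
    let P : Subgroup Γ :=
      { carrier := {x | ∃ l ∈ L, ∃ d ∈ D, x = l * d}
        one_mem' := ⟨1, one_mem _, 1, one_mem _, by simp⟩
        mul_mem' := by
          rintro _ _ ⟨l, hl, d, hd, rfl⟩ ⟨l', hl', d', hd', rfl⟩
          refine ⟨l * l', mul_mem hl hl', l'⁻¹ * d * l'⁻¹⁻¹ * d',
            mul_mem (h _ (inv_mem hl') _ hd) hd', by group⟩
        inv_mem' := by
          rintro _ ⟨l, hl, d, hd, rfl⟩
          exact ⟨l⁻¹, inv_mem hl, l * d⁻¹ * l⁻¹, h _ hl _ (inv_mem hd), by group⟩ }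
    have : L ⊔ D ≤ P := sup_le (fun l hl => ⟨l, hl, 1, one_mem _, by simp⟩)
      (fun d hd => ⟨1, one_mem _, d, hd, by simp⟩)
    exact this hx
  · rintro ⟨l, hl, d, hd, rfl⟩
    exact Subgroup.mul_mem_sup hl hd

theorem relIndex_ne_zero_of_cover {L K : Subgroup Γ} (F : Set Γ) (hF : F.Finite)
    (h : ∀ k ∈ K, ∃ f ∈ F, f⁻¹ * k ∈ L) : L.relIndex K ≠ 0 := by
  choose! φ hφ hφ' using h
  have : Finite (K ⧸ L.subgroupOf K) := by
    have : Finite F := hF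
    refine Finite.of_injective (fun q : K ⧸ L.subgroupOf K => (⟨φ q.out, hφ _ q.out.2⟩ : F)) ?_
    intro q q' hqq
    simp only [Subtype.mk.injEq] at hqq
    rw [← q.out_eq', ← q'.out_eq', QuotientGroup.eq, Subgroup.mem_subgroupOf]
    have h1 := hφ' _ q.out.2
    have h2 := hφ' _ q'.out.2
    rw [← hqq] at h2
    have := mul_mem (inv_mem h1) h2
    simpa [mul_assoc] using this
  rw [Subgroup.relIndex]
  have : (L.subgroupOf K).FiniteIndex := Subgroup.finiteIndex_of_finite_quotient
  exact Subgroup.FiniteIndex.index_ne_zero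

theorem exists_cover_of_relIndex_ne_zero {L K : Subgroup Γ} (h : L.relIndex K ≠ 0) :
    ∃ F : Set Γ, F.Finite ∧ ∀ k ∈ K, ∃ f ∈ F, f⁻¹ * k ∈ L := by
  have : (L.subgroupOf K).FiniteIndex := ⟨h⟩
  have : Finite (K ⧸ L.subgroupOf K) := inferInstance
  refine ⟨Set.range (fun q : K ⧸ L.subgroupOf K => ((q.out : K) : Γ)), Set.finite_range _, ?_⟩
  intro k hk
  refine ⟨_, ⟨((⟨k, hk⟩ : K) : K ⧸ L.subgroupOf K), rfl⟩, ?_⟩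
  have : ((((⟨k, hk⟩ : K) : K ⧸ L.subgroupOf K).out : K) : K ⧸ L.subgroupOf K)
    = ((⟨k, hk⟩ : K) : K ⧸ L.subgroupOf K) := Quotient.out_eq' _
  rw [QuotientGroup.eq, Subgroup.mem_subgroupOf] at this
  simpa using this

/-- `HS n K`: every chain of subgroups descending from `K`, each of infinite index in the previous
one, becomes finite after at most `n` steps. For polycyclic groups this says that the Hirsch length
is at most `n`. -/
def HS : ℕ → Subgroup Γ → Prop
  | 0, K => Finite K
  | n + 1, K => ∀ L ≤ K, L.relIndex K = 0 → HS n L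

theorem HS.mono {n : ℕ} {K' K : Subgroup Γ} (h : K' ≤ K) (hK : HS n K) : HS n K' := by
  cases n with
  | zero =>
    have : Finite K := hK
    exact Finite.of_injective _ (Subgroup.inclusion_injective h)
  | succ n =>
    intro L hL h0
    exact hK L (hL.trans h) (Subgroup.relIndex_eq_zero_of_le_right h h0)

theorem HS.succ {n : ℕ} {K : Subgroup Γ} (hK : HS n K) : HS (n + 1) K :=
  fun _ hL _ => hK.mono hL

theorem map_comap_inf (f : Γ →* Δ) {K : Subgroup Γ} {L : Subgroup Δ} (hL : L ≤ K.map f) :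
    (L.comap f ⊓ K).map f = L := by
  ext x
  simp only [Subgroup.mem_map, Subgroup.mem_inf, Subgroup.mem_comap]
  constructor
  · rintro ⟨y, ⟨hy, _⟩, rfl⟩; exact hy
  · intro hx
    obtain ⟨y, hy, rfl⟩ := hL hx
    exact ⟨y, ⟨hx, hy⟩, rfl⟩

theorem HS.map {n : ℕ} {K : Subgroup Γ} (f : Γ →* Δ) (hK : HS n K) : HS n (K.map f) := by
  induction n generalizing K with
  | zero =>
    have : Finite K := hK
    exact Finite.of_surjective _ (f.subgroupMap_surjective K)
  | succ n ih =>
    intro L hL h0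
    have : HS n (L.comap f ⊓ K) := hK _ inf_le_right (by
      rw [Subgroup.inf_relIndex_right, Subgroup.relIndex_comap, h0])
    have := ih this
    rwa [map_comap_inf f hL] at this

/-- An infinite kernel lowers the bound on the Hirsch length by one. -/
theorem HS.map_of_infinite_ker {n : ℕ} {K : Subgroup Γ} (f : Γ →* Δ) (hK : HS (n + 1) K)
    (hinf : Infinite (f.ker ⊓ K : Subgroup Γ)) : HS n (K.map f) := by
  induction n generalizing K with
  | zero =>
    by_contra hcon
    have : Nat.card (K.map f) = 0 := by
      have : Infinite (K.map f) := not_finite_iff_infinite.1 hcon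
      exact Nat.card_eq_zero_of_infinite
    rw [← Subgroup.relIndex_ker, ← Subgroup.inf_relIndex_right] at this
    have h2 : Finite (f.ker ⊓ K : Subgroup Γ) := hK _ inf_le_right this
    exact not_finite_iff_infinite.2 hinf h2
  | succ n ih =>
    intro L hL h0
    have h1 : HS (n + 1) (L.comap f ⊓ K) := hK _ inf_le_right (by
      rw [Subgroup.inf_relIndex_right, Subgroup.relIndex_comap, h0])
    have := ih h1 (by
      have hle : f.ker ⊓ K ≤ f.ker ⊓ (L.comap f ⊓ K) := by
        rintro x ⟨hx, hx'⟩
        refine ⟨hx, ?_, hx'⟩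
        have : f x = 1 := hx
        show f x ∈ L
        rw [this]; exact one_mem _
      exact Infinite.of_injective _ (Subgroup.inclusion_injective hle))
    rwa [map_comap_inf f hL] at this

theorem HS.comap_injective {n : ℕ} {K : Subgroup Δ} (f : Γ →* Δ) (hf : Function.Injective f)
    (hK : HS n K) : HS n (K.comap f) := by
  induction n generalizing K with
  | zero =>
    have : Finite K := hK
    exact Finite.of_injective (fun x : K.comap f => (⟨f x, x.2⟩ : K))
      (fun x y hxy => Subtype.ext (hf (congrArg Subtype.val hxy)))
  | succ n ih =>
    intro L hL h0
    have h1 : (L.map f).relIndex K = 0 := by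
      refine Subgroup.relIndex_eq_zero_of_le_right (Subgroup.map_comap_le f K) ?_
      rw [← Subgroup.relIndex_comap, Subgroup.comap_map_eq_self_of_injective hf, h0]
    have := ih (hK _ (Subgroup.map_le_iff_le_comap.2 hL) h1)
    rwa [Subgroup.comap_map_eq_self_of_injective hf] at this

theorem HS.top_subgroup {n : ℕ} {K : Subgroup Γ} (hK : HS n K) : HS n (⊤ : Subgroup K) := by
  have := hK.comap_injective K.subtype K.subtype_injective
  rwa [Subgroup.comap_subtype, Subgroup.subgroupOf_self] at this

/-- `K` normalizes `D`, and every subgroup between is `D` or of finite index in `K`. -/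
def CycExt (D K : Subgroup Γ) : Prop :=
  D ≤ K ∧ (∀ k ∈ K, ∀ x ∈ D, k * x * k⁻¹ ∈ D) ∧
    ∀ L, D ≤ L → L ≤ K → L = D ∨ L.relIndex K ≠ 0

theorem CycExt.inf {D K K' : Subgroup Γ} (h : CycExt D K) (hK : K' ≤ K) :
    CycExt (K' ⊓ D) K' := by
  obtain ⟨h1, h2, h3⟩ := h
  refine ⟨inf_le_left, fun k hk x hx => ⟨K'.mul_mem (K'.mul_mem hk hx.1) (K'.inv_mem hk),
    h2 k (hK hk) x hx.2⟩, fun L hL hL' => ?_⟩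
  have hn : ∀ l ∈ L, ∀ d ∈ D, l * d * l⁻¹ ∈ D := fun l hl => h2 l (hK (hL' hl))
  rcases h3 (L ⊔ D) le_sup_right (sup_le (hL'.trans hK) h1) with h | h
  · left
    refine le_antisymm (le_inf hL' ?_) hL
    rw [← h]; exact le_sup_left
  · right
    obtain ⟨F, hF, hF'⟩ := exists_cover_of_relIndex_ne_zero
      (mt (Subgroup.relIndex_eq_zero_of_le_right hK) h)
    have : ((L ⊔ D) ⊓ K') ≤ L := by
      rintro x ⟨hx, hx'⟩
      obtain ⟨l, hl, d, hd, rfl⟩ := (mem_sup_of_normalizes hn).1 hx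
      have hx'' : l * d ∈ K' := hx'
      have hl' : l ∈ K' := hL' hl
      exact mul_mem hl (hL ⟨(Subgroup.mul_mem_cancel_left K' hl').1 hx'', hd⟩)
    have h4 := Subgroup.relIndex_eq_zero_of_le_left (L := K') this
    rw [Subgroup.inf_relIndex_right] at h4
    exact fun h0 => mt (Subgroup.relIndex_eq_zero_of_le_right hK) h (h4 h0)

/-- The Hirsch length grows by at most one in an extension with cyclic quotient. -/
theorem HS.ext {n : ℕ} {D K : Subgroup Γ} (h : CycExt D K) (hD : HS n D) : HS (n + 1) K := by
  induction n generalizing D K with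
  | zero =>
    intro L hL h0
    have h' := h.inf hL
    have : Finite D := hD
    obtain ⟨h1, h2, h3⟩ := h
    have hn : ∀ l ∈ L, ∀ d ∈ D, l * d * l⁻¹ ∈ D := fun l hl => h2 l (hL hl)
    rcases h3 (L ⊔ D) le_sup_right (sup_le hL h1) with h | h
    · have : L ≤ D := by rw [← h]; exact le_sup_left
      exact HS.mono this hD
    · exfalso
      refine Subgroup.relIndex_ne_zero_trans (relIndex_ne_zero_of_cover (D : Set Γ)
        (Set.toFinite _) ?_) h h0
      rw [sup_comm]
      intro x hx
      obtain ⟨l, hl, d, hd, rfl⟩ := (mem_sup_of_normalizes hn).1 (by rwa [sup_comm])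
      exact ⟨l * d * l⁻¹, hn l hl d hd, by convert hl using 1; group⟩
  | succ n ih =>
    intro L hL h0
    have h' := h.inf hL
    by_cases hrel : (L ⊓ D).relIndex D = 0
    · exact ih h' (hD _ inf_le_right hrel)
    · obtain ⟨h1, h2, h3⟩ := h
      have hn : ∀ l ∈ L, ∀ d ∈ D, l * d * l⁻¹ ∈ D := fun l hl => h2 l (hL hl)
      rcases h3 (L ⊔ D) le_sup_right (sup_le hL h1) with h | h
      · have : L ≤ D := by rw [← h]; exact le_sup_left
        exact HS.mono this hD
      · exfalso
        obtain ⟨F, hF, hF'⟩ := exists_cover_of_relIndex_ne_zero hrel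
        refine Subgroup.relIndex_ne_zero_trans (relIndex_ne_zero_of_cover F hF ?_) h h0
        intro x hx
        obtain ⟨l, hl, d, hd, rfl⟩ := (mem_sup_of_normalizes hn).1 hx
        obtain ⟨f, hf, hf'⟩ := hF' _ (hn l hl d hd)
        refine ⟨f, hf, ?_⟩
        have := mul_mem hf'.1 hl
        simpa [mul_assoc] using this

theorem cycExt_zpowers {D : Subgroup Γ} {t : Γ}
    (ht : ∀ k ∈ D, t * k * t⁻¹ ∈ D ∧ t⁻¹ * k * t ∈ D) :
    CycExt D (D ⊔ Subgroup.zpowers t) := by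
  have hz : ∀ m : ℤ, ∀ d ∈ D, t ^ m * d * (t ^ m)⁻¹ ∈ D := by
    intro m
    induction m using Int.induction_on with
    | zero => simp
    | succ m ih =>
      intro d hd
      have := (ht _ (ih d hd)).1
      convert this using 1; group
    | pred m ih =>
      intro d hd
      have := (ht _ (ih d hd)).2
      convert this using 1; group
  have hz' : ∀ l ∈ Subgroup.zpowers t, ∀ d ∈ D, l * d * l⁻¹ ∈ D := by
    rintro _ ⟨m, rfl⟩; exact hz m
  refine ⟨le_sup_left, ?_, ?_⟩
  · intro k hk x hx
    rw [sup_comm] at hk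
    obtain ⟨l, hl, d, hd, rfl⟩ := (mem_sup_of_normalizes hz').1 hk
    have := hz' l hl _ (mul_mem (mul_mem hd hx) (inv_mem hd))
    convert this using 1; group
  · intro L hL hL'
    by_cases h : L ≤ D
    · exact Or.inl (le_antisymm h hL)
    · right
      obtain ⟨x, hx, hxD⟩ := Set.not_subset.1 h
      have hx' := hL' hx
      rw [sup_comm] at hx'
      obtain ⟨_, ⟨m, rfl⟩, d, hd, rfl⟩ := (mem_sup_of_normalizes hz').1 hx'
      have htm : t ^ m ∈ L := by simpa using mul_mem hx (inv_mem (hL hd))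
      have hm : m ≠ 0 := by
        rintro rfl
        exact hxD (by simpa using hd)
      refine relIndex_ne_zero_of_cover ((fun r : ℤ => t ^ r) '' Set.Ico 0 |m|)
        ((Set.finite_Ico _ _).image _) ?_
      intro k hk
      rw [sup_comm] at hk
      obtain ⟨_, ⟨j, rfl⟩, d', hd', rfl⟩ := (mem_sup_of_normalizes hz').1 hk
      refine ⟨_, ⟨j % m, ⟨Int.emod_nonneg _ hm, Int.emod_lt_abs _ hm⟩, rfl⟩, ?_⟩
      have : (t ^ (j % m))⁻¹ * (t ^ j * d') = (t ^ m) ^ (j / m) * d' := by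
        rw [← mul_assoc, ← zpow_neg, ← zpow_add, ← zpow_mul]
        congr 2
        rw [Int.emod_def]; ring
      show (t ^ (j % m))⁻¹ * (t ^ j * d') ∈ L
      rw [this]
      exact mul_mem (zpow_mem htm _) (hL hd')

theorem IsPC.exists_HS (h : IsPC Γ) : ∃ n, HS n (⊤ : Subgroup Γ) :=
  h.induct (fun K => ∃ n, HS n K) ⟨0, inferInstanceAs (Finite (⊥ : Subgroup Γ))⟩
    (fun _ _ ht ⟨n, hn⟩ => ⟨n + 1, HS.ext (cycExt_zpowers ht) hn⟩)

end HS

end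

/-! ### Plinths -/

section
open scoped IsMulCommutative

section Plinth
variable {Γ : Type*} [Group Γ]

/-- Finite-index strong irreducibility of the abelian subgroup `A`: every subgroup of `A` that is
normalized by a finite-index subgroup of `Γ` is trivial or has finite index in `A`. -/
def StrIrr (A : Subgroup Γ) : Prop :=
  ∀ K : Subgroup Γ, K.index ≠ 0 → ∀ B ≤ A, (∀ k ∈ K, ∀ b ∈ B, k * b * k⁻¹ ∈ B) →
    B = ⊥ ∨ B.relIndex A ≠ 0

/-- Nontrivial (hence infinite) torsion-free abelian subgroups. -/
def AbTF (A : Subgroup Γ) : Prop :=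
  A ≠ ⊥ ∧ (∀ a ∈ A, ∀ b ∈ A, a * b = b * a) ∧ ∀ a ∈ A, ∀ n : ℕ, n ≠ 0 → a ^ n = 1 → a = 1

theorem AbTF.infinite {A : Subgroup Γ} (h : AbTF A) : Infinite A := by
  by_contra hf
  have : Finite A := not_infinite_iff_finite.1 hf
  refine h.1 ((Subgroup.eq_bot_iff_forall _).2 fun a ha => ?_)
  refine h.2.2 a ha (Nat.card A) Nat.card_pos.ne' ?_
  have := pow_card_eq_one' (x := (⟨a, ha⟩ : A))
  exact congrArg (fun z : A => (z : Γ)) this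

theorem exists_torsion_exponent {Z : Type*} [CommGroup Z] [Infinite Z]
    (hfg : ∀ T : Subgroup Z, T.FG) :
    ∃ m : ℕ, m ≠ 0 ∧ (∀ z : Z, ∀ n : ℕ, n ≠ 0 → z ^ n = 1 → z ^ m = 1) ∧ ∃ z : Z, z ^ m ≠ 1 := by
  have hZtor : Finite (CommGroup.torsion Z) := by
    have : Group.FG (CommGroup.torsion Z) := (Group.fg_iff_subgroup_fg _).2 (hfg _)
    exact CommGroup.finite_of_fg_isMulTorsion _ fun ⟨z, hz⟩ => by
      obtain ⟨n, hn, h⟩ := isOfFinOrder_iff_pow_eq_one.1 hz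
      exact isOfFinOrder_iff_pow_eq_one.2 ⟨n, hn, Subtype.ext h⟩
  have hm0 : Nat.card (CommGroup.torsion Z) ≠ 0 := Nat.card_pos.ne'
  refine ⟨Nat.card (CommGroup.torsion Z), hm0, fun z n hn hz => ?_, ?_⟩
  · have hz' : z ∈ CommGroup.torsion Z :=
      isOfFinOrder_iff_pow_eq_one.2 ⟨n, Nat.pos_of_ne_zero hn, hz⟩
    have := pow_card_eq_one' (x := (⟨z, hz'⟩ : CommGroup.torsion Z))
    exact congrArg (fun z : CommGroup.torsion Z => (z : Z)) this
  · by_contra! hcon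
    have : Group.FG Z := ⟨hfg ⊤⟩
    have : Finite Z := CommGroup.finite_of_fg_isMulTorsion _ fun z =>
      isOfFinOrder_iff_pow_eq_one.2 ⟨_, Nat.pos_of_ne_zero hm0, hcon z⟩
    exact not_finite Z

/-- The last infinite term of the derived series has finite commutator subgroup, so its centre has
finite index; a power of the centre that kills the torsion is the required subgroup. -/
theorem IsPC.exists_normal_abTF [Infinite Γ] (h : IsPC Γ) :
    ∃ A : Subgroup Γ, AbTF A ∧ ∀ k, ∀ a ∈ A, k * a * k⁻¹ ∈ A := by
  -- the last infinite term of the derived series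
  obtain ⟨i, hi, hi'⟩ : ∃ i, Infinite (derivedSeries Γ i) ∧ Finite (derivedSeries Γ (i + 1)) := by
    by_contra! hcon
    have : ∀ i, Infinite (derivedSeries Γ i) := by
      intro i
      induction i with
      | zero =>
        rw [derivedSeries_zero]
        exact Infinite.of_injective (fun x : Γ => (⟨x, trivial⟩ : (⊤ : Subgroup Γ)))
          (fun x y hxy => congrArg Subtype.val hxy)
      | succ i ih => exact not_finite_iff_infinite.1 (by simpa using hcon i ih)
    obtain ⟨n, hn⟩ := h.1.solvable
    have := this n
    rw [hn] at this
    exact not_finite_iff_infinite.2 this inferInstance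
  set K := derivedSeries Γ i with hK
  have hpcK := h.subgroup K
  have : Group.FG K := (Group.fg_iff_subgroup_fg K).2 (h.2 K)
  have : Finite (commutatorSet K) := by
    refine Finite.of_injective (fun x : commutatorSet K =>
      (⟨x.1, ?_⟩ : derivedSeries Γ (i + 1))) ?_
    · obtain ⟨_, a, b, rfl⟩ := x
      rw [derivedSeries_succ]
      exact Subgroup.commutator_mem_commutator a.2 b.2
    · intro x y hxy
      exact Subtype.ext (Subtype.ext (congrArg (fun z : derivedSeries Γ (i + 1) => (z : Γ)) hxy))
  have hfi : (Subgroup.center K).FiniteIndex := inferInstance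
  have hZinf : Infinite (Subgroup.center K) := by
    by_contra hf
    have : Finite (Subgroup.center K) := not_infinite_iff_finite.1 hf
    have : Finite K := by
      refine @Nat.finite_of_card_ne_zero _ ?_
      rw [← Subgroup.card_mul_index (Subgroup.center K)]
      exact mul_ne_zero Nat.card_pos.ne' hfi.index_ne_zero
    exact not_finite_iff_infinite.2 hi this
  have hZpc := hpcK.subgroup (Subgroup.center K)
  obtain ⟨m, hm0, htor, z₀, hz₀⟩ := exists_torsion_exponent (Z := Subgroup.center K) hZpc.2
  refine ⟨((powMonoidHom m : Subgroup.center K →* Subgroup.center K).range.map (Subgroup.center K).subtype).map K.subtype, ⟨?_, ?_, ?_⟩, ?_⟩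
  · intro hbot
    have : (((z₀ ^ m : Subgroup.center K) : K) : Γ) ∈
        ((powMonoidHom m : Subgroup.center K →* Subgroup.center K).range.map
          (Subgroup.center K).subtype).map K.subtype :=
      ⟨_, ⟨_, ⟨z₀, rfl⟩, rfl⟩, rfl⟩
    rw [hbot, Subgroup.mem_bot] at this
    exact hz₀ (Subtype.ext (Subtype.ext this))
  · rintro _ ⟨_, ⟨x, -, rfl⟩, rfl⟩ _ ⟨_, ⟨y, -, rfl⟩, rfl⟩
    exact congrArg (fun z : Subgroup.center K => ((z : K) : Γ)) (mul_comm x y)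
  · rintro _ ⟨_, ⟨_, ⟨x, rfl⟩, rfl⟩, rfl⟩ n hn hx
    have h1 : x ^ (m * n) = 1 := by
      rw [pow_mul]; exact Subtype.ext (Subtype.ext hx)
    have := htor x (m * n) (mul_ne_zero hm0 hn) h1
    exact congrArg (fun z : Subgroup.center K => ((z : K) : Γ)) this
  · rintro k _ ⟨_, ⟨_, ⟨x, rfl⟩, rfl⟩, rfl⟩
    have hn : K.Normal := derivedSeries_normal Γ i
    have hx : k * ((x : K) : Γ) * k⁻¹ ∈ K := hn.conj_mem _ x.1.2 k
    have hc : (⟨_, hx⟩ : K) ∈ Subgroup.center K := by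
      rw [Subgroup.mem_center_iff]
      intro g
      have h1 := (Subgroup.mem_center_iff.1 x.2) ⟨k⁻¹ * g * k, by simpa using hn.conj_mem _ g.2 k⁻¹⟩
      have h2 := congrArg Subtype.val h1
      simp only [Subgroup.coe_mul] at h2
      apply Subtype.ext
      simp only [Subgroup.coe_mul]
      calc (g : Γ) * (k * ((x : K) : Γ) * k⁻¹) = k * (k⁻¹ * g * k * ((x : K) : Γ)) * k⁻¹ := by group
        _ = _ := by rw [h2]; group
    refine ⟨_, ⟨_, ⟨⟨_, hc⟩, rfl⟩, rfl⟩, ?_⟩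
    show (k * ((x : K) : Γ) * k⁻¹) ^ m = k * ((x : K) : Γ) ^ m * k⁻¹
    rw [conj_pow]

/-- A plinth: a finite-index subgroup of an infinite polycyclic group normalizes a torsion-free
abelian subgroup that is rationally irreducible under all subgroups of finite index. -/
theorem IsPC.exists_plinth [Infinite Γ] (h : IsPC Γ) :
    ∃ (Γ₀ A : Subgroup Γ), Γ₀.index ≠ 0 ∧ AbTF A ∧ (∀ k ∈ Γ₀, ∀ a ∈ A, k * a * k⁻¹ ∈ A) ∧
      A ≤ Γ₀ ∧ StrIrr A := by
  classical
  have hex : ∃ n : ℕ, ∃ (Γ₀ A : Subgroup Γ), Γ₀.index ≠ 0 ∧ AbTF A ∧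
      (∀ k ∈ Γ₀, ∀ a ∈ A, k * a * k⁻¹ ∈ A) ∧ HS n A := by
    obtain ⟨A, hA, hA'⟩ := h.exists_normal_abTF
    obtain ⟨n, hn⟩ := h.exists_HS
    exact ⟨n, ⊤, A, by simp, hA, fun k _ => hA' k, hn.mono le_top⟩
  obtain ⟨Γ₀, A, hΓ, hA, hinv, hHS⟩ := Nat.find_spec hex
  have hmin : ∀ B : Subgroup Γ, ∀ Γ' : Subgroup Γ, Γ'.index ≠ 0 → AbTF B →
      (∀ k ∈ Γ', ∀ a ∈ B, k * a * k⁻¹ ∈ B) → ∀ n, HS n B → Nat.find hex ≤ n :=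
    fun B Γ' h1 h2 h3 n h4 => Nat.find_min' hex ⟨Γ', B, h1, h2, h3, h4⟩
  have hAn : ∀ l ∈ Γ₀, ∀ d ∈ A, l * d * l⁻¹ ∈ A := hinv
  refine ⟨Γ₀ ⊔ A, A, ?_, hA, ?_, le_sup_right, ?_⟩
  · exact mt (fun h0 => by
      have := Subgroup.index_dvd_of_le (le_sup_left : Γ₀ ≤ Γ₀ ⊔ A)
      rw [h0] at this; exact zero_dvd_iff.1 this) hΓ
  · intro k hk a ha
    obtain ⟨l, hl, d, hd, rfl⟩ := (mem_sup_of_normalizes hAn).1 hk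
    have := hinv l hl _ (A.mul_mem (A.mul_mem hd ha) (A.inv_mem hd))
    convert this using 1; group
  · intro K hK B hB hKB
    by_contra! hcon
    have hBtf : AbTF B := ⟨hcon.1, fun a ha b hb => hA.2.1 a (hB ha) b (hB hb),
      fun a ha => hA.2.2 a (hB ha)⟩
    generalize hN : Nat.find hex = N at hHS hmin
    cases N with
    | zero =>
      exact not_finite_iff_infinite.2 hA.infinite hHS
    | succ N =>
      have := hmin B K hK hBtf hKB N (hHS B hB hcon.2)
      omega

end Plinth

end

/-! ### Noetherian skew modules -/

section
set_option linter.unusedSectionVars false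

/-- The compatibility `g • (d • m) = (g • d) • (g • m)`, making `M` a module over the skew group
ring of `Γ` over `D`. -/
class SkewModule (Γ D M : Type*) [Group Γ] [CommRing D] [MulSemiringAction Γ D] [AddCommGroup M]
    [Module D M] [DistribMulAction Γ M] : Prop where
  smul_smul' : ∀ (g : Γ) (d : D) (m : M), g • (d • m) = (g • d) • (g • m)

section Skew
variable {Γ D M : Type*} [Group Γ] [CommRing D] [MulSemiringAction Γ D] [AddCommGroup M]
    [Module D M] [DistribMulAction Γ M] [SkewModule Γ D M]

/-- The translate `g N` of a submodule. -/
def tr (g : Γ) (N : Submodule D M) : Submodule D M where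
  carrier := {m | g⁻¹ • m ∈ N}
  zero_mem' := by simp
  add_mem' := by
    intro a b ha hb
    simp only [Set.mem_ofPred_eq, smul_add] at *
    exact add_mem ha hb
  smul_mem' := by
    intro d m hm
    simp only [Set.mem_ofPred_eq] at *
    rw [SkewModule.smul_smul']
    exact N.smul_mem _ hm

theorem mem_tr {g : Γ} {N : Submodule D M} {m : M} : m ∈ tr g N ↔ g⁻¹ • m ∈ N := Iff.rfl

theorem smul_mem_tr {g : Γ} {N : Submodule D M} {m : M} : g • m ∈ tr g N ↔ m ∈ N := by
  rw [mem_tr, inv_smul_smul]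

theorem tr_mono (g : Γ) {N N' : Submodule D M} (h : N ≤ N') : tr g N ≤ tr g N' := fun _ hm => h hm

theorem tr_tr (g h : Γ) (N : Submodule D M) : tr g (tr h N) = tr (g * h) N := by
  ext m; simp only [mem_tr, mul_inv_rev, mul_smul]

theorem tr_one (N : Submodule D M) : tr (1 : Γ) N = N := by
  ext m; simp [mem_tr]

theorem tr_le_iff {g : Γ} {N N' : Submodule D M} : tr g N ≤ N' ↔ N ≤ tr g⁻¹ N' := by
  constructor
  · intro h m hm
    rw [mem_tr, inv_inv]
    exact h (smul_mem_tr.2 hm)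
  · intro h m hm
    have := h hm
    rw [mem_tr, inv_inv, smul_inv_smul] at this
    exact this

theorem tr_sup (g : Γ) (N N' : Submodule D M) : tr g (N ⊔ N') = tr g N ⊔ tr g N' := by
  apply le_antisymm
  · rw [tr_le_iff]
    refine sup_le ?_ ?_
    · rw [← tr_le_iff]; exact le_sup_left
    · rw [← tr_le_iff]; exact le_sup_right
  · exact sup_le (tr_mono g le_sup_left) (tr_mono g le_sup_right)

theorem tr_inf (g : Γ) (N N' : Submodule D M) : tr g (N ⊓ N') = tr g N ⊓ tr g N' := rfl

variable (D) in
/-- The submodule generated over `D` and the subgroup `K` by the set `S`. -/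
def gen (K : Subgroup Γ) (S : Set M) : Submodule D M :=
  Submodule.span D {m | ∃ g ∈ K, ∃ s ∈ S, m = g • s}

/-- Invariance of a submodule under a subgroup. -/
def Inv (K : Subgroup Γ) (N : Submodule D M) : Prop := ∀ g ∈ K, ∀ m ∈ N, g • m ∈ N

theorem Inv.mono {K K' : Subgroup Γ} (h : K ≤ K') {N : Submodule D M} (hN : Inv K' N) : Inv K N :=
  fun g hg => hN g (h hg)

theorem Inv.tr_eq {K : Subgroup Γ} {N : Submodule D M} (h : Inv K N) {g : Γ} (hg : g ∈ K) :
    tr g N = N := by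
  ext m
  rw [mem_tr]
  constructor
  · intro hm; simpa using h g hg _ hm
  · intro hm; exact h _ (inv_mem hg) _ hm

theorem Inv.sup {K : Subgroup Γ} {N N' : Submodule D M} (h : Inv K N) (h' : Inv K N') :
    Inv K (N ⊔ N') := by
  intro g hg m hm
  obtain ⟨a, ha, b, hb, rfl⟩ := Submodule.mem_sup.1 hm
  rw [smul_add]
  exact Submodule.add_mem_sup (h g hg a ha) (h' g hg b hb)

theorem Inv.inf {K : Subgroup Γ} {N N' : Submodule D M} (h : Inv K N) (h' : Inv K N') :
    Inv K (N ⊓ N') := fun g hg m hm => ⟨h g hg m hm.1, h' g hg m hm.2⟩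

theorem Inv.tr {K : Subgroup Γ} {N : Submodule D M} (h : Inv K N) {t : Γ}
    (ht : ∀ k ∈ K, t⁻¹ * k * t ∈ K) : Inv K (tr t N) := by
  intro g hg m hm
  rw [mem_tr] at hm ⊢
  have := h _ (ht g hg) _ hm
  rwa [smul_smul, mul_inv_cancel_right, mul_smul] at this

theorem inv_iSup {K : Subgroup Γ} {ι : Type*} {N : ι → Submodule D M} (h : ∀ i, Inv K (N i)) :
    Inv K (⨆ i, N i) := by
  intro g hg m hm
  have : (⨆ i, N i) ≤ BPack.tr g⁻¹ (⨆ i, N i) := by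
    refine iSup_le fun i m hm => ?_
    rw [mem_tr, inv_inv]
    exact le_iSup N i (h i g hg m hm)
  have := this hm
  rwa [mem_tr, inv_inv] at this

theorem subset_gen (K : Subgroup Γ) (S : Set M) {s : M} (hs : s ∈ S) : s ∈ gen D K S :=
  Submodule.subset_span ⟨1, one_mem _, s, hs, by simp⟩

theorem gen_le {K : Subgroup Γ} {S : Set M} {N : Submodule D M} (hN : Inv K N)
    (h : ∀ s ∈ S, s ∈ N) : gen D K S ≤ N := by
  refine Submodule.span_le.2 ?_
  rintro _ ⟨g, hg, s, hs, rfl⟩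
  exact hN g hg s (h s hs)

theorem inv_gen (K : Subgroup Γ) (S : Set M) : Inv K (gen D K S) := by
  intro g hg m hm
  have : gen D K S ≤ tr g⁻¹ (gen D K S) := by
    refine Submodule.span_le.2 ?_
    rintro _ ⟨g', hg', s, hs, rfl⟩
    show g⁻¹⁻¹ • g' • s ∈ gen D K S
    rw [inv_inv, smul_smul]
    exact Submodule.subset_span ⟨_, mul_mem hg hg', s, hs, rfl⟩
  have := this hm
  rwa [mem_tr, inv_inv] at this

theorem gen_bot (S : Set M) : gen D (⊥ : Subgroup Γ) S = Submodule.span D S := by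
  unfold gen
  congr 1
  ext m
  simp [Subgroup.mem_bot]

/-- The increasing filtration `B + N₀ + t N₀ + ⋯ + tⁿ⁻¹ N₀`. -/
def filt (t : Γ) (B N₀ : Submodule D M) : ℕ → Submodule D M
  | 0 => B
  | n + 1 => filt t B N₀ n ⊔ tr (t ^ n) N₀

section filt
variable {t : Γ} {B N₀ : Submodule D M}

theorem filt_mono : Monotone (filt t B N₀) := monotone_nat_of_le_succ fun _ => le_sup_left

theorem filt_shift (hB : tr t B = B) (n : ℕ) : tr t (filt t B N₀ n) ≤ filt t B N₀ (n + 1) := by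
  induction n with
  | zero => rw [show filt t B N₀ 0 = B from rfl, hB]; exact filt_mono (Nat.zero_le 1)
  | succ n ih =>
    rw [show filt t B N₀ (n + 1) = filt t B N₀ n ⊔ tr (t ^ n) N₀ from rfl, tr_sup, tr_tr,
      ← pow_succ']
    exact sup_le (ih.trans le_sup_left) le_sup_right

theorem filt_shift_pow (hB : tr t B = B) (n j : ℕ) :
    tr (t ^ j) (filt t B N₀ n) ≤ filt t B N₀ (n + j) := by
  induction j with
  | zero => rw [pow_zero, tr_one]; exact le_rfl
  | succ j ih =>
    rw [pow_succ', ← tr_tr]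
    exact (tr_mono t ih).trans (filt_shift hB _)

theorem pow_normalizes {K : Subgroup Γ} {t : Γ}
    (ht : ∀ k ∈ K, t * k * t⁻¹ ∈ K ∧ t⁻¹ * k * t ∈ K) (n : ℕ) :
    ∀ k ∈ K, t ^ n * k * (t ^ n)⁻¹ ∈ K ∧ (t ^ n)⁻¹ * k * t ^ n ∈ K := by
  induction n with
  | zero => intro k hk; simpa using hk
  | succ n ih =>
    intro k hk
    refine ⟨?_, ?_⟩
    · have := (ht _ (ih k hk).1).1
      convert this using 1; group
    · have := (ht _ (ih k hk).2).2
      convert this using 1; group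

theorem inv_filt {K : Subgroup Γ} (ht : ∀ k ∈ K, t * k * t⁻¹ ∈ K ∧ t⁻¹ * k * t ∈ K)
    (hB : Inv K B) (hN : Inv K N₀) (n : ℕ) : Inv K (filt t B N₀ n) := by
  induction n with
  | zero => exact hB
  | succ n ih => exact ih.sup (hN.tr fun k hk => (pow_normalizes ht n k hk).2)

/-- Some power of `t` moves a given element into the filtration. -/
theorem filt_exhausts {K : Subgroup Γ} (ht : ∀ k ∈ K, t * k * t⁻¹ ∈ K ∧ t⁻¹ * k * t ∈ K)
    {S : Set M} (hB : Inv (K ⊔ Subgroup.zpowers t) B) {m : M}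
    (hm : m ∈ B ⊔ gen D (K ⊔ Subgroup.zpowers t) S) :
    ∃ j n : ℕ, t ^ j • m ∈ filt t B (gen D K S) n := by
  have hBt : tr t B = B :=
    hB.tr_eq ((le_sup_right : _ ≤ K ⊔ Subgroup.zpowers t) (Subgroup.mem_zpowers t))
  set N₀ := gen D K S
  have hup : ∀ {m : M} {j n : ℕ} (i : ℕ), t ^ j • m ∈ filt t B N₀ n →
      t ^ (j + i) • m ∈ filt t B N₀ (n + i) := by
    intro m j n i h
    rw [add_comm j i, pow_add, mul_smul]
    exact filt_shift_pow hBt n i (smul_mem_tr.2 h)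
  let P : Submodule D M :=
    { carrier := {m | ∃ j n : ℕ, t ^ j • m ∈ filt t B N₀ n}
      zero_mem' := ⟨0, 0, by simp⟩
      add_mem' := by
        rintro a b ⟨j, n, h⟩ ⟨j', n', h'⟩
        refine ⟨j + j', (n + j') + (n' + j), ?_⟩
        rw [smul_add]
        refine add_mem (filt_mono (by omega) (hup j' h)) ?_
        rw [add_comm j j']
        exact filt_mono (by omega) (hup j h')
      smul_mem' := by
        rintro d a ⟨j, n, h⟩
        refine ⟨j, n, ?_⟩
        rw [SkewModule.smul_smul']
        exact Submodule.smul_mem _ _ h }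
  have : B ⊔ gen D (K ⊔ Subgroup.zpowers t) S ≤ P := by
    refine sup_le (fun b hb => ⟨0, 0, by rw [pow_zero, one_smul]; exact hb⟩) (Submodule.span_le.2 ?_)
    rintro _ ⟨g, hg, s, hs, rfl⟩
    have hz' : ∀ l ∈ Subgroup.zpowers t, ∀ d ∈ K, l * d * l⁻¹ ∈ K :=
      fun l hl d hd => (cycExt_zpowers ht).2.1 l
        ((le_sup_right : _ ≤ K ⊔ Subgroup.zpowers t) hl) d hd
    rw [sup_comm] at hg
    obtain ⟨_, ⟨i, rfl⟩, k, hk, rfl⟩ := (mem_sup_of_normalizes hz').1 hg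
    have hi : (0 : ℤ) ≤ i.natAbs + i := by omega
    refine ⟨i.natAbs, (i.natAbs + i).toNat + 1, ?_⟩
    have : t ^ i.natAbs • (t ^ i * k) • s = t ^ ((i.natAbs + i).toNat) • (k • s) := by
      rw [smul_smul, smul_smul, ← mul_assoc, ← zpow_natCast, ← zpow_natCast, ← zpow_add,
        Int.toNat_of_nonneg hi]
    show t ^ i.natAbs • (t ^ i * k) • s ∈ _
    rw [this]
    refine (le_sup_right : _ ≤ filt t B N₀ (_ + 1)) (smul_mem_tr.2 ?_)
    exact Submodule.subset_span ⟨k, hk, s, hs, rfl⟩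
  exact this hm
end filt

/-- Noetherianity of finitely generated modules over the skew group ring of `K`. -/
def Noe (D M : Type*) [CommRing D] [MulSemiringAction Γ D] [AddCommGroup M]
    [Module D M] [DistribMulAction Γ M] [SkewModule Γ D M] (K : Subgroup Γ) : Prop :=
  ∀ S : Set M, S.Finite → ∀ U : Submodule D M, U ≤ gen D K S → Inv K U →
    ∃ S' : Set M, S'.Finite ∧ U = gen D K S'

theorem exists_mem_of_finite_subset_iSup {U : ℕ → Submodule D M} (hU : Monotone U) {S : Set M}
    (hS : S.Finite) (h : ∀ s ∈ S, s ∈ ⨆ n, U n) : ∃ n, ∀ s ∈ S, s ∈ U n := by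
  induction S, hS using Set.Finite.induction_on with
  | empty => exact ⟨0, by simp⟩
  | insert _ _ ih =>
    rename_i a S _ _
    obtain ⟨n, hn⟩ := ih fun s hs => h s (Set.mem_insert_of_mem _ hs)
    obtain ⟨k, hk⟩ := (Submodule.mem_iSup_of_directed U hU.directed_le).1 (h a (Set.mem_insert _ _))
    refine ⟨max n k, ?_⟩
    rintro s (rfl | hs)
    · exact hU (le_max_right _ _) hk
    · exact hU (le_max_left _ _) (hn s hs)

theorem Noe.stabilizes {K : Subgroup Γ} (h : Noe D M K) {S : Set M} (hS : S.Finite)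
    {U : ℕ → Submodule D M} (hU : Monotone U) (hle : ∀ n, U n ≤ gen D K S)
    (hinv : ∀ n, Inv K (U n)) : ∃ n₀, ∀ n, U n ≤ U n₀ := by
  obtain ⟨S', hS', heq⟩ := h S hS (⨆ n, U n) (iSup_le hle) (inv_iSup hinv)
  obtain ⟨n₀, hn₀⟩ := exists_mem_of_finite_subset_iSup hU hS' (fun s hs => by
    rw [heq]; exact subset_gen K S' hs)
  refine ⟨n₀, fun n => (le_iSup U n).trans ?_⟩
  rw [heq]
  exact gen_le (hinv n₀) hn₀

/-- Hall's version of the Hilbert basis argument: the submodules `L n` of leading coefficients of the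
elements of `U` of degree at most `n` form an ascending chain in `N₀ = D[K] S`, which stabilizes. -/
theorem noe_step {K : Subgroup Γ} {t : Γ} (ht : ∀ k ∈ K, t * k * t⁻¹ ∈ K ∧ t⁻¹ * k * t ∈ K)
    (h : Noe D M K) : Noe D M (K ⊔ Subgroup.zpowers t) := by
  intro S hS U hU hinv
  set N₀ := gen D K S with hN₀
  set V := filt t ⊥ N₀ with hV
  have hinvB : Inv (K ⊔ Subgroup.zpowers t) (⊥ : Submodule D M) := by
    intro g _ m hm
    rw [Submodule.mem_bot] at hm ⊢
    rw [hm, smul_zero]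
  have htK : t ∈ K ⊔ Subgroup.zpowers t :=
    (le_sup_right : _ ≤ K ⊔ Subgroup.zpowers t) (Subgroup.mem_zpowers t)
  have hBt := hinvB.tr_eq htK
  have hUt := hinv.tr_eq htK
  have hUtn : ∀ n : ℕ, tr (t ^ n) U = U := fun n => hinv.tr_eq (pow_mem htK n)
  have hVinv : ∀ n, Inv K (V n) := fun n =>
    inv_filt ht (hinvB.mono le_sup_left) (inv_gen K S) n
  let L : ℕ → Submodule D M := fun n => N₀ ⊓ tr (t ^ n)⁻¹ (U ⊔ V n)
  have hLmem : ∀ {n m}, m ∈ L n ↔ m ∈ N₀ ∧ t ^ n • m ∈ U ⊔ V n := by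
    intro n m
    show m ∈ N₀ ∧ (t ^ n)⁻¹⁻¹ • m ∈ U ⊔ V n ↔ _
    rw [inv_inv]
  have hLmono : Monotone L := by
    refine monotone_nat_of_le_succ fun n m hm => ?_
    rw [hLmem] at hm ⊢
    refine ⟨hm.1, ?_⟩
    have : t ^ (n + 1) • m ∈ tr t (U ⊔ V n) := by
      rw [pow_succ', mul_smul, smul_mem_tr]; exact hm.2
    rw [tr_sup, hUt] at this
    exact sup_le_sup_left (filt_shift hBt n) _ this
  have hLinv : ∀ n, Inv K (L n) := fun n =>
    (inv_gen K S).inf (((hinv.mono le_sup_left).sup (hVinv n)).tr fun k hk => by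
      rw [inv_inv]; exact (pow_normalizes ht n k hk).1)
  obtain ⟨n₀, hn₀⟩ := h.stabilizes hS hLmono (fun n => inf_le_left) hLinv
  choose G hGfin hG using fun n => h S hS (L n) inf_le_left (hLinv n)
  have hlift : ∀ n, ∀ s ∈ G n, ∃ u ∈ U, t ^ n • s - u ∈ V n := by
    intro n s hs
    have : s ∈ L n := by rw [hG n]; exact subset_gen K _ hs
    obtain ⟨u, hu, v, hv, huv⟩ := Submodule.mem_sup.1 (hLmem.1 this).2
    exact ⟨u, hu, by rw [← huv, add_sub_cancel_left]; exact hv⟩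
  choose! u hu hu' using hlift
  let S' : Set M := ⋃ n ∈ Set.Iic n₀, u n '' G n
  have hS'fin : S'.Finite := (Set.finite_Iic n₀).biUnion fun n _ => (hGfin n).image _
  set W := gen D (K ⊔ Subgroup.zpowers t) S' with hW
  have hWinv : Inv (K ⊔ Subgroup.zpowers t) W := inv_gen _ _
  have hWU : W ≤ U := by
    refine gen_le hinv fun s hs => ?_
    simp only [S', Set.mem_iUnion] at hs
    obtain ⟨n, _, g, hg, rfl⟩ := hs
    exact hu n g hg
  have hle : ∀ n ≤ n₀, ∀ m ∈ L n, t ^ n • m ∈ W ⊔ V n := by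
    intro n hn m hm
    have : L n ≤ tr (t ^ n)⁻¹ (W ⊔ V n) := by
      rw [hG n]
      refine gen_le (((hWinv.mono le_sup_left).sup (hVinv n)).tr fun k hk => by
        rw [inv_inv]; exact (pow_normalizes ht n k hk).1) fun s hs => ?_
      rw [mem_tr, inv_inv]
      have h1 : u n s ∈ W := subset_gen _ _ (by
        simp only [S', Set.mem_iUnion]; exact ⟨n, hn, s, hs, rfl⟩)
      have := Submodule.add_mem_sup h1 (hu' n s hs)
      rwa [add_sub_cancel] at this
    have := this hm
    rwa [mem_tr, inv_inv] at this
  have hle' : ∀ n, ∀ m ∈ L n, t ^ n • m ∈ W ⊔ V n := by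
    intro n m hm
    rcases le_total n n₀ with hn | hn
    · exact hle n hn m hm
    · have h1 := hle n₀ le_rfl m (hn₀ n hm)
      obtain ⟨j, rfl⟩ := Nat.exists_eq_add_of_le hn
      have : t ^ (n₀ + j) • m ∈ tr (t ^ j) (W ⊔ V n₀) := by
        rw [add_comm, pow_add, mul_smul, smul_mem_tr]; exact h1
      rw [tr_sup, hWinv.tr_eq (pow_mem htK j)] at this
      exact sup_le_sup_left (filt_shift_pow hBt n₀ j) _ this
  have hfin : ∀ n, U ⊓ V n ≤ W := by
    intro n
    induction n with
    | zero =>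
      rintro x ⟨_, hx⟩
      have : x ∈ (⊥ : Submodule D M) := hx
      rw [Submodule.mem_bot] at this
      rw [this]; exact zero_mem _
    | succ n ih =>
      rintro x ⟨hxU, hx⟩
      obtain ⟨v, hv, y, hy, rfl⟩ := Submodule.mem_sup.1 (show x ∈ V n ⊔ tr (t ^ n) N₀ from hx)
      have hyL : (t ^ n)⁻¹ • y ∈ L n := by
        rw [hLmem, smul_inv_smul]
        refine ⟨hy, ?_⟩
        have := Submodule.add_mem_sup hxU (neg_mem hv)
        rwa [add_neg_cancel_comm] at this
      have h1 := hle' n _ hyL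
      rw [smul_inv_smul] at h1
      obtain ⟨w, hw, v', hv', rfl⟩ := Submodule.mem_sup.1 h1
      have h2 : v + v' ∈ U ⊓ V n := by
        refine ⟨?_, add_mem hv hv'⟩
        have := sub_mem hxU (hWU hw)
        rwa [show v + (w + v') - w = v + v' by abel] at this
      have h3 := add_mem (ih h2) hw
      rwa [show v + v' + w = v + (w + v') by abel] at h3
  refine ⟨S', hS'fin, le_antisymm (fun x hx => ?_) hWU⟩
  obtain ⟨j, n, hjn⟩ := filt_exhausts ht hinvB (Submodule.mem_sup_right (hU hx))
  have : t ^ j • x ∈ W := hfin n ⟨hinv _ (pow_mem htK j) _ hx, hjn⟩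
  have := hWinv _ (inv_mem (pow_mem htK j)) _ this
  rwa [inv_smul_smul] at this

theorem noe_bot [IsNoetherianRing D] : Noe D M (⊥ : Subgroup Γ) := by
  intro S hS U hU _
  rw [gen_bot] at hU
  have : IsNoetherian D (Submodule.span D S) := isNoetherian_span_of_finite D hS
  obtain ⟨T, hT⟩ := isNoetherian_submodule.1 this U hU
  exact ⟨T, T.finite_toSet, by rw [gen_bot, hT]⟩

end Skew

end

/-! ### Generic freeness -/

section
set_option linter.unusedSectionVars false

section GF
variable {Γ D M : Type*} [Group Γ] [CommRing D] [MulSemiringAction Γ D] [AddCommGroup M]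
    [Module D M] [DistribMulAction Γ M] [SkewModule Γ D M]

variable (Γ) in
/-- A proper `Γ`-invariant ideal modulo which `l` is invertible. -/
structure Good (Q : Ideal D) (l : D) : Prop where
  inv : ∀ g : Γ, ∀ q ∈ Q, g • q ∈ Q
  ne_top : Q ≠ ⊤
  unit : ∃ u, u * l - 1 ∈ Q

theorem Good.left {Q : Ideal D} {l m : D} (h : Good Γ Q (l * m)) : Good Γ Q l :=
  ⟨h.inv, h.ne_top, by obtain ⟨u, hu⟩ := h.unit; exact ⟨u * m, by convert hu using 1; ring⟩⟩

theorem Good.right {Q : Ideal D} {l m : D} (h : Good Γ Q (l * m)) : Good Γ Q m := by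
  rw [mul_comm] at h; exact h.left

variable (Γ) in
/-- A weak form of freeness of `N / K` after inverting `l`, phrased through reductions modulo
good ideals. -/
def GF (l : D) (K N : Submodule D M) : Prop :=
  K ≤ N ∧ ∀ Q : Ideal D, Good Γ Q l → Q • N ⊓ K ≤ Q • K ∧
    (N ≤ Q • N ⊔ K → ∀ m ∈ N, ∃ s : D, s ≠ 0 ∧ s • m ∈ K)

variable {K N P : Submodule D M} {l l' : D}

theorem GF.mul_right (h : GF Γ l K N) : GF Γ (l * l') K N :=
  ⟨h.1, fun Q hQ => h.2 Q hQ.left⟩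

theorem GF.mul_left (h : GF Γ l K N) : GF Γ (l' * l) K N :=
  ⟨h.1, fun Q hQ => h.2 Q hQ.right⟩

theorem GF.refl [Nontrivial D] : GF Γ l K K :=
  ⟨le_rfl, fun _ _ => ⟨inf_le_left, fun _ m hm => ⟨1, one_ne_zero, by simpa using hm⟩⟩⟩

theorem GF.trans [NoZeroDivisors D] (h : GF Γ l K N) (h' : GF Γ l N P) : GF Γ l K P := by
  refine ⟨h.1.trans h'.1, fun Q hQ => ⟨?_, ?_⟩⟩
  · rintro x ⟨hx, hxK⟩
    exact (h.2 Q hQ).1 ⟨(h'.2 Q hQ).1 ⟨hx, h.1 hxK⟩, hxK⟩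
  · intro hP m hm
    obtain ⟨s, hs, hsm⟩ := (h'.2 Q hQ).2 (hP.trans (sup_le_sup_left h.1 _)) m hm
    have hN : N ≤ Q • N ⊔ K := by
      intro n hn
      obtain ⟨x, hx, a, ha, rfl⟩ := Submodule.mem_sup.1 (hP (h'.1 hn))
      refine Submodule.add_mem_sup ((h'.2 Q hQ).1 ⟨hx, ?_⟩) ha
      simpa using N.sub_mem hn (h.1 ha)
    obtain ⟨s', hs', hsm'⟩ := (h.2 Q hQ).2 hN _ hsm
    exact ⟨s' * s, mul_ne_zero hs' hs, by rwa [mul_smul]⟩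

theorem GF.chain [IsDomain D] {F : ℕ → Submodule D M} (h : ∀ n, GF Γ l (F n) (F (n + 1))) :
    GF Γ l (F 0) (⨆ n, F n) := by
  have hmono : Monotone F := monotone_nat_of_le_succ fun n => (h n).1
  have hall : ∀ n j, GF Γ l (F n) (F (n + j)) := by
    intro n j
    induction j with
    | zero => exact GF.refl
    | succ j ih => exact ih.trans (h (n + j))
  have hsmul : ∀ Q : Ideal D, ∀ x ∈ Q • (⨆ n, F n), ∃ n, x ∈ Q • F n := by
    intro Q x hx
    rw [Submodule.smul_iSup] at hx
    have hm : Monotone fun n => Q • F n := fun a b hab => Submodule.smul_mono le_rfl (hmono hab)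
    exact (Submodule.mem_iSup_of_directed _ hm.directed_le).1 hx
  have hone : ∀ Q : Ideal D, Good Γ Q l → ∀ n, Q • (⨆ n, F n) ⊓ F n ≤ Q • F n := by
    rintro Q hQ n x ⟨hx, hxn⟩
    obtain ⟨k, hk⟩ := hsmul Q x hx
    have hk' : x ∈ Q • F (n + k) :=
      Submodule.smul_mono le_rfl (hmono (Nat.le_add_left k n)) hk
    exact ((hall n k).2 Q hQ).1 ⟨hk', hxn⟩
  refine ⟨le_iSup F 0, fun Q hQ => ⟨hone Q hQ 0, fun hle m hm => ?_⟩⟩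
  obtain ⟨n, hn⟩ := (Submodule.mem_iSup_of_directed F hmono.directed_le).1 hm
  have h0 := hall 0 n
  rw [zero_add] at h0
  refine (h0.2 Q hQ).2 (fun y hy => ?_) m hn
  obtain ⟨x, hx, a, ha, rfl⟩ := Submodule.mem_sup.1 (hle (le_iSup F n hy))
  refine Submodule.add_mem_sup (hone Q hQ n ⟨hx, ?_⟩) ha
  simpa using (F n).sub_mem hy (hmono (Nat.zero_le n) ha)

theorem smul_tr_le {Q : Ideal D} (hQ : ∀ g : Γ, ∀ q ∈ Q, g • q ∈ Q) (g : Γ) :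
    Q • tr g N ≤ tr g (Q • N) := by
  refine Submodule.smul_le.2 fun q hq n hn => ?_
  rw [mem_tr] at hn ⊢
  rw [SkewModule.smul_smul']
  exact Submodule.smul_mem_smul (hQ _ q hq) hn

theorem smul_tr {Q : Ideal D} (hQ : ∀ g : Γ, ∀ q ∈ Q, g • q ∈ Q) (g : Γ) :
    Q • tr g N = tr g (Q • N) := by
  refine le_antisymm (smul_tr_le hQ g) ?_
  rw [tr_le_iff]
  refine le_trans ?_ (smul_tr_le hQ g⁻¹)
  rw [tr_tr, inv_mul_cancel, tr_one]

theorem GF.translate [IsDomain D] (h : GF Γ l K N) (g : Γ) : GF Γ l (tr g K) (tr g N) := by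
  refine ⟨tr_mono g h.1, fun Q hQ => ⟨?_, ?_⟩⟩
  · rw [smul_tr hQ.inv, smul_tr hQ.inv, ← tr_inf]
    exact tr_mono g (h.2 Q hQ).1
  · intro hle m hm
    rw [smul_tr hQ.inv, ← tr_sup, tr_le_iff, tr_tr, inv_mul_cancel, tr_one] at hle
    obtain ⟨s, hs, hsm⟩ := (h.2 Q hQ).2 hle _ hm
    refine ⟨g • s, fun h0 => hs ?_, ?_⟩
    · simpa using congrArg (g⁻¹ • ·) h0
    · rw [mem_tr, SkewModule.smul_smul', inv_smul_smul]; exact hsm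

theorem GF.sup [IsDomain D] (h : GF Γ l (N ⊓ K) N) : GF Γ l K (K ⊔ N) := by
  refine ⟨le_sup_left, fun Q hQ => ⟨?_, ?_⟩⟩
  · rintro x ⟨hx, hxK⟩
    rw [Submodule.smul_sup] at hx
    obtain ⟨a, ha, b, hb, rfl⟩ := Submodule.mem_sup.1 hx
    have hbK : b ∈ K := by simpa using K.sub_mem hxK (Submodule.smul_le_right ha)
    refine add_mem ha ?_
    exact Submodule.smul_mono le_rfl inf_le_right
      ((h.2 Q hQ).1 ⟨hb, Submodule.smul_le_right hb, hbK⟩)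
  · intro hle m hm
    have hN : N ≤ Q • N ⊔ N ⊓ K := by
      intro n hn
      obtain ⟨x, hx, k, hk, rfl⟩ := Submodule.mem_sup.1 (hle (Submodule.mem_sup_right hn))
      rw [Submodule.smul_sup] at hx
      obtain ⟨a, ha, b, hb, rfl⟩ := Submodule.mem_sup.1 hx
      have hak : a + k ∈ K := add_mem (Submodule.smul_le_right ha) hk
      have hak' : a + k ∈ N := by
        have := N.sub_mem hn (Submodule.smul_le_right hb)
        rwa [show a + b + k - b = a + k by abel] at this
      have := Submodule.add_mem_sup hb (show a + k ∈ N ⊓ K from ⟨hak', hak⟩)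
      rwa [show b + (a + k) = a + b + k by abel] at this
    obtain ⟨k, hk, n, hn, rfl⟩ := Submodule.mem_sup.1 hm
    obtain ⟨s, hs, hsn⟩ := (h.2 Q hQ).2 hN n hn
    exact ⟨s, hs, by rw [smul_add]; exact add_mem (K.smul_mem _ hk) hsn.2⟩

/-- Either a nonzero `d` carries `x` into `K`, and `l = d` works, or the extension is free of rank
one, and `l = 1` works. -/
theorem exists_GF_cyclic [IsDomain D] (K : Submodule D M) (x : M) :
    ∃ l : D, l ≠ 0 ∧ GF Γ l K (K ⊔ Submodule.span D {x}) := by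
  by_cases hI : ∃ d : D, d ≠ 0 ∧ d • x ∈ K
  · obtain ⟨d, hd, hdx⟩ := hI
    have hspan : ∀ y ∈ Submodule.span D {x}, d • y ∈ K := by
      intro y hy
      obtain ⟨c, rfl⟩ := Submodule.mem_span_singleton.1 hy
      rw [smul_comm]; exact K.smul_mem _ hdx
    refine ⟨d, hd, le_sup_left, fun Q hQ => ⟨?_, ?_⟩⟩
    · rintro y ⟨hy, hyK⟩
      rw [Submodule.smul_sup] at hy
      obtain ⟨a, ha, b, hb, rfl⟩ := Submodule.mem_sup.1 hy
      have hbK : b ∈ K := by simpa using K.sub_mem hyK (Submodule.smul_le_right ha)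
      refine add_mem ha ?_
      obtain ⟨u, hu⟩ := hQ.unit
      have h1 : (u * d) • b ∈ Q • K := by
        have : Q • Submodule.span D {x} ≤ (Q • K).comap (LinearMap.lsmul D M (u * d)) := by
          refine Submodule.smul_le.2 fun q hq n hn => ?_
          show (u * d) • q • n ∈ Q • K
          rw [smul_comm, mul_smul]
          exact Submodule.smul_mem_smul hq (K.smul_mem _ (hspan n hn))
        exact this hb
      have h2 := Submodule.smul_mem_smul hu hbK
      have h3 := sub_mem h1 h2
      rwa [sub_smul, one_smul, sub_sub_cancel] at h3
    · intro _ m hm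
      obtain ⟨k, hk, n, hn, rfl⟩ := Submodule.mem_sup.1 hm
      exact ⟨d, hd, by rw [smul_add]; exact add_mem (K.smul_mem _ hk) (hspan n hn)⟩
  · push Not at hI
    have hI' : ∀ d : D, d • x ∈ K → d = 0 := fun d hd => by
      by_contra h; exact hI d h hd
    have hQx : ∀ Q : Ideal D, ∀ b ∈ Q • Submodule.span D {x}, ∃ q ∈ Q, b = q • x := by
      intro Q b hb
      obtain ⟨q, hq, rfl⟩ := Submodule.mem_smul_span_singleton.1 hb
      exact ⟨q, hq, rfl⟩
    refine ⟨1, one_ne_zero, le_sup_left, fun Q hQ => ⟨?_, ?_⟩⟩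
    · rintro y ⟨hy, hyK⟩
      rw [Submodule.smul_sup] at hy
      obtain ⟨a, ha, b, hb, rfl⟩ := Submodule.mem_sup.1 hy
      have hbK : b ∈ K := by simpa using K.sub_mem hyK (Submodule.smul_le_right ha)
      obtain ⟨q, hq, rfl⟩ := hQx Q b hb
      rw [hI' q hbK, zero_smul, add_zero]; exact ha
    · intro hle m hm
      exfalso
      have hx : x ∈ K ⊔ Submodule.span D {x} :=
        Submodule.mem_sup_right (Submodule.mem_span_singleton_self x)
      obtain ⟨y, hy, k, hk, hyk⟩ := Submodule.mem_sup.1 (hle hx)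
      rw [Submodule.smul_sup] at hy
      obtain ⟨a, ha, b, hb, rfl⟩ := Submodule.mem_sup.1 hy
      obtain ⟨q, hq, rfl⟩ := hQx Q b hb
      have h1 : (1 - q) • x ∈ K := by
        have := add_mem (Submodule.smul_le_right ha) hk
        rwa [show a + k = (1 - q) • x by
          rw [sub_smul, one_smul, eq_sub_iff_add_eq]; exact Eq.trans (by abel) hyk] at this
      have h2 := sub_eq_zero.1 (hI' _ h1)
      exact hQ.ne_top ((Ideal.eq_top_iff_one Q).2 (h2 ▸ hq))

/-- Generic freeness for all finitely generated extensions of `K`-modules. -/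
def GFree (D M : Type*) [CommRing D] [MulSemiringAction Γ D] [AddCommGroup M]
    [Module D M] [DistribMulAction Γ M] [SkewModule Γ D M] (K : Subgroup Γ) : Prop :=
  ∀ S : Set M, S.Finite → ∀ B : Submodule D M, Inv K B →
    ∃ l : D, l ≠ 0 ∧ GF Γ l B (B ⊔ gen D K S)

theorem gfree_bot [IsDomain D] : GFree D M (⊥ : Subgroup Γ) := by
  intro S hS B _
  rw [gen_bot]
  induction S, hS using Set.Finite.induction_on with
  | empty => exact ⟨1, one_ne_zero, by simpa using GF.refl⟩
  | insert _ _ ih =>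
    rename_i a S _ _
    obtain ⟨l, hl, h⟩ := ih
    obtain ⟨l', hl', h'⟩ := exists_GF_cyclic (Γ := Γ) (B ⊔ Submodule.span D S) a
    refine ⟨l * l', mul_ne_zero hl hl', ?_⟩
    rw [Submodule.span_insert, sup_comm (Submodule.span D {a}), ← sup_assoc]
    exact h.mul_right.trans h'.mul_left

/-- Generic freeness passes from `K` to `⟨K, t⟩`. The module is exhausted by the translates under
powers of `t` of a filtration with finitely generated layers, and by Noetherianity only finitely many
of these layers differ up to translation. -/
theorem gfree_step [IsDomain D] {K : Subgroup Γ} {t : Γ}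
    (ht : ∀ k ∈ K, t * k * t⁻¹ ∈ K ∧ t⁻¹ * k * t ∈ K)
    (hnoe : Noe D M K) (h : GFree D M K) : GFree D M (K ⊔ Subgroup.zpowers t) := by
  intro S hS B hB
  have htK : t ∈ K ⊔ Subgroup.zpowers t :=
    (le_sup_right : _ ≤ K ⊔ Subgroup.zpowers t) (Subgroup.mem_zpowers t)
  have hBt := hB.tr_eq htK
  set N₀ := gen D K S with hN₀
  have hN₀inv : Inv K N₀ := inv_gen K S
  set V := filt t B N₀ with hV
  have hVinv : ∀ n, Inv K (V n) := inv_filt ht (hB.mono le_sup_left) hN₀inv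
  -- the part from `B` to `N₊`, the union of the filtration
  let X : ℕ → Submodule D M := fun n => N₀ ⊓ tr (t ^ n)⁻¹ (V n)
  have hXinv : ∀ n, Inv K (X n) := fun n => hN₀inv.inf ((hVinv n).tr fun k hk => by
    rw [inv_inv]; exact (pow_normalizes ht n k hk).1)
  have hXmono : Monotone X := by
    refine monotone_nat_of_le_succ fun n => inf_le_inf_left _ ?_
    rw [tr_le_iff, tr_tr, inv_inv, pow_succ', mul_inv_rev, ← mul_assoc, mul_inv_cancel, one_mul,
      ← tr_le_iff]
    exact filt_shift hBt n
  obtain ⟨n₀, hn₀⟩ := hnoe.stabilizes hS hXmono (fun n => inf_le_left) hXinv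
  choose c hc hcGF using fun n => h S hS (X n) (hXinv n)
  have hXN : ∀ n, X n ⊔ gen D K S = N₀ := fun n => sup_eq_right.2 inf_le_left
  set a := ∏ n ∈ Finset.range (n₀ + 1), c n with ha
  have ha0 : a ≠ 0 := Finset.prod_ne_zero_iff.2 fun n _ => hc n
  have h1 : ∀ n ≤ n₀, GF Γ a (X n) N₀ := by
    intro n hn
    have := hcGF n
    rw [hXN] at this
    rw [ha, ← Finset.mul_prod_erase _ _ (Finset.mem_range.2 (Nat.lt_succ_of_le hn))]
    exact this.mul_right
  have h2 : ∀ n, GF Γ a (X n) N₀ := by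
    intro n
    rcases le_total n n₀ with hn | hn
    · exact h1 n hn
    · rw [le_antisymm (hn₀ n) (hXmono hn)]; exact h1 n₀ le_rfl
  have h3 : ∀ n, GF Γ a (V n) (V (n + 1)) := by
    intro n
    have := (h2 n).sup.translate (t ^ n)
    rwa [tr_sup, tr_tr, mul_inv_cancel, tr_one] at this
  have h4 : GF Γ a B (⨆ n, V n) := GF.chain h3
  set Np := ⨆ n, V n with hNp
  -- the part from `N₊` to `⋃ t⁻ʲ N₊`
  have hNpinv : Inv K Np := inv_iSup hVinv
  have htNp : tr t Np ≤ Np := by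
    rw [tr_le_iff]
    refine iSup_le fun n => ?_
    rw [← tr_le_iff]
    exact (filt_shift hBt n).trans (le_iSup V (n + 1))
  obtain ⟨b, hb, hbGF⟩ := h S hS (N₀ ⊓ tr t Np)
    (hN₀inv.inf (hNpinv.tr fun k hk => (ht k hk).2))
  have hN₀Np : N₀ ≤ Np := by
    refine le_trans ?_ (le_iSup V 1)
    have : V 1 = B ⊔ tr (t ^ 0) N₀ := rfl
    rw [this, pow_zero, tr_one]
    exact le_sup_right
  have h5 : tr t Np ⊔ N₀ = Np := by
    refine le_antisymm (sup_le htNp hN₀Np) (iSup_le fun n => ?_)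
    induction n with
    | zero =>
      refine le_sup_of_le_left ?_
      have : V 0 = tr t (V 0) := hBt.symm
      rw [this]
      exact tr_mono t (le_iSup V 0)
    | succ n ih =>
      refine sup_le ih ?_
      cases n with
      | zero => rw [pow_zero, tr_one]; exact le_sup_right
      | succ n =>
        refine le_sup_of_le_left ?_
        rw [pow_succ', ← tr_tr]
        exact tr_mono t ((le_sup_right : _ ≤ V n ⊔ tr (t ^ n) N₀).trans (le_iSup V (n + 1)))
  have h6 : GF Γ b (tr t Np) Np := by
    rw [show N₀ ⊓ tr t Np ⊔ gen D K S = N₀ from sup_eq_right.2 inf_le_left] at hbGF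
    have := hbGF.sup
    rwa [h5] at this
  have h7 : ∀ j : ℕ, GF Γ b (tr (t ^ j)⁻¹ Np) (tr (t ^ (j + 1))⁻¹ Np) := by
    intro j
    have := h6.translate (t ^ (j + 1))⁻¹
    rwa [tr_tr, pow_succ', mul_inv_rev, mul_assoc, inv_mul_cancel, mul_one, ← mul_inv_rev,
      ← pow_succ'] at this
  have h8 := GF.chain h7
  rw [pow_zero, inv_one, tr_one] at h8
  have h9 : (⨆ j : ℕ, tr (t ^ j)⁻¹ Np) = B ⊔ gen D (K ⊔ Subgroup.zpowers t) S := by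
    apply le_antisymm
    · refine iSup_le fun j => ?_
      have hinv' : Inv (K ⊔ Subgroup.zpowers t) (B ⊔ gen D (K ⊔ Subgroup.zpowers t) S) :=
        hB.sup (inv_gen _ _)
      rw [tr_le_iff, hinv'.tr_eq (inv_mem (inv_mem (pow_mem htK j)))]
      refine iSup_le fun n => ?_
      induction n with
      | zero => exact le_sup_left
      | succ n ih =>
        refine sup_le ih ?_
        rw [tr_le_iff, hinv'.tr_eq (inv_mem (pow_mem htK n))]
        exact le_sup_of_le_right (gen_le ((inv_gen _ _).mono le_sup_left)
          fun s hs => subset_gen _ _ hs)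
    · intro m hm
      obtain ⟨j, n, hjn⟩ := filt_exhausts ht hB hm
      refine Submodule.mem_iSup_of_mem j ?_
      rw [mem_tr, inv_inv]
      exact Submodule.mem_iSup_of_mem n hjn
  rw [h9] at h8
  exact ⟨a * b, mul_ne_zero ha0 hb, h4.mul_right.trans h8.mul_left⟩

/-- Hall: finitely generated modules over polycyclic groups are Noetherian and generically free, by
induction along a polycyclic series. -/
theorem noe_gfree [IsDomain D] [IsNoetherianRing D] (hΓ : IsPC Γ) :
    Noe D M (⊤ : Subgroup Γ) ∧ GFree D M (⊤ : Subgroup Γ) :=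
  hΓ.induct (fun K => Noe D M K ∧ GFree D M K) ⟨noe_bot, gfree_bot⟩
    fun _ _ ht h => ⟨noe_step ht h.1, gfree_step ht h.1 h.2⟩

/-- For a module generated by a finite set there is `l ≠ 0` such that `M` is torsion as soon as
`Q M = M` for some good ideal `Q` modulo which `l` is invertible. -/
theorem exists_torsion_or [IsDomain D] [IsNoetherianRing D] (hΓ : IsPC Γ) (S : Set M)
    (hS : S.Finite) (htop : gen D (⊤ : Subgroup Γ) S = ⊤) :
    ∃ l : D, l ≠ 0 ∧ ∀ Q : Ideal D, Good Γ Q l → Q • (⊤ : Submodule D M) = ⊤ →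
      ∀ m : M, ∃ s : D, s ≠ 0 ∧ s • m = 0 := by
  obtain ⟨l, hl, h⟩ := (noe_gfree (D := D) (M := M) hΓ).2 S hS ⊥ (by
    intro g _ m hm
    rw [Submodule.mem_bot] at hm ⊢
    rw [hm, smul_zero])
  rw [htop, bot_sup_eq] at h
  refine ⟨l, hl, fun Q hQ hQtop m => ?_⟩
  obtain ⟨s, hs, h'⟩ := (h.2 Q hQ).2 (by rw [hQtop]; exact le_sup_left) m trivial
  exact ⟨s, hs, by simpa using h'⟩

end GF

end

/-! ### Common eigenvectors -/

section
section Eigen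
universe u
variable {Γ : Type*} [Group Γ]

theorem finite_sup_zpowers {K : Subgroup Γ} {t : Γ} (ht : ∀ k ∈ K, t * k * t⁻¹ ∈ K ∧ t⁻¹ * k * t ∈ K)
    (hK : Finite K) (hfin : IsOfFinOrder t) : Finite (K ⊔ Subgroup.zpowers t : Subgroup Γ) := by
  have hf : (K : Set Γ).Finite := hK
  have hz : (Subgroup.zpowers t : Set Γ).Finite := finite_zpowers.2 hfin
  have h := (cycExt_zpowers ht).2.1
  refine ((hf.image2 (fun a b => b * a) hz).subset ?_ : ((K ⊔ Subgroup.zpowers t : Subgroup Γ) : Set Γ).Finite)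
  intro x hx
  rw [SetLike.mem_coe, sup_comm, mem_sup_of_normalizes] at hx
  · obtain ⟨l, hl, d, hd, rfl⟩ := hx
    exact ⟨d, hd, l, hl, rfl⟩
  · intro l hl d hd
    exact h l (Subgroup.mem_sup_right hl) d hd

/-- A torsion polycyclic group is finite. -/
theorem IsPC.finite_of_torsion (h : IsPC Γ) (ht : ∀ g : Γ, IsOfFinOrder g) : Finite Γ := by
  have := h.induct (fun K => Finite K) (by infer_instance)
    (fun K t hn hK => finite_sup_zpowers hn hK (ht t))
  exact Finite.of_equiv _ (Subgroup.topEquiv (G := Γ)).toEquiv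

/-- A finite-index subgroup `K'` of `K` contains a subgroup of finite index generated by all `m`-th
powers of `K`, which is thus normalized by everything that normalizes `K`. -/
theorem exists_pow_closure (h : IsPC Γ) {K' K : Subgroup Γ} (hi : K'.relIndex K ≠ 0) :
    ∃ m : ℕ, Subgroup.closure {x | ∃ k ∈ K, x = k ^ m} ≤ K' ∧
      Subgroup.closure {x | ∃ k ∈ K, x = k ^ m} ≤ K ∧
      (Subgroup.closure {x | ∃ k ∈ K, x = k ^ m}).relIndex K ≠ 0 := by
  have hm0 : (K'.relIndex K).factorial ≠ 0 := Nat.factorial_ne_zero _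
  refine ⟨(K'.relIndex K).factorial, ?_, ?_, ?_⟩
  · rw [Subgroup.closure_le]
    rintro x ⟨k, hk, rfl⟩
    obtain ⟨n, hn, hn', hmem⟩ := Subgroup.exists_pow_mem_of_index_ne_zero (H := K'.subgroupOf K) hi ⟨k, hk⟩
    have : k ^ n ∈ K' := hmem
    obtain ⟨c, hc⟩ := Nat.dvd_factorial hn hn'
    have h2 := pow_mem this c
    rwa [← pow_mul, ← hc] at h2
  · rw [Subgroup.closure_le]
    rintro x ⟨k, hk, rfl⟩
    exact pow_mem hk _
  · set m := (K'.relIndex K).factorial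
    set E := Subgroup.closure {x | ∃ k ∈ K, x = k ^ m} with hE
    have hN : (E.subgroupOf K).Normal := by
      refine ⟨fun n hn g => ?_⟩
      rw [Subgroup.mem_subgroupOf] at hn ⊢
      have : E ≤ E.comap (MulAut.conj (g : Γ)).toMonoidHom := by
        rw [hE, Subgroup.closure_le]
        rintro x ⟨k, hk, rfl⟩
        refine Subgroup.subset_closure ⟨g * k * g⁻¹, K.mul_mem (K.mul_mem g.2 hk) (K.inv_mem g.2), ?_⟩
        simp [conj_pow]
      simpa using this hn
    have hPC : IsPC (K ⧸ E.subgroupOf K) :=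
      (h.subgroup K).of_surjective (QuotientGroup.mk' _) (QuotientGroup.mk'_surjective _)
    have : Finite (K ⧸ E.subgroupOf K) := by
      refine hPC.finite_of_torsion fun g => ?_
      obtain ⟨g, rfl⟩ := QuotientGroup.mk_surjective g
      rw [isOfFinOrder_iff_pow_eq_one]
      refine ⟨m, Nat.pos_of_ne_zero hm0, ?_⟩
      rw [← QuotientGroup.mk_pow, QuotientGroup.eq_one_iff, Subgroup.mem_subgroupOf]
      exact Subgroup.subset_closure ⟨g, g.2, by simp⟩
    exact (Subgroup.finiteIndex_of_finite_quotient (H := E.subgroupOf K)).index_ne_zero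

variable {k V : Type*} [Field k] [AddCommGroup V] [Module k V]

theorem scalar_mul {ρ : Γ →* Module.End k V} {u : V} {g h : Γ} {c d : k}
    (hg : ρ g u = c • u) (hh : ρ h u = d • u) : ρ (g * h) u = (d * c) • u := by
  rw [map_mul, Module.End.mul_apply, hh, map_smul, hg, smul_smul]

theorem scalar_ne {ρ : Γ →* Module.End k V} {u : V} (hu : u ≠ 0) {g : Γ} {c : k}
    (hg : ρ g u = c • u) : c ≠ 0 := by
  rintro rfl
  apply hu
  have : ρ (g⁻¹ * g) u = u := by simp
  rw [map_mul, Module.End.mul_apply, hg] at this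
  simpa using this.symm

theorem scalar_inv {ρ : Γ →* Module.End k V} {u : V} (hu : u ≠ 0) {g : Γ} {c : k}
    (hg : ρ g u = c • u) : ρ g⁻¹ u = c⁻¹ • u := by
  have h0 := scalar_ne hu hg
  have : ρ (g⁻¹ * g) u = u := by simp
  rw [map_mul, Module.End.mul_apply, hg, map_smul] at this
  nth_rw 2 [← this]
  rw [smul_smul, inv_mul_cancel₀ h0, one_smul]

/-- Among the vectors `t ^ i v` two have the same eigenvalues under a finite-index subgroup `E` of `K`;
if these are `i < j`, then `t ^ (j - i)` preserves the joint eigenspace and has an eigenvector there. -/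
theorem eigen_step [IsAlgClosed k] [FiniteDimensional k V] (hΓ : IsPC Γ)
    (ρ : Γ →* Module.End k V) {K : Subgroup Γ} {t : Γ}
    (ht : ∀ k ∈ K, t * k * t⁻¹ ∈ K ∧ t⁻¹ * k * t ∈ K)
    (h : ∃ K' ≤ K, K'.relIndex K ≠ 0 ∧ ∃ v : V, v ≠ 0 ∧ ∀ g ∈ K', ∃ c : k, ρ g v = c • v) :
    ∃ K' ≤ K ⊔ Subgroup.zpowers t, K'.relIndex (K ⊔ Subgroup.zpowers t) ≠ 0 ∧
      ∃ v : V, v ≠ 0 ∧ ∀ g ∈ K', ∃ c : k, ρ g v = c • v := by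
  classical
  obtain ⟨K', hK', hi, v, hv, hsc⟩ := h
  obtain ⟨m, hE1, hE2, hE3⟩ := exists_pow_closure hΓ hi
  set E := Subgroup.closure {x | ∃ k ∈ K, x = k ^ m} with hE
  have hconj : ∀ z ∈ Subgroup.zpowers t, ∀ e ∈ E, z * e * z⁻¹ ∈ E := by
    intro z hz e he
    have : E ≤ E.comap (MulAut.conj (z : Γ)).toMonoidHom := by
      rw [hE, Subgroup.closure_le]
      rintro x ⟨k, hk, rfl⟩
      refine Subgroup.subset_closure ⟨z * k * z⁻¹,
        (cycExt_zpowers ht).2.1 z (Subgroup.mem_sup_right hz) k hk, ?_⟩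
      simp [conj_pow]
    simpa using this he
  have hconj' : ∀ n : ℕ, ∀ e ∈ E, (t ^ n)⁻¹ * e * t ^ n ∈ E := by
    intro n e he
    simpa using hconj (t ^ n)⁻¹ (inv_mem (Subgroup.npow_mem_zpowers t n)) e he
  have hne : ∀ g : Γ, ∀ u : V, u ≠ 0 → ρ g u ≠ 0 := by
    intro g u hu h0
    apply hu
    have : ρ (g⁻¹ * g) u = u := by simp
    rw [map_mul, Module.End.mul_apply, h0] at this
    simpa using this.symm
  have htr : ∀ n : ℕ, ∀ e : Γ, ∀ u : V, ∀ c : k, ρ ((t ^ n)⁻¹ * e * t ^ n) u = c • u ↔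
      ρ e (ρ (t ^ n) u) = c • ρ (t ^ n) u := by
    intro n e u c
    constructor
    · intro h
      rw [← map_smul, ← h, ← Module.End.mul_apply, ← Module.End.mul_apply, ← map_mul, ← map_mul]
      congr 2; group
    · intro h
      rw [mul_assoc, map_mul, Module.End.mul_apply, map_mul, Module.End.mul_apply, h, map_smul,
        ← Module.End.mul_apply, ← map_mul]
      simp
  -- every `t ^ n v` is an eigenvector of `E`
  have hw : ∀ n : ℕ, ∀ e ∈ E, ∃ c : k, ρ e (ρ (t ^ n) v) = c • ρ (t ^ n) v := by
    intro n e he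
    obtain ⟨c, hc⟩ := hsc _ (hE1 (hconj' n e he))
    exact ⟨c, (htr n e v c).1 hc⟩
  obtain ⟨S, hS⟩ := hΓ.2 E
  have hSE : ∀ s ∈ S, s ∈ E := fun s hs => hS ▸ Subgroup.subset_closure hs
  have hev : ∀ n : ℕ, ∀ s : S, ∃ μ : Module.End.Eigenvalues (ρ (s : Γ)),
      ρ (s : Γ) (ρ (t ^ n) v) = (μ : k) • ρ (t ^ n) v := by
    intro n s
    obtain ⟨c, hc⟩ := hw n s (hSE s s.2)
    refine ⟨⟨c, ?_⟩, hc⟩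
    exact Module.End.hasEigenvalue_of_hasEigenvector (x := ρ (t ^ n) v)
      ⟨Module.End.mem_eigenspace_iff.2 hc, hne _ _ hv⟩
  choose μ hμ using hev
  -- only finitely many systems of eigenvalues of the generators of `E` are possible
  obtain ⟨i, j, hij, hμij⟩ : ∃ i j : ℕ, i < j ∧ μ i = μ j := by
    obtain ⟨i, j, hij, h⟩ := Finite.exists_ne_map_eq_of_infinite μ
    rcases lt_or_gt_of_ne hij with h' | h'
    · exact ⟨i, j, h', h⟩
    · exact ⟨j, i, h', h.symm⟩
  obtain ⟨n, hn, rfl⟩ : ∃ n, n ≠ 0 ∧ j = n + i := ⟨j - i, by omega, by omega⟩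
  set v' := ρ (t ^ i) v with hv'
  have hv'0 : v' ≠ 0 := hne _ _ hv
  have hw' : ρ (t ^ (n + i)) v = ρ (t ^ n) v' := by
    rw [hv', ← Module.End.mul_apply, ← map_mul, pow_add]
  set w' := ρ (t ^ n) v' with hw'd
  have hw'0 : w' ≠ 0 := hne _ _ hv'0
  have hpred : ∀ g ∈ E, ∃ c : k, ρ g v' = c • v' ∧ ρ g w' = c • w' := by
    intro g hg
    rw [← hS] at hg
    induction hg using Subgroup.closure_induction with
    | mem s hs =>
      refine ⟨(μ i ⟨s, hs⟩ : k), hμ i ⟨s, hs⟩, ?_⟩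
      rw [hμij, ← hw']
      exact hμ (n + i) ⟨s, hs⟩
    | one => exact ⟨1, by simp, by simp⟩
    | mul x y _ _ hx hy =>
      obtain ⟨c, h1, h2⟩ := hx
      obtain ⟨d, h3, h4⟩ := hy
      exact ⟨_, scalar_mul h1 h3, scalar_mul h2 h4⟩
    | inv x _ hx =>
      obtain ⟨c, h1, h2⟩ := hx
      exact ⟨_, scalar_inv hv'0 h1, scalar_inv hw'0 h2⟩
  let U : Submodule k V :=
    { carrier := {u | ∀ g ∈ E, ∀ c : k, ρ g v' = c • v' → ρ g u = c • u}
      zero_mem' := by intro g _ c _; simp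
      add_mem' := by
        intro a b ha hb g hg c hc
        rw [map_add, ha g hg c hc, hb g hg c hc, smul_add]
      smul_mem' := by
        intro d a ha g hg c hc
        rw [map_smul, ha g hg c hc, smul_comm] }
  have hUmem : ∀ u, u ∈ U ↔ ∀ g ∈ E, ∀ c : k, ρ g v' = c • v' → ρ g u = c • u := fun u => Iff.rfl
  have hv'U : v' ∈ U := fun g _ c hc => hc
  have hUt : ∀ u ∈ U, ρ (t ^ n) u ∈ U := by
    intro u hu g hg c hc
    rw [← htr]
    refine hu _ (hconj' n g hg) c ?_
    rw [htr]
    obtain ⟨c', h1, h2⟩ := hpred g hg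
    have : c = c' := by
      rw [h1] at hc
      exact (smul_left_injective k hv'0 hc).symm
    rw [this]; exact h2
  have : Nontrivial U := ⟨⟨⟨v', hv'U⟩, 0, fun h => hv'0 (congrArg Subtype.val h)⟩⟩
  obtain ⟨c, hc⟩ := Module.End.exists_eigenvalue ((ρ (t ^ n)).restrict hUt)
  obtain ⟨u, hu⟩ := hc.exists_hasEigenvector
  have hu0 : (u : V) ≠ 0 := fun h => hu.2 (Subtype.ext h)
  have hut : ρ (t ^ n) (u : V) = c • (u : V) := by
    have := congrArg Subtype.val hu.apply_eq_smul
    simpa using this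
  have hn0 : (n : ℤ) ≠ 0 := by exact_mod_cast hn
  refine ⟨E ⊔ Subgroup.zpowers (t ^ n), sup_le_sup hE2 ?_, ?_, u, hu0, ?_⟩
  · rw [Subgroup.zpowers_le]; exact Subgroup.npow_mem_zpowers t n
  · obtain ⟨F, hF, hF'⟩ := exists_cover_of_relIndex_ne_zero hE3
    refine relIndex_ne_zero_of_cover (Set.image2 (fun f r => f * t ^ r) F (Set.Iio n))
      (hF.image2 _ (Set.finite_Iio n)) ?_
    intro x hx
    have hx' := inv_mem hx
    rw [sup_comm, mem_sup_of_normalizes (fun l hl d hd =>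
      (cycExt_zpowers ht).2.1 l (Subgroup.mem_sup_right hl) d hd)] at hx'
    obtain ⟨l, hl, d, hd, hxld⟩ := hx'
    obtain ⟨a, ha⟩ := Subgroup.mem_zpowers_iff.1 (inv_mem hl)
    obtain ⟨f, hf, hfd⟩ := hF' d⁻¹ (inv_mem hd)
    refine ⟨f * t ^ (a % n).toNat, ⟨f, hf, _, ?_, rfl⟩, ?_⟩
    · have h1 := Int.emod_nonneg a hn0
      have h2 := Int.emod_lt_of_pos a (b := n) (by omega)
      simp only [Set.mem_Iio]; omega
    · have hxx : x = d⁻¹ * t ^ a := by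
        rw [ha, ← inv_inv x, hxld]; group
      have hta : t ^ a = t ^ (a % n).toNat * (t ^ n) ^ (a / n) := by
        rw [← zpow_natCast, ← zpow_natCast, ← zpow_mul, ← zpow_add,
          Int.toNat_of_nonneg (Int.emod_nonneg a hn0), Int.emod_add_mul_ediv]
      have : (f * t ^ (a % n).toNat)⁻¹ * x =
          ((t ^ (a % n).toNat)⁻¹ * (f⁻¹ * d⁻¹) * t ^ (a % n).toNat) * (t ^ n) ^ (a / n) := by
        rw [hxx, hta]; group
      rw [this]
      exact mul_mem (Subgroup.mem_sup_left (hconj' _ _ hfd))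
        (Subgroup.mem_sup_right (Subgroup.zpow_mem_zpowers _ _))
  · intro g hg
    rw [← Subgroup.closure_eq E, Subgroup.zpowers_eq_closure, ← Subgroup.closure_union] at hg
    induction hg using Subgroup.closure_induction with
    | mem s hs =>
      rcases hs with hs | hs
      · obtain ⟨c, h1, _⟩ := hpred s hs
        exact ⟨c, u.2 s hs c h1⟩
      · rw [Set.mem_singleton_iff.1 hs]
        exact ⟨c, hut⟩
    | one => exact ⟨1, by simp⟩
    | mul x y _ _ hx hy =>
      obtain ⟨c, h1⟩ := hx
      obtain ⟨d, h3⟩ := hy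
      exact ⟨_, scalar_mul h1 h3⟩
    | inv x _ hx =>
      obtain ⟨c, h1⟩ := hx
      exact ⟨_, scalar_inv hu0 h1⟩

/-- Mal'cev: a representation of a polycyclic group has a common eigenvector for a subgroup of
finite index. -/
theorem IsPC.exists_eigenvector [IsAlgClosed k] [FiniteDimensional k V] [Nontrivial V]
    (hΓ : IsPC Γ) (ρ : Γ →* Module.End k V) :
    ∃ K : Subgroup Γ, K.index ≠ 0 ∧ ∃ v : V, v ≠ 0 ∧ ∀ g ∈ K, ∃ c : k, ρ g v = c • v := by
  obtain ⟨v, hv⟩ := exists_ne (0 : V)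
  obtain ⟨K, _, hi, h⟩ := hΓ.induct (fun K => ∃ K' ≤ K, K'.relIndex K ≠ 0 ∧ ∃ v : V, v ≠ 0 ∧
    ∀ g ∈ K', ∃ c : k, ρ g v = c • v)
    ⟨⊥, le_rfl, by simp, v, hv, fun g hg => ⟨1, by rw [Subgroup.mem_bot.1 hg]; simp⟩⟩
    (fun K t ht h => eigen_step hΓ ρ ht h)
  exact ⟨K, by rwa [Subgroup.relIndex_top_right] at hi, h⟩
end Eigen

end

/-! ### `l`-adic characters of a plinth -/

section
section Padic
open Polynomial

/-- Infinitely many primes divide values of a nonconstant integral polynomial: there is one that does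
not divide `N`. -/
theorem exists_prime_root (f : ℤ[X]) (hf : f.natDegree ≠ 0) (N : ℤ) (hN : N ≠ 0) :
    ∃ l : ℕ, l.Prime ∧ ¬ (l : ℤ) ∣ N ∧ ∃ x : ℤ, (l : ℤ) ∣ f.eval x := by
  set c := f.coeff 0 with hc
  have hev : ∀ x, f.eval x = f.divX.eval x * x + c := by
    intro x
    conv_lhs => rw [← divX_mul_X_add f]
    simp [hc]
  by_cases h0 : c = 0
  · obtain ⟨l, hl, hp⟩ := Nat.exists_infinite_primes (N.natAbs + 1)
    refine ⟨l, hp, fun h => ?_, 0, by rw [hev]; simp [h0]⟩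
    have := Nat.le_of_dvd (Int.natAbs_pos.2 hN) (Int.natCast_dvd.1 h)
    omega
  · obtain ⟨y, hy⟩ : ∃ y : ℤ, (f.divX.eval (c * N * y) * (N * y) + 1).natAbs ≠ 1 := by
      by_contra hcon
      push Not at hcon
      have hroot : ∀ y : ℤ, ((f - C c) * (f + C c)).IsRoot (c * N * y) := by
        intro y
        have := hcon y
        rw [Int.natAbs_eq_iff] at this
        rw [IsRoot.def, eval_mul, eval_sub, eval_add, eval_C, hev]
        rcases this with h | h
        · have : f.divX.eval (c * N * y) * (N * y) = 0 := by push_cast at h; linarith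
          linear_combination (c * (f.divX.eval (c * N * y) * (N * y) + 2 )) * c * this
        · have : f.divX.eval (c * N * y) * (N * y) = -2 := by push_cast at h; linarith
          linear_combination (c * (f.divX.eval (c * N * y) * (N * y))) * c * this
      have hinf : Set.Infinite {x : ℤ | ((f - C c) * (f + C c)).IsRoot x} := by
        refine (Set.infinite_range_of_injective (f := fun y : ℤ => c * N * y) ?_).mono ?_
        · intro a b hab
          exact mul_left_cancel₀ (mul_ne_zero h0 hN) hab
        · rintro _ ⟨y, rfl⟩; exact hroot y
      have := eq_zero_of_infinite_isRoot _ hinf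
      rcases mul_eq_zero.1 this with h | h
      · rw [sub_eq_zero] at h
        rw [h] at hf; simp at hf
      · have h : f = C (-c) := by rw [C_neg]; exact eq_neg_of_add_eq_zero_left h
        rw [h] at hf; exact hf (natDegree_C _)
    set w := f.divX.eval (c * N * y) * (N * y) + 1 with hw
    refine ⟨w.natAbs.minFac, Nat.minFac_prime hy, fun h => ?_, c * N * y, ?_⟩
    · have h1 : (w.natAbs.minFac : ℤ) ∣ w := Int.natCast_dvd.2 (Nat.minFac_dvd _)
      have h2 : (w.natAbs.minFac : ℤ) ∣ 1 := by
        have : (1 : ℤ) = w - f.divX.eval (c * N * y) * (N * y) := by rw [hw]; ring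
        rw [this]
        exact dvd_sub h1 (Dvd.dvd.mul_left (Dvd.dvd.mul_right h _) _)
      have := Int.natCast_dvd.1 h2
      exact hy (Nat.minFac_eq_one_iff.1 (Nat.dvd_one.1 this))
    · have : f.eval (c * N * y) = c * w := by rw [hev, hw]; ring
      rw [this]
      exact Dvd.dvd.mul_left (Int.natCast_dvd.2 (Nat.minFac_dvd _)) _

/-- A separable nonconstant integer polynomial has an `l`-adic integer root for some prime `l`
different from a prescribed one. -/
theorem exists_padic_root (f : ℤ[X]) (hf : f.natDegree ≠ 0)
    (hs : (f.map (algebraMap ℤ ℚ)).Separable) (p : ℕ) (hp : p ≠ 0) :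
    ∃ (l : ℕ) (_ : Fact l.Prime), ¬ l ∣ p ∧ ∃ z : ℤ_[l], aeval z f = 0 := by
  obtain ⟨u, v, huv⟩ := hs
  obtain ⟨b, hb, hbu⟩ := IsLocalization.integerNormalization_spec (nonZeroDivisors ℤ) u
  obtain ⟨d, hd, hdv⟩ := IsLocalization.integerNormalization_spec (nonZeroDivisors ℤ) v
  set u' := IsLocalization.integerNormalization (nonZeroDivisors ℤ) u
  set v' := IsLocalization.integerNormalization (nonZeroDivisors ℤ) v
  have hb0 := nonZeroDivisors.ne_zero hb
  have hd0 := nonZeroDivisors.ne_zero hd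
  have key : C d * u' * f + C b * v' * derivative f = C (b * d) := by
    apply map_injective (algebraMap ℤ ℚ) (algebraMap ℤ ℚ).injective_int
    rw [Polynomial.map_add, Polynomial.map_mul, Polynomial.map_mul, Polynomial.map_mul,
      Polynomial.map_mul, map_C, map_C, map_C, hbu, hdv, ← derivative_map, map_mul, C_mul]
    have e1 : (b • u : ℚ[X]) = C (algebraMap ℤ ℚ b) * u := by
      rw [← smul_eq_C_mul, algebraMap_smul]
    have e2 : (d • v : ℚ[X]) = C (algebraMap ℤ ℚ d) * v := by
      rw [← smul_eq_C_mul, algebraMap_smul]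
    rw [e1, e2]
    linear_combination (C (algebraMap ℤ ℚ b) * C (algebraMap ℤ ℚ d)) * huv
  obtain ⟨l, hl, hlN, x, hx⟩ := exists_prime_root f hf (b * d * p)
    (mul_ne_zero (mul_ne_zero hb0 hd0) (by exact_mod_cast hp))
  have : Fact l.Prime := ⟨hl⟩
  refine ⟨l, this, fun h => hlN (Dvd.dvd.mul_left (by exact_mod_cast h) _), ?_⟩
  have hae : ∀ g : ℤ[X], aeval (x : ℤ_[l]) g = ((g.eval x : ℤ) : ℤ_[l]) := by
    intro g
    have := aeval_algebraMap_apply ℤ_[l] x g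
    simpa using this
  have h1 : ‖aeval (x : ℤ_[l]) f‖ < 1 := by
    rw [hae, PadicInt.norm_int_lt_one_iff_dvd]; exact hx
  have h2 : ‖aeval (x : ℤ_[l]) (derivative f)‖ = 1 := by
    refine le_antisymm (PadicInt.norm_le_one _) (not_lt.1 fun hlt => ?_)
    rw [hae, PadicInt.norm_int_lt_one_iff_dvd] at hlt
    apply hlN
    refine Dvd.dvd.mul_right ?_ _
    have := congrArg (eval x) key
    rw [eval_C, eval_add, eval_mul, eval_mul (q := derivative f)] at this
    rw [← this]
    exact dvd_add (Dvd.dvd.mul_left hx _) (Dvd.dvd.mul_left hlt _)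
  obtain ⟨z, hz, _⟩ := hensels_lemma (F := f) (a := (x : ℤ_[l])) (by rw [h2]; simpa using h1)
  exact ⟨z, hz⟩

/-- A number field embeds in `ℚ_l` for some `l` not dividing `p`. -/
theorem exists_padic_embedding (L : Type*) [Field L] [Algebra ℚ L] [FiniteDimensional ℚ L]
    (p : ℕ) (hp : p ≠ 0) :
    ∃ (l : ℕ) (_ : Fact l.Prime), ¬ l ∣ p ∧ Nonempty (L →+* ℚ_[l]) := by
  let pb := Field.powerBasisOfFiniteOfSeparable ℚ L
  have hInt : IsIntegral ℚ pb.gen := IsIntegral.of_finite ℚ _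
  obtain ⟨b, hb, hbu⟩ := IsLocalization.integerNormalization_spec (nonZeroDivisors ℤ)
    (minpoly ℚ pb.gen)
  have hb0 := nonZeroDivisors.ne_zero hb
  set f := IsLocalization.integerNormalization (nonZeroDivisors ℤ) (minpoly ℚ pb.gen)
  have e1 : (b • minpoly ℚ pb.gen : ℚ[X]) = C (algebraMap ℤ ℚ b) * minpoly ℚ pb.gen := by
    rw [← smul_eq_C_mul, algebraMap_smul]
  rw [e1] at hbu
  have hb0' : (algebraMap ℤ ℚ b) ≠ 0 := by simpa using hb0
  have hsep : (f.map (algebraMap ℤ ℚ)).Separable := by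
    rw [hbu]
    exact (minpoly.irreducible hInt).separable.unit_mul (by rw [isUnit_C]; exact hb0'.isUnit)
  have hdeg : f.natDegree ≠ 0 := by
    rw [← natDegree_map_eq_of_injective (algebraMap ℤ ℚ).injective_int, hbu,
      natDegree_C_mul hb0']
    exact (minpoly.natDegree_pos hInt).ne'
  obtain ⟨l, hl, hlp, z, hz⟩ := exists_padic_root f hdeg hsep p hp
  refine ⟨l, hl, hlp, ⟨(pb.lift (z : ℚ_[l]) ?_).toRingHom⟩⟩
  have h1 : aeval (z : ℚ_[l]) f = 0 := by
    have := aeval_algebraMap_apply ℚ_[l] z f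
    rw [hz, map_zero] at this
    exact this
  rw [← aeval_map_algebraMap ℚ, hbu, map_mul, aeval_C] at h1
  refine (mul_eq_zero.1 h1).resolve_left ?_
  simpa using hb0
end Padic

/-- Strong irreducibility of an action on an abelian group. -/
def SI {Γ A : Type*} [Group Γ] [CommGroup A] (σ : Γ →* MulAut A) : Prop :=
  ∀ K : Subgroup Γ, K.index ≠ 0 → ∀ B : Subgroup A, (∀ k ∈ K, ∀ b ∈ B, σ k b ∈ B) →
    B = ⊥ ∨ B.index ≠ 0

section Phi
variable {Γ A : Type*} [Group Γ] [CommGroup A]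

/-- A common eigenvector in `Hom(A, ℚ̄)`. Its kernel is invariant under a subgroup of finite index,
hence trivial by strong irreducibility. -/
theorem exists_hom_algClosure [Group.FG A] [IsMulTorsionFree A] [Nontrivial A] (hΓ : IsPC Γ)
    (σ : Γ →* MulAut A) (hσ : SI σ) :
    ∃ K : Subgroup Γ, K.index ≠ 0 ∧ ∃ φ : Additive A →+ AlgebraicClosure ℚ,
      Function.Injective φ ∧ ∀ g ∈ K, ∃ c, ∀ a : A,
        φ (Additive.ofMul (σ g a)) = c * φ (Additive.ofMul a) := by
  classical
  have hfgA : AddGroup.FG (Additive A) := inferInstance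
  have : Module.Finite ℤ (Additive A) := Module.Finite.iff_addGroup_fg.2 hfgA
  have : Module.Free ℤ (Additive A) := inferInstance
  let k := AlgebraicClosure ℚ
  have hfin : FiniteDimensional k (Additive A →+ k) := by
    obtain ⟨S, hS⟩ := hfgA.out
    let ev : (Additive A →+ k) →ₗ[k] (S → k) :=
      { toFun := fun φ s => φ s
        map_add' := fun _ _ => rfl
        map_smul' := fun _ _ => rfl }
    refine FiniteDimensional.of_injective ev ?_
    intro φ ψ h
    refine AddMonoidHom.eq_of_eqOn_dense hS ?_
    intro s hs
    exact congrFun h ⟨s, hs⟩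
  have hnt : Nontrivial (Additive A →+ k) := by
    let B := Module.Free.chooseBasis ℤ (Additive A)
    obtain ⟨a, ha⟩ := exists_ne (0 : Additive A)
    obtain ⟨i, hi⟩ : ∃ i, B.coord i a ≠ 0 := by
      by_contra hcon
      push Not at hcon
      exact ha (B.forall_coord_eq_zero_iff.1 hcon)
    refine ⟨⟨(Int.castAddHom k).comp (B.coord i).toAddMonoidHom, 0, fun h => hi ?_⟩⟩
    have := DFunLike.congr_fun h a
    simpa using this
  let ρ : Γ →* Module.End k (Additive A →+ k) :=
    { toFun := fun g =>
        { toFun := fun φ => φ.comp (MonoidHom.toAdditive (σ g⁻¹).toMonoidHom)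
          map_add' := fun _ _ => rfl
          map_smul' := fun _ _ => rfl }
      map_one' := by ext; simp
      map_mul' := by intro g h; ext; simp }
  have hρ : ∀ g φ a, ρ g φ (Additive.ofMul a) = φ (Additive.ofMul (σ g⁻¹ a)) := fun _ _ _ => rfl
  obtain ⟨K, hK, φ, hφ0, hφ⟩ := hΓ.exists_eigenvector ρ
  have hφ' : ∀ g ∈ K, ∃ c, ∀ a : A, φ (Additive.ofMul (σ g a)) = c * φ (Additive.ofMul a) := by
    intro g hg
    obtain ⟨c, hc⟩ := hφ g⁻¹ (inv_mem hg)
    refine ⟨c, fun a => ?_⟩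
    have := DFunLike.congr_fun hc (Additive.ofMul a)
    rw [hρ, inv_inv] at this
    exact this
  refine ⟨K, hK, φ, ?_, hφ'⟩
  let B : Subgroup A :=
    { carrier := {a | φ (Additive.ofMul a) = 0}
      one_mem' := by simp
      mul_mem' := by
        intro a b ha hb
        simp only [Set.mem_ofPred_eq, ofMul_mul, map_add] at *
        rw [ha, hb, add_zero]
      inv_mem' := by
        intro a ha
        simp only [Set.mem_ofPred_eq, ofMul_inv, map_neg] at *
        rw [ha, neg_zero] }
  have hB : ∀ a, a ∈ B ↔ φ (Additive.ofMul a) = 0 := fun a => Iff.rfl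
  have hinv : ∀ g ∈ K, ∀ b ∈ B, σ g b ∈ B := by
    intro g hg b hb
    obtain ⟨c, hc⟩ := hφ' g hg
    rw [hB] at hb ⊢
    rw [hc, hb, mul_zero]
  rcases hσ K hK B hinv with h | h
  · rw [injective_iff_map_eq_zero]
    intro a ha
    have : a.toMul ∈ B := (hB _).2 ha
    rw [h, Subgroup.mem_bot] at this
    exact this
  · exfalso
    apply hφ0
    ext a
    have h2 : a ^ B.index ∈ B := B.pow_index_mem a
    rw [hB, ofMul_pow, map_nsmul, smul_eq_zero] at h2
    exact h2.resolve_left h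

/-- The eigencharacter is transported to `ℚ_l` by an embedding of the number field that it generates,
with `l` not dividing `p`, and divided by its value of maximal norm on a generator, so that it takes
values in `ℤ_l`. -/
theorem exists_hom_padic [Group.FG A] [Nontrivial A] {K : Subgroup Γ}
    (σ : Γ →* MulAut A) (φ : Additive A →+ AlgebraicClosure ℚ)
    (hφ : Function.Injective φ) (hc : ∀ g ∈ K, ∃ c, ∀ a : A,
        φ (Additive.ofMul (σ g a)) = c * φ (Additive.ofMul a)) (p : ℕ) (hp : p ≠ 0) :
    ∃ (l : ℕ) (_ : Fact l.Prime), ¬ l ∣ p ∧ ∃ ψ : Additive A →+ ℤ_[l], Function.Injective ψ ∧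
      ∀ g ∈ K, ∃ c, ∀ a : A, ψ (Additive.ofMul (σ g a)) = c * ψ (Additive.ofMul a) := by
  classical
  obtain ⟨S, hS⟩ := (inferInstance : AddGroup.FG (Additive A)).out
  let L := IntermediateField.adjoin ℚ (φ '' (S : Set (Additive A)))
  have hLfin : FiniteDimensional ℚ L := by
    have : Finite (φ '' (S : Set (Additive A))) := (S.finite_toSet.image φ)
    exact IntermediateField.finiteDimensional_adjoin
      (fun x _ => ((AlgebraicClosure.isAlgebraic ℚ).isAlgebraic x).isIntegral)
  have hgen : ∀ (P : AddSubgroup (Additive A)), (∀ s ∈ S, s ∈ P) → ∀ a, a ∈ P := by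
    intro P hP a
    have : AddSubgroup.closure (S : Set (Additive A)) ≤ P := (AddSubgroup.closure_le _).2 hP
    rw [hS] at this
    exact this trivial
  have hφL : ∀ a, φ a ∈ L := hgen (L.toSubring.toAddSubgroup.comap φ)
    (fun s hs => IntermediateField.subset_adjoin ℚ _ ⟨s, hs, rfl⟩)
  obtain ⟨l, hl, hlp, ⟨τ⟩⟩ := exists_padic_embedding L p hp
  let φL : Additive A →+ L := φ.codRestrict L hφL
  have hφLi : Function.Injective φL := fun a b h => hφ (congrArg Subtype.val h)
  let ψ₀ : Additive A →+ ℚ_[l] := τ.toAddMonoidHom.comp φL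
  have hψ₀ : Function.Injective ψ₀ := τ.injective.comp hφLi
  have hc₀ : ∀ g ∈ K, ∃ c, ∀ a : A, ψ₀ (Additive.ofMul (σ g a)) = c * ψ₀ (Additive.ofMul a) := by
    intro g hg
    obtain ⟨c, hc⟩ := hc g hg
    obtain ⟨a₀, ha₀⟩ := exists_ne (1 : A)
    have h0 : φ (Additive.ofMul a₀) ≠ 0 := by
      rw [← map_zero φ]; exact fun h => ha₀ (hφ h)
    have hcL : c ∈ L := by
      have := L.div_mem (hφL (Additive.ofMul (σ g a₀))) (hφL (Additive.ofMul a₀))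
      rwa [hc, mul_div_cancel_right₀ _ h0] at this
    refine ⟨τ ⟨c, hcL⟩, fun a => ?_⟩
    change τ (φL _) = _ * τ (φL _)
    rw [← map_mul]
    congr 1
    exact Subtype.ext (hc a)
  -- the largest value `M` of the norm on the generators bounds all values
  have hSne : S.Nonempty := by
    by_contra h
    rw [Finset.not_nonempty_iff_eq_empty] at h
    obtain ⟨a₀, ha₀⟩ := exists_ne (1 : A)
    exact ha₀ (hgen ⊥ (by simp [h]) (Additive.ofMul a₀))
  obtain ⟨s₀, hs₀, hmax⟩ := S.exists_max_image (fun s => ‖ψ₀ s‖) hSne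
  have hbd : ∀ a, ‖ψ₀ a‖ ≤ ‖ψ₀ s₀‖ := by
    refine hgen
      { carrier := {a | ‖ψ₀ a‖ ≤ ‖ψ₀ s₀‖}
        zero_mem' := by simp
        add_mem' := by
          intro a b ha hb
          simp only [Set.mem_ofPred_eq, map_add] at *
          exact (IsUltrametricDist.norm_add_le_max _ _).trans (max_le ha hb)
        neg_mem' := by
          intro a ha
          simpa using ha } hmax
  have hs₀0 : ψ₀ s₀ ≠ 0 := by
    intro h0
    obtain ⟨a₀, ha₀⟩ := exists_ne (1 : A)
    have := hbd (Additive.ofMul a₀)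
    rw [h0, norm_zero, norm_le_zero_iff] at this
    exact ha₀ (hψ₀ (this.trans (map_zero ψ₀).symm))
  have hInt : ∀ a, ‖ψ₀ a / ψ₀ s₀‖ ≤ 1 := by
    intro a
    rw [norm_div]
    exact div_le_one_of_le₀ (hbd a) (norm_nonneg _)
  refine ⟨l, hl, hlp,
    { toFun := fun a => ⟨ψ₀ a / ψ₀ s₀, hInt a⟩
      map_zero' := by apply Subtype.ext; simp
      map_add' := by
        intro a b
        apply Subtype.ext
        change ψ₀ (a + b) / ψ₀ s₀ = ψ₀ a / ψ₀ s₀ + ψ₀ b / ψ₀ s₀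
        rw [map_add, add_div] }, ?_, ?_⟩
  · intro a b h
    have : ψ₀ a / ψ₀ s₀ = ψ₀ b / ψ₀ s₀ := congrArg Subtype.val h
    exact hψ₀ ((div_left_inj' hs₀0).1 this)
  · intro g hg
    obtain ⟨c, hc⟩ := hc₀ g hg
    have hcn : ‖c‖ ≤ 1 := by
      have h1 := hbd (Additive.ofMul (σ g s₀.toMul))
      rw [hc, norm_mul] at h1
      have : 0 < ‖ψ₀ s₀‖ := norm_pos_iff.2 hs₀0
      exact le_of_mul_le_mul_right (by simpa using h1) this
    refine ⟨⟨c, hcn⟩, fun a => ?_⟩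
    apply Subtype.ext
    change ψ₀ _ / ψ₀ s₀ = c * (ψ₀ _ / ψ₀ s₀)
    rw [hc, mul_div_assoc]
end Phi

end

/-! ### Invariant ideals avoiding an element -/

section
section Char
variable {F : Type*} [Field F]

/-- The Frobenius argument: applying powers of `x ↦ x ^ q` to `∑ c_s ζ ^ n_s = 0` yields a
Vandermonde system. -/
theorem sum_root_ne_zero {p : ℕ} [Fact p.Prime] [CharP F p] {k : ℕ} {ζ η : F} (hζ0 : ζ ≠ 0)
    (hζ : ζ ^ p ^ k = ζ * η) (hη : η ^ p ^ k = η) {ι : Type*} (S : Finset ι) (hS : S.Nonempty)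
    (n : ι → ℕ) (c : ι → F) (hc : ∀ s ∈ S, c s ^ p ^ k = c s) (hc0 : ∀ s ∈ S, c s ≠ 0)
    (hinj : Set.InjOn (fun s => η ^ n s) S) : ∑ s ∈ S, c s * ζ ^ n s ≠ 0 := by
  classical
  intro h0
  have hζj : ∀ j : ℕ, ζ ^ (p ^ k) ^ j = ζ * η ^ j := by
    intro j
    induction j with
    | zero => simp
    | succ j ih =>
      rw [pow_succ, pow_mul, ih, mul_pow, hζ, ← pow_mul, mul_comm j, pow_mul, hη]
      ring
  have hcj : ∀ j : ℕ, ∀ s ∈ S, c s ^ (p ^ k) ^ j = c s := by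
    intro j s hs
    induction j with
    | zero => simp
    | succ j ih => rw [pow_succ, pow_mul, ih, hc s hs]
  have hj : ∀ j : ℕ, ∑ s ∈ S, (c s * ζ ^ n s) * (η ^ n s) ^ j = 0 := by
    intro j
    have h1 : (∑ s ∈ S, c s * ζ ^ n s) ^ (p ^ (k * j)) = 0 := by
      rw [h0, zero_pow]
      exact pow_ne_zero _ (Fact.out : p.Prime).ne_zero
    rw [sum_pow_char_pow] at h1
    rw [← h1]
    refine Finset.sum_congr rfl fun s hs => ?_
    rw [mul_pow, pow_mul p k j, hcj j s hs, ← pow_mul ζ, mul_comm (n s), pow_mul ζ, hζj, mul_pow]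
    ring
  have hpoly : ∀ g : Polynomial F, ∑ s ∈ S, (c s * ζ ^ n s) * g.eval (η ^ n s) = 0 := by
    intro g
    simp_rw [Polynomial.eval_eq_sum_range, Finset.mul_sum]
    rw [Finset.sum_comm]
    refine Finset.sum_eq_zero fun i _ => ?_
    have := congrArg (fun x => g.coeff i * x) (hj i)
    simp only [mul_zero, Finset.mul_sum] at this
    rw [← this]
    exact Finset.sum_congr rfl fun s _ => by ring
  obtain ⟨s₀, hs₀⟩ := hS
  have h2 := hpoly (Lagrange.basis S (fun s => η ^ n s) s₀)
  rw [Finset.sum_eq_single_of_mem s₀ hs₀, Lagrange.eval_basis_self hinj hs₀, mul_one] at h2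
  · exact mul_ne_zero (hc0 s₀ hs₀) (pow_ne_zero _ hζ0) h2
  · intro s hs hne
    rw [Lagrange.eval_basis_of_ne (v := fun s => η ^ n s) hne.symm hs, mul_zero]

/-- An element of prescribed order in a finite field of characteristic `p`. -/
theorem exists_orderOf (p : ℕ) [Fact p.Prime] {m : ℕ} (hm : m ≠ 0) (hmp : m.Coprime p) :
    ∃ (F : Type) (_ : Field F) (_ : Fintype F) (_ : Algebra (ZMod p) F) (ζ : F),
      orderOf ζ = m := by
  have hφ : m.totient ≠ 0 := (Nat.totient_pos.2 (Nat.pos_of_ne_zero hm)).ne'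
  have hdvd : m ∣ p ^ m.totient - 1 :=
    (Nat.modEq_iff_dvd' (Nat.one_le_pow _ _ (Fact.out : p.Prime).pos)).1
      (Nat.ModEq.pow_totient hmp.symm).symm
  have : Finite (GaloisField p m.totient) := inferInstance
  have := Fintype.ofFinite (GaloisField p m.totient)
  obtain ⟨g, hg⟩ := IsCyclic.exists_ofOrder_eq_natCard (α := (GaloisField p m.totient)ˣ)
  rw [Nat.card_units, GaloisField.card p _ hφ] at hg
  obtain ⟨d, hd⟩ := hdvd
  have hlt : 1 < p ^ m.totient := Nat.one_lt_pow hφ (Fact.out : p.Prime).one_lt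
  have hd0 : d ≠ 0 := by rintro rfl; omega
  refine ⟨GaloisField p m.totient, inferInstance, inferInstance, inferInstance,
    ((g ^ d : (GaloisField p m.totient)ˣ) : GaloisField p m.totient), ?_⟩
  rw [orderOf_units, orderOf_pow_of_dvd hd0 (by rw [hg, hd]; exact Dvd.intro_left _ rfl), hg, hd,
    Nat.mul_div_cancel _ (Nat.pos_of_ne_zero hd0)]
end Char

section Q0
variable {Γ A : Type*} [Group Γ] [CommGroup A]
open MonoidAlgebra

/-- An invariant ideal modulo which `x` is invertible: the intersection of the kernels of the
evaluations `a ↦ ζ ^ (u ψ(a))`, where `ζ` is a root of unity of order `l ^ e` and `u` runs over the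
units modulo `l ^ e`. It is invariant because `Γ` multiplies `ψ` by scalars. -/
theorem exists_good_ideal (p : ℕ) [hp : Fact p.Prime] [Nontrivial A] (σ : Γ →* MulAut A) {l : ℕ}
    [hl : Fact l.Prime]
    (hlp : ¬ l ∣ p) (ψ : Additive A →+ ℤ_[l]) (hψ : Function.Injective ψ)
    (hc : ∀ g, ∃ c, ∀ a : A, ψ (Additive.ofMul (σ g a)) = c * ψ (Additive.ofMul a))
    (x : MonoidAlgebra (ZMod p) A) (hx : x ≠ 0) :
    ∃ Q : Ideal (MonoidAlgebra (ZMod p) A), Q ≠ ⊥ ∧ Q ≠ ⊤ ∧ (∃ u, u * x - 1 ∈ Q) ∧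
      ∀ g, ∀ y ∈ Q, mapDomainRingHom (ZMod p) (σ g).toMonoidHom y ∈ Q := by
  classical
  have hcop : l.Coprime p := (Nat.Prime.coprime_iff_not_dvd hl.out).2 hlp
  have hl0 := hl.out.ne_zero
  -- `c`: the exponents of the support are distinct modulo `l ^ c`
  obtain ⟨c, hcS⟩ : ∃ c : ℕ, ∀ s ∈ x.coeff.support, ∀ s' ∈ x.coeff.support, s ≠ s' →
      PadicInt.toZModPow c (ψ (Additive.ofMul s)) ≠ PadicInt.toZModPow c (ψ (Additive.ofMul s')) := by
    set δ : ℤ_[l] := ∏ ss ∈ x.coeff.support.offDiag,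
      (ψ (Additive.ofMul ss.1) - ψ (Additive.ofMul ss.2)) with hδ
    have hδ0 : δ ≠ 0 := by
      rw [hδ, Finset.prod_ne_zero_iff]
      rintro ⟨s, s'⟩ h
      rw [Finset.mem_offDiag] at h
      rw [sub_ne_zero]
      exact fun h' => h.2.2 (hψ h')
    obtain ⟨c, hc⟩ : ∃ c, PadicInt.toZModPow c δ ≠ 0 := by
      by_contra hcon
      push Not at hcon
      exact hδ0 (PadicInt.ext_of_toZModPow.1 (by simpa using hcon))
    refine ⟨c, fun s hs s' hs' hne heq => hc ?_⟩
    rw [hδ, map_prod]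
    refine Finset.prod_eq_zero (i := (s, s')) (Finset.mem_offDiag.2 ⟨hs, hs', hne⟩) ?_
    rw [map_sub, heq, sub_self]
  have hlc0 : l ^ c ≠ 0 := pow_ne_zero _ hl0
  set k := (l ^ c).totient with hk
  have hk0 : k ≠ 0 := (Nat.totient_pos.2 (Nat.pos_of_ne_zero hlc0)).ne'
  have hq1 : 1 < p ^ k := Nat.one_lt_pow hk0 hp.out.one_lt
  have hdvd : l ^ c ∣ p ^ k - 1 :=
    (Nat.modEq_iff_dvd' hq1.le).1 (Nat.ModEq.pow_totient (hcop.pow_left c).symm).symm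
  obtain ⟨f, w, hw, hfw⟩ := Nat.exists_eq_pow_mul_and_not_dvd (n := p ^ k - 1) (by omega) l
    hl.out.ne_one
  have hqfw : p ^ k = 1 + l ^ f * w := by omega
  set e := f + c with he
  have hle0 : l ^ e ≠ 0 := pow_ne_zero _ hl0
  have : NeZero (l ^ e) := ⟨hle0⟩
  obtain ⟨F, _, _, _, ζ, hζ⟩ := exists_orderOf p (m := l ^ e) hle0 (hcop.pow_left e)
  have : CharP F p := charP_of_injective_algebraMap (algebraMap (ZMod p) F).injective p
  have hζ1 : ζ ^ (l ^ e) = 1 := by rw [← hζ]; exact pow_orderOf_eq_one ζ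
  have hζ0 : ζ ≠ 0 := by
    rintro rfl
    rw [zero_pow hle0] at hζ1
    exact zero_ne_one hζ1
  set η := ζ ^ (l ^ f * w) with hη
  have hηord : orderOf η = l ^ c := by
    have h1 : orderOf (ζ ^ l ^ f) = l ^ c := by
      rw [orderOf_pow' _ (pow_ne_zero _ hl0), hζ, he, pow_add, Nat.gcd_mul_right_left,
        Nat.mul_div_cancel_left _ (Nat.pos_of_ne_zero (pow_ne_zero _ hl0))]
    rw [hη, pow_mul, Nat.Coprime.orderOf_pow, h1]
    rw [h1]
    exact Nat.Coprime.pow_left c ((Nat.Prime.coprime_iff_not_dvd hl.out).2 hw)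
  have hζq : ζ ^ p ^ k = ζ * η := by rw [hqfw, pow_add, pow_one]
  have hηq : η ^ p ^ k = η := by
    have : p ^ k = 1 + (p ^ k - 1) := by omega
    rw [this, pow_add, pow_one, orderOf_dvd_iff_pow_eq_one.1 (hηord ▸ hdvd), mul_one]
  let χ : ZMod (l ^ e) → A →* F := fun u =>
    { toFun := fun a => AddChar.zmodChar (l ^ e) hζ1 (u * PadicInt.toZModPow e (ψ (Additive.ofMul a)))
      map_one' := by simp
      map_mul' := by
        intro a b
        rw [ofMul_mul, map_add, map_add, mul_add, AddChar.map_add_eq_mul] }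
  have hχ : ∀ u a, χ u a =
      AddChar.zmodChar (l ^ e) hζ1 (u * PadicInt.toZModPow e (ψ (Additive.ofMul a))) :=
    fun _ _ => rfl
  let Θ : ZMod (l ^ e) → MonoidAlgebra (ZMod p) A →ₐ[ZMod p] F := fun u =>
    MonoidAlgebra.lift (ZMod p) F A (χ u)
  have hΘ : ∀ u y, Θ u y = y.coeff.sum fun a b => b • χ u a := fun u y => MonoidAlgebra.lift_apply _ _
  have hΘx : ∀ u : (ZMod (l ^ e))ˣ, Θ u x ≠ 0 := by
    intro u
    rw [hΘ, Finsupp.sum]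
    have hre : ∀ s, x.coeff s • χ u s = algebraMap (ZMod p) F (x.coeff s) *
        ζ ^ ((u : ZMod (l ^ e)) * PadicInt.toZModPow e (ψ (Additive.ofMul s))).val := by
      intro s
      rw [hχ, AddChar.zmodChar_apply, Algebra.smul_def]
    simp_rw [hre]
    refine sum_root_ne_zero hζ0 hζq hηq x.coeff.support (Finsupp.support_nonempty_iff.2 (by simpa using hx)) _ _ ?_ ?_ ?_
    · intro s _
      rw [← map_pow, ZMod.pow_card_pow]
    · intro s hs h0
      rw [map_eq_zero] at h0
      exact (Finsupp.mem_support_iff.1 hs) h0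
    · intro s hs s' hs' heq
      by_contra hne
      refine hcS s hs s' hs' hne ?_
      have hη0 : η ≠ 0 := pow_ne_zero _ hζ0
      have heq' : (Units.mk0 η hη0) ^ ((u : ZMod (l ^ e)) *
          PadicInt.toZModPow e (ψ (Additive.ofMul s))).val = (Units.mk0 η hη0) ^
          ((u : ZMod (l ^ e)) * PadicInt.toZModPow e (ψ (Additive.ofMul s'))).val := by
        ext
        simpa using heq
      have h1 := pow_eq_pow_iff_modEq.1 heq'
      rw [← orderOf_units, Units.val_mk0, hηord, ← ZMod.natCast_eq_natCast_iff] at h1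
      have hce : l ^ c ∣ l ^ e := pow_dvd_pow _ (by omega)
      have hval : ∀ z : ZMod (l ^ e), ((z.val : ℕ) : ZMod (l ^ c)) = ZMod.castHom hce (ZMod (l ^ c)) z := by
        intro z
        conv_rhs => rw [← ZMod.natCast_zmod_val z]
        rw [map_natCast]
      rw [hval, hval, map_mul, map_mul] at h1
      have hu : IsUnit (ZMod.castHom hce (ZMod (l ^ c)) (u : ZMod (l ^ e))) := u.isUnit.map _
      have h2 := hu.mul_left_cancel h1
      have hcomp := PadicInt.zmod_cast_comp_toZModPow (p := l) c e (by omega)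
      have h3 := fun z => RingHom.congr_fun hcomp z
      simp only [RingHom.comp_apply] at h3
      rwa [h3, h3] at h2
  let Q : Ideal (MonoidAlgebra (ZMod p) A) := ⨅ u : (ZMod (l ^ e))ˣ, RingHom.ker (Θ u)
  have hQ : ∀ y, y ∈ Q ↔ ∀ u : (ZMod (l ^ e))ˣ, Θ u y = 0 := by
    intro y; simp only [Q, Ideal.mem_iInf, RingHom.mem_ker]
  obtain ⟨a, ha⟩ := exists_ne (1 : A)
  have hψa : ψ (Additive.ofMul a) ≠ 0 := fun h => ha (hψ (h.trans (map_zero ψ).symm))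
  refine ⟨Q, ?_, ?_, ⟨x ^ (Fintype.card F - 2), ?_⟩, ?_⟩
  · intro hbot
    have hmem : single (a ^ l ^ e) (1 : ZMod p) - 1 ∈ Q := by
      rw [hQ]
      intro u
      rw [map_sub, map_one, sub_eq_zero]
      simp only [Θ, MonoidAlgebra.lift_single, one_smul, hχ]
      rw [ofMul_pow, map_nsmul, map_nsmul, nsmul_eq_mul]
      have : ((l ^ e : ℕ) : ZMod (l ^ e)) = 0 := ZMod.natCast_self _
      rw [this]; simp
    rw [hbot, Ideal.mem_bot, sub_eq_zero, MonoidAlgebra.one_def] at hmem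
    have h1 : a ^ l ^ e = 1 := by
      by_contra hne
      exact hne (Finsupp.single_left_injective (one_ne_zero (α := ZMod p))
        (congrArg MonoidAlgebra.coeff hmem))
    have h2 : ψ (Additive.ofMul (a ^ l ^ e)) = 0 := by rw [h1]; simp
    rw [ofMul_pow, map_nsmul, smul_eq_zero] at h2
    exact h2.elim hle0 hψa
  · intro htop
    have : (1 : MonoidAlgebra (ZMod p) A) ∈ Q := by rw [htop]; trivial
    rw [hQ] at this
    simpa using this 1
  · rw [hQ]
    intro u
    have h2 : 2 ≤ Fintype.card F := Fintype.one_lt_card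
    rw [← pow_succ, map_sub, map_pow, map_one, sub_eq_zero]
    rw [show Fintype.card F - 2 + 1 = Fintype.card F - 1 by omega]
    exact FiniteField.pow_card_sub_one_eq_one _ (hΘx u)
  · intro g y hy
    rw [hQ] at hy ⊢
    intro u
    obtain ⟨d, hd⟩ := hc g
    obtain ⟨d', hd'⟩ := hc g⁻¹
    have hdd : d * d' = 1 := by
      have := hd (σ g⁻¹ a)
      rw [hd', ← MulAut.mul_apply, ← map_mul, mul_inv_cancel, map_one, MulAut.one_apply,
        ← mul_assoc] at this
      exact (mul_eq_right₀ hψa).1 this.symm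
    let v : (ZMod (l ^ e))ˣ :=
      { val := PadicInt.toZModPow e d
        inv := PadicInt.toZModPow e d'
        val_inv := by rw [← map_mul, hdd, map_one]
        inv_val := by rw [← map_mul, mul_comm, hdd, map_one] }
    have hcomp : ((Θ u : MonoidAlgebra (ZMod p) A →+* F).comp
        (mapDomainRingHom (ZMod p) (σ g).toMonoidHom)) = (Θ (u * v : (ZMod (l ^ e))ˣ)) := by
      refine MonoidAlgebra.ringHom_ext ?_ ?_
      · intro r
        simp [Θ]
      · intro b
        simp only [Θ, RingHom.comp_apply, mapDomainRingHom_apply, MonoidAlgebra.mapDomain_single]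
        simp only [RingHom.coe_coe, MonoidAlgebra.lift_single, one_smul, hχ]
        rw [Units.val_mul, mul_assoc]
        congr 2
        change PadicInt.toZModPow e (ψ (Additive.ofMul (σ g b))) = _
        rw [hd, map_mul]
    have := RingHom.congr_fun hcomp y
    have h2 := hy (u * v)
    rw [← h2]
    exact this
end Q0

end

/-! ### Bergman's theorem -/

section
section Cover
variable {Γ A : Type*} [Group Γ] [CommGroup A]

theorem wellFoundedGT_subgroup [Group.FG A] : WellFoundedGT (Subgroup A) := by
  have h : AddGroup.FG (Additive A) := inferInstance
  have h2 : Module.Finite ℤ (Additive A) := Module.Finite.iff_addGroup_fg.2 h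
  have h3 : IsNoetherian ℤ (Additive A) := inferInstance
  have : WellFoundedGT (Submodule ℤ (Additive A)) := inferInstance
  exact ((Subgroup.toAddSubgroup (G := A)).trans
    (AddSubgroup.toIntSubmodule (M := Additive A))).toOrderEmbedding.wellFoundedGT

/-- The set of `g` carrying `C` into `B`. -/
def carry (σ : Γ →* MulAut A) (B C : Subgroup A) : Set Γ := {g | ∀ c ∈ C, σ g c ∈ B}

theorem mem_carry_translate {σ : Γ →* MulAut A} {B C : Subgroup A} {g x : Γ} :
    x ∈ carry σ B (C.map (σ g).toMonoidHom) ↔ x * g ∈ carry σ B C := by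
  simp [carry, Subgroup.mem_map]

theorem mem_carry_sup {σ : Γ →* MulAut A} {B C D : Subgroup A} {x : Γ} :
    x ∈ carry σ B (C ⊔ D) ↔ x ∈ carry σ B C ∧ x ∈ carry σ B D := by
  have h : ∀ E : Subgroup A, x ∈ carry σ B E ↔ E ≤ B.comap (σ x).toMonoidHom := fun _ => Iff.rfl
  rw [h, h, h, sup_le_iff]

/-- Irreducibility of `carry σ B D` with respect to finite covers by sets `carry σ B E`. -/
def CarryIrr (σ : Γ →* MulAut A) (B D : Subgroup A) : Prop :=
  ∀ S : Finset (Subgroup A), (carry σ B D ⊆ ⋃ E ∈ S, carry σ B E) →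
    ∃ E ∈ S, carry σ B D ⊆ carry σ B E

theorem CarryIrr.translate {σ : Γ →* MulAut A} {B D : Subgroup A} (h : CarryIrr σ B D) (g : Γ) :
    CarryIrr σ B (D.map (σ g).toMonoidHom) := by
  classical
  intro S hS
  obtain ⟨E', hE', hDE⟩ := h (S.image fun E => E.map (σ g⁻¹).toMonoidHom) (by
    intro x hx
    have : x * g⁻¹ ∈ carry σ B (D.map (σ g).toMonoidHom) := by
      rw [mem_carry_translate]; simpa using hx
    obtain ⟨E, hE, hxE⟩ := Set.mem_iUnion₂.1 (hS this)
    exact Set.mem_iUnion₂.2 ⟨E.map (σ g⁻¹).toMonoidHom,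
      Finset.mem_image_of_mem (fun E => E.map (σ g⁻¹).toMonoidHom) hE, mem_carry_translate.2 hxE⟩)
  obtain ⟨E, hE, rfl⟩ := Finset.mem_image.1 hE'
  refine ⟨E, hE, fun x hx => ?_⟩
  have := mem_carry_translate.1 (hDE (mem_carry_translate.1 hx))
  simpa using this

/-- Noetherian induction: each `carry σ B C` is a finite union of irreducible ones. -/
theorem exists_irr_decomp [Group.FG A] (σ : Γ →* MulAut A) (B C : Subgroup A) :
    ∃ S : Finset (Subgroup A), (∀ D ∈ S, C ≤ D ∧ CarryIrr σ B D) ∧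
      carry σ B C ⊆ ⋃ D ∈ S, carry σ B D := by
  classical
  have hwf : WellFoundedGT (Subgroup A) := wellFoundedGT_subgroup
  induction C using hwf.induction with
  | ind C ih =>
    by_cases hC : CarryIrr σ B C
    · exact ⟨{C}, by simpa using hC, by simp⟩
    · unfold CarryIrr at hC
      push Not at hC
      obtain ⟨S, hS, hS'⟩ := hC
      have : ∀ E ∈ S, ∃ S' : Finset (Subgroup A), (∀ D ∈ S', C ⊔ E ≤ D ∧ CarryIrr σ B D) ∧
          carry σ B (C ⊔ E) ⊆ ⋃ D ∈ S', carry σ B D := by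
        intro E hE
        refine ih (C ⊔ E) (lt_of_le_of_ne le_sup_left fun heq => hS' E hE ?_)
        intro x hx
        rw [heq] at hx
        exact (mem_carry_sup.1 hx).2
      choose! f hf using this
      refine ⟨S.biUnion f, ?_, ?_⟩
      · intro D hD
        obtain ⟨E, hE, hD⟩ := Finset.mem_biUnion.1 hD
        exact ⟨le_sup_left.trans ((hf E hE).1 D hD).1, ((hf E hE).1 D hD).2⟩
      · intro x hx
        obtain ⟨E, hE, hxE⟩ := Set.mem_iUnion₂.1 (hS hx)
        obtain ⟨D, hD, hxD⟩ := Set.mem_iUnion₂.1 ((hf E hE).2 (mem_carry_sup.2 ⟨hx, hxE⟩))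
        exact Set.mem_iUnion₂.2 ⟨D, Finset.mem_biUnion.2 ⟨E, hE, hD⟩, hxD⟩

/-- If `B` has infinite index in `A`, finitely many of the sets `{g | σ g a ∈ B}`, `a ≠ 1`, do not
cover `Γ`: otherwise a maximal irreducible component of a cover has a stabilizer of finite index,
which contradicts strong irreducibility. -/
theorem not_cover [Group.FG A] (σ : Γ →* MulAut A) (hσ : SI σ) (B : Subgroup A)
    (hB : B.index = 0) (T : Finset A) (hT : ∀ a ∈ T, a ≠ 1) :
    ∃ g : Γ, ∀ a ∈ T, σ g a ∉ B := by
  classical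
  by_contra hcon
  push Not at hcon
  choose f hf1 hf2 using fun C => exists_irr_decomp σ B C
  let S : Finset (Subgroup A) := (T.image Subgroup.zpowers).biUnion f
  have hSirr : ∀ D ∈ S, CarryIrr σ B D ∧ D ≠ ⊥ := by
    intro D hD
    obtain ⟨C, hC, hD⟩ := Finset.mem_biUnion.1 hD
    obtain ⟨a, ha, rfl⟩ := Finset.mem_image.1 hC
    refine ⟨(hf1 _ D hD).2, fun h => hT a ha ?_⟩
    have := (hf1 _ D hD).1 (Subgroup.mem_zpowers a)
    rwa [h, Subgroup.mem_bot] at this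
  have hScov : ∀ x : Γ, ∃ D ∈ S, x ∈ carry σ B D := by
    intro x
    obtain ⟨a, ha, hxa⟩ := hcon x
    have : x ∈ carry σ B (Subgroup.zpowers a) := by
      intro c hc
      obtain ⟨n, rfl⟩ := Subgroup.mem_zpowers_iff.1 hc
      rw [map_zpow]
      exact zpow_mem hxa n
    obtain ⟨D, hD, hxD⟩ := Set.mem_iUnion₂.1 (hf2 _ this)
    exact ⟨D, Finset.mem_biUnion.2 ⟨_, Finset.mem_image_of_mem _ ha, hD⟩, hxD⟩
  have hcovset : ∀ E, carry σ B E ⊆ ⋃ D ∈ S, carry σ B D := by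
    intro E x _
    obtain ⟨D, hD, hxD⟩ := hScov x
    exact Set.mem_iUnion₂.2 ⟨D, hD, hxD⟩
  -- a component which is maximal under inclusion
  obtain ⟨D₀, hD₀S, hD₀⟩ : ∃ D₀ ∈ S, ∀ D ∈ S, carry σ B D₀ ⊆ carry σ B D →
      carry σ B D ⊆ carry σ B D₀ := by
    obtain ⟨D, hD, _⟩ := hScov 1
    obtain ⟨D₀, h⟩ := S.exists_maximalFor (carry σ B) ⟨D, hD⟩
    exact ⟨D₀, h.1, fun D hD h' => h.2 hD h'⟩
  have htrans : ∀ g : Γ, ∃ D ∈ S, carry σ B (D₀.map (σ g).toMonoidHom) = carry σ B D := by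
    intro g
    obtain ⟨D, hD, h1⟩ := (hSirr D₀ hD₀S).1.translate g S (hcovset _)
    refine ⟨D, hD, h1.antisymm ?_⟩
    obtain ⟨D', hD', h2⟩ := (hSirr D hD).1.translate g⁻¹ S (hcovset _)
    have h3 : carry σ B D₀ ⊆ carry σ B (D.map (σ g⁻¹).toMonoidHom) := by
      intro x hx
      rw [mem_carry_translate]
      apply h1
      rw [mem_carry_translate]
      simpa using hx
    have h4 := hD₀ D' hD' (h3.trans h2)
    intro x hx
    rw [mem_carry_translate]
    apply h4
    apply h2
    rw [mem_carry_translate]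
    simpa using hx
  -- the stabilizer of this component
  let K : Subgroup Γ :=
    { carrier := {g | ∀ x, x ∈ carry σ B D₀ ↔ x * g ∈ carry σ B D₀}
      one_mem' := by intro x; simp
      mul_mem' := by
        intro a b ha hb x
        rw [ha x, hb (x * a), mul_assoc]
      inv_mem' := by
        intro a ha x
        rw [ha (x * a⁻¹)]; simp }
  have hK : ∀ g, g ∈ K ↔ ∀ x, x ∈ carry σ B D₀ ↔ x * g ∈ carry σ B D₀ := fun _ => Iff.rfl
  have hKi : K.index ≠ 0 := by
    choose F hF1 hF2 using htrans
    have : Finite (Γ ⧸ K) := by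
      refine Finite.of_injective (fun q : Γ ⧸ K => (⟨F q.out, hF1 _⟩ : S)) ?_
      intro q q' h
      have h1 : F q.out = F q'.out := congrArg Subtype.val h
      have h2 := (hF2 q.out).trans ((congrArg (carry σ B) h1).trans (hF2 q'.out).symm)
      rw [← q.out_eq', ← q'.out_eq']
      refine QuotientGroup.eq.2 ?_
      rw [hK]
      intro x
      have := Set.ext_iff.1 h2 (x * q.out⁻¹)
      rw [mem_carry_translate, mem_carry_translate] at this
      simpa [mul_assoc] using this
    exact (Subgroup.finiteIndex_of_finite_quotient (H := K)).index_ne_zero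
  obtain ⟨g₀, hg₀⟩ : (carry σ B D₀).Nonempty := by
    by_contra h
    rw [Set.not_nonempty_iff_eq_empty] at h
    obtain ⟨E, hE, _⟩ := (hSirr D₀ hD₀S).1 ∅ (by simp [h])
    simp at hE
  -- `g₀` carries every `σ k D₀` with `k ∈ K` into `B`, hence also their join `E`
  let E : Subgroup A := ⨆ k : K, D₀.map (σ k).toMonoidHom
  have hEB : E ≤ B.comap (σ g₀).toMonoidHom := by
    refine iSup_le fun k => ?_
    rw [Subgroup.map_le_iff_le_comap]
    intro c hc
    have := (hK k).1 k.2 g₀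
    have := this.1 hg₀ c hc
    simpa using this
  have hEinv : ∀ k ∈ K, ∀ b ∈ E, σ k b ∈ E := by
    intro k hk
    have : E ≤ E.comap (σ k).toMonoidHom := by
      refine iSup_le fun k' => ?_
      rw [Subgroup.map_le_iff_le_comap]
      intro c hc
      have h1 : D₀.map (σ ((⟨k, hk⟩ * k' : K) : Γ)).toMonoidHom ≤ E :=
        le_iSup (fun k : K => D₀.map (σ k).toMonoidHom) _
      have h2 := h1 (Subgroup.mem_map_of_mem _ hc)
      simpa using h2
    exact this
  rcases hσ K hKi E hEinv with h | h
  · apply (hSirr D₀ hD₀S).2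
    rw [eq_bot_iff, ← h]
    refine le_trans (le_of_eq ?_) (le_iSup (fun k : K => D₀.map (σ k).toMonoidHom) 1)
    ext a; simp
  · have h1 := Subgroup.index_dvd_of_le hEB
    rw [Subgroup.index_comap_of_surjective _ (σ g₀).surjective, hB] at h1
    exact h (Nat.eq_zero_of_zero_dvd h1)
end Cover

section Bergman
variable {Γ A : Type*} [Group Γ] [CommGroup A]
open MonoidAlgebra

theorem isOfFinOrder_of_isAlgebraic {p : ℕ} [Fact p.Prime] {L : Type*} [Field L]
    [Algebra (ZMod p) L] {x : L} (hx : IsAlgebraic (ZMod p) x) (hx0 : x ≠ 0) :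
    ∃ n ≠ 0, x ^ n = 1 := by
  have hfd := IntermediateField.adjoin.finiteDimensional hx.isIntegral
  have hfin : Finite (IntermediateField.adjoin (ZMod p) {x}) := Module.finite_of_finite (ZMod p)
  have := Fintype.ofFinite (IntermediateField.adjoin (ZMod p) {x})
  let y : IntermediateField.adjoin (ZMod p) {x} :=
    ⟨x, IntermediateField.mem_adjoin_simple_self _ _⟩
  refine ⟨Fintype.card (IntermediateField.adjoin (ZMod p) {x}) - 1, ?_, ?_⟩
  · have : 1 < Fintype.card (IntermediateField.adjoin (ZMod p) {x}) := Fintype.one_lt_card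
    omega
  · have := FiniteField.pow_card_sub_one_eq_one y (fun h => hx0 (congrArg Subtype.val h))
    exact congrArg Subtype.val this

theorem exists_valuation {p : ℕ} [Fact p.Prime] {L : Type*} [Field L]
    [Algebra (ZMod p) L] {x : L} (hx : ¬ IsAlgebraic (ZMod p) x) :
    ∃ V : ValuationSubring L, V.valuation x < 1 := by
  let S := (Algebra.adjoin (ZMod p) {x}).toSubring
  let x' : S := ⟨x, Algebra.subset_adjoin rfl⟩
  obtain ⟨V, _, hV⟩ := Ideal.image_subset_nonunits_valuationSubring (Ideal.span {x'}) (by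
    intro htop
    rw [Ideal.eq_top_iff_one, Ideal.mem_span_singleton] at htop
    obtain ⟨y, hy⟩ := htop
    have hy' : (1 : L) = x * y := congrArg Subtype.val hy
    have hyS : (y : L) ∈ Algebra.adjoin (ZMod p) {x} := y.2
    rw [Algebra.adjoin_singleton_eq_range_aeval] at hyS
    obtain ⟨g, hg⟩ := hyS
    apply hx
    refine ⟨Polynomial.X * g - 1, fun h => ?_, ?_⟩
    · have := congrArg (Polynomial.eval 0) h
      simp at this
    · have hg' : Polynomial.aeval x g = (y : L) := hg
      rw [map_sub, map_mul, Polynomial.aeval_X, hg', ← hy', map_one, sub_self])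
  refine ⟨V, ?_⟩
  exact (ValuationSubring.mem_nonunits_iff V).1 (hV ⟨x', Ideal.mem_span_singleton_self _, rfl⟩)

/-- Bergman: modulo an invariant nonzero prime of the group ring the group `A` has finite
exponent. -/
theorem bergman (p : ℕ) [Fact p.Prime] [Group.FG A] (σ : Γ →* MulAut A) (hσ : SI σ)
    (P : Ideal (MonoidAlgebra (ZMod p) A)) (hP : P.IsPrime) (hP0 : P ≠ ⊥)
    (hinv : ∀ g, ∀ y ∈ P, mapDomainRingHom (ZMod p) (σ g).toMonoidHom y ∈ P) :
    ∃ m ≠ 0, ∀ a : A, single (a ^ m) (1 : ZMod p) - 1 ∈ P := by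
  classical
  by_contra hcon
  let L := FractionRing (MonoidAlgebra (ZMod p) A ⧸ P)
  let θ : MonoidAlgebra (ZMod p) A →ₐ[ZMod p] L :=
    (IsScalarTower.toAlgHom (ZMod p) (MonoidAlgebra (ZMod p) A ⧸ P) L).comp
      (Ideal.Quotient.mkₐ (ZMod p) P)
  have hθ : ∀ y, θ y = 0 ↔ y ∈ P := by
    intro y
    change algebraMap (MonoidAlgebra (ZMod p) A ⧸ P) L (Ideal.Quotient.mk P y) = 0 ↔ _
    rw [map_eq_zero_iff _ (IsFractionRing.injective _ _), Ideal.Quotient.eq_zero_iff_mem]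
  let ι : A →* L := (θ : MonoidAlgebra (ZMod p) A →* L).comp (MonoidAlgebra.of (ZMod p) A)
  have hι : ∀ a, ι a = θ (single a 1) := fun _ => rfl
  have hι0 : ∀ a, ι a ≠ 0 := fun a h => by
    have : ι (a * a⁻¹) = 0 := by rw [map_mul, h, zero_mul]
    rw [mul_inv_cancel, map_one] at this
    exact one_ne_zero this
  have hsum : ∀ y, θ y = ∑ s ∈ y.coeff.support, algebraMap (ZMod p) L (y.coeff s) * ι s := by
    intro y
    have : θ = MonoidAlgebra.lift (ZMod p) L A ι := by
      ext a; simp [hι]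
    rw [this, MonoidAlgebra.lift_apply, Finsupp.sum]
    simp_rw [Algebra.smul_def]
  -- an element of infinite order
  obtain ⟨a, ha⟩ : ∃ a : A, ∀ n ≠ 0, ι a ^ n ≠ 1 := by
    by_contra h
    push Not at h
    choose n hn0 hn using h
    obtain ⟨S, hS⟩ := (inferInstance : Group.FG A).out
    apply hcon
    refine ⟨∏ s ∈ S, n s, Finset.prod_ne_zero_iff.2 fun s _ => hn0 s, ?_⟩
    have hle : Subgroup.closure (S : Set A) ≤ (ι.comp (powMonoidHom (∏ s ∈ S, n s))).ker := by
      rw [Subgroup.closure_le]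
      intro s hs
      rw [SetLike.mem_coe, MonoidHom.mem_ker]
      simp only [MonoidHom.comp_apply, powMonoidHom_apply, map_pow]
      obtain ⟨d, hd⟩ := Finset.dvd_prod_of_mem n hs
      rw [hd, pow_mul, hn, one_pow]
    rw [hS] at hle
    intro b
    rw [← hθ, map_sub, map_one, sub_eq_zero, ← hι]
    exact hle (Subgroup.mem_top b)
  obtain ⟨V, hV⟩ := exists_valuation (p := p) (x := ι a) (fun h => by
    obtain ⟨n, hn, hn'⟩ := isOfFinOrder_of_isAlgebraic h (hι0 a)
    exact ha n hn hn')
  let v := V.valuation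
  -- the elements of `A` that are units for the valuation
  let B : Subgroup A :=
    { carrier := {b | v (ι b) = 1}
      one_mem' := by simp
      mul_mem' := by
        intro b c hb hc
        simp only [Set.mem_ofPred_eq] at *
        rw [map_mul, map_mul, hb, hc, one_mul]
      inv_mem' := by
        intro b hb
        simp only [Set.mem_ofPred_eq] at *
        have : v (ι (b * b⁻¹)) = 1 := by simp
        rwa [map_mul, map_mul, hb, one_mul] at this }
  have hB : ∀ b, b ∈ B ↔ v (ι b) = 1 := fun _ => Iff.rfl
  have hBi : B.index = 0 := by
    by_contra h
    have := B.pow_index_mem a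
    rw [hB, map_pow, map_pow, pow_eq_one_iff_of_nonneg zero_le h] at this
    exact hV.ne this
  obtain ⟨x, hxP, hx0⟩ := Submodule.exists_mem_ne_zero_of_ne_bot hP0
  have hne : x.coeff.support.Nonempty := Finsupp.support_nonempty_iff.2 (by simpa using hx0)
  -- after applying `g` the terms of `x` have pairwise distinct valuations, so their sum is nonzero
  obtain ⟨g, hg⟩ := not_cover σ hσ B hBi (x.coeff.support.offDiag.image fun ss => ss.1 * ss.2⁻¹) (by
    intro b hb
    obtain ⟨⟨s, s'⟩, hs, rfl⟩ := Finset.mem_image.1 hb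
    rw [Finset.mem_offDiag] at hs
    rw [Ne, mul_inv_eq_one]
    exact hs.2.2)
  have h0 : ∑ s ∈ x.coeff.support, algebraMap (ZMod p) L (x.coeff s) * ι (σ g s) = 0 := by
    have h1 := (hθ _).2 (hinv g x hxP)
    have h2 : θ.comp (MonoidAlgebra.mapDomainAlgHom (ZMod p) (ZMod p) (σ g).toMonoidHom) =
        MonoidAlgebra.lift (ZMod p) L A (ι.comp (σ g).toMonoidHom) := by
      ext a; simp [hι]
    have h3 := AlgHom.congr_fun h2 x
    rw [MonoidAlgebra.lift_apply, Finsupp.sum] at h3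
    simp_rw [Algebra.smul_def] at h3
    rw [← h1]
    exact h3.symm
  have hvc : ∀ s ∈ x.coeff.support, v (algebraMap (ZMod p) L (x.coeff s)) = 1 := by
    intro s hs
    have h1 : (x.coeff s) ^ (p - 1) = 1 := ZMod.pow_card_sub_one_eq_one (Finsupp.mem_support_iff.1 hs)
    have h2 : p - 1 ≠ 0 := by have := (Fact.out : p.Prime).two_le; omega
    rw [← pow_eq_one_iff_of_nonneg zero_le h2, ← map_pow, ← map_pow, h1, map_one, map_one]
  obtain ⟨j, hj, hmax⟩ := Finset.exists_max_image x.coeff.support (fun s => v (ι (σ g s))) hne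
  have hlt : ∀ s ∈ x.coeff.support \ {j}, v (algebraMap (ZMod p) L (x.coeff s) * ι (σ g s)) <
      v (algebraMap (ZMod p) L (x.coeff j) * ι (σ g j)) := by
    intro s hs
    rw [Finset.mem_sdiff, Finset.mem_singleton] at hs
    rw [map_mul, map_mul, hvc s hs.1, hvc j hj, one_mul, one_mul]
    refine lt_of_le_of_ne (hmax s hs.1) fun heq => ?_
    refine hg (s * j⁻¹) (Finset.mem_image.2 ⟨(s, j), Finset.mem_offDiag.2 ⟨hs.1, hj, hs.2⟩, rfl⟩) ?_
    rw [hB, map_mul, map_mul, map_mul, heq, ← map_mul, ← map_mul, ← map_mul, mul_inv_cancel]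
    simp
  have hnz : v (algebraMap (ZMod p) L (x.coeff j) * ι (σ g j)) ≠ 0 := by
    rw [map_mul, hvc j hj, one_mul]
    exact (Valuation.ne_zero_iff v).2 (hι0 _)
  have := Valuation.map_sum_eq_of_lt v hj hlt
  rw [h0, map_zero] at this
  exact hnz this.symm
end Bergman

end

/-! ### Simple modules -/

section
section Rep
variable {Γ M : Type*} [Group Γ] [AddCommGroup M]

/-- Invariance of a subgroup under an action by additive endomorphisms. -/
def IInv (ρ : Γ →* AddMonoid.End M) (N : AddSubgroup M) : Prop := ∀ g, ∀ n ∈ N, ρ g n ∈ N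

/-- Simplicity of the module given by an action by additive endomorphisms. -/
def Simp (ρ : Γ →* AddMonoid.End M) : Prop :=
  Nontrivial M ∧ ∀ N : AddSubgroup M, IInv ρ N → N = ⊥ ∨ N = ⊤

theorem rep_mul (ρ : Γ →* AddMonoid.End M) (g h : Γ) (x : M) : ρ (g * h) x = ρ g (ρ h x) := by
  rw [map_mul]; rfl

theorem rep_one (ρ : Γ →* AddMonoid.End M) (x : M) : ρ 1 x = x := by
  rw [map_one]; rfl

theorem rep_inv_self (ρ : Γ →* AddMonoid.End M) (g : Γ) (x : M) : ρ g⁻¹ (ρ g x) = x := by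
  rw [← rep_mul, inv_mul_cancel, rep_one]

theorem rep_self_inv (ρ : Γ →* AddMonoid.End M) (g : Γ) (x : M) : ρ g (ρ g⁻¹ x) = x := by
  rw [← rep_mul, mul_inv_cancel, rep_one]

/-- The action on an invariant subgroup. -/
def resRep (ρ : Γ →* AddMonoid.End M) (N : AddSubgroup M) (hN : IInv ρ N) :
    Γ →* AddMonoid.End N where
  toFun g := ((ρ g).comp N.subtype).codRestrict N fun n => hN g n n.2
  map_one' := by ext x; exact rep_one ρ _
  map_mul' g h := by ext x; exact rep_mul ρ g h _

theorem resRep_apply (ρ : Γ →* AddMonoid.End M) (N : AddSubgroup M) (hN : IInv ρ N) (g : Γ)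
    (x : N) : (resRep ρ N hN g x : M) = ρ g x := rfl

/-- The action on the quotient by an invariant subgroup. -/
def quoRep (ρ : Γ →* AddMonoid.End M) (N : AddSubgroup M) (hN : IInv ρ N) :
    Γ →* AddMonoid.End (M ⧸ N) where
  toFun g := QuotientAddGroup.map N N (ρ g) fun n hn => hN g n hn
  map_one' := by
    refine AddMonoidHom.ext fun x => ?_
    obtain ⟨x, rfl⟩ := QuotientAddGroup.mk_surjective x
    exact congrArg _ (rep_one ρ x)
  map_mul' g h := by
    refine AddMonoidHom.ext fun x => ?_
    obtain ⟨x, rfl⟩ := QuotientAddGroup.mk_surjective x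
    exact congrArg _ (rep_mul ρ g h x)

theorem quoRep_mk (ρ : Γ →* AddMonoid.End M) (N : AddSubgroup M) (hN : IInv ρ N) (g : Γ)
    (x : M) : quoRep ρ N hN g (x : M ⧸ N) = ((ρ g x : M) : M ⧸ N) := rfl

/-- The subgroup generated by the translates of a set. -/
def orb (ρ : Γ →* AddMonoid.End M) (S : Set M) : AddSubgroup M :=
  AddSubgroup.closure {m | ∃ g, ∃ s ∈ S, m = ρ g s}

theorem subset_orb (ρ : Γ →* AddMonoid.End M) {S : Set M} {s : M} (hs : s ∈ S) :
    s ∈ orb ρ S := AddSubgroup.subset_closure ⟨1, s, hs, (rep_one ρ s).symm⟩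

theorem iInv_orb (ρ : Γ →* AddMonoid.End M) (S : Set M) : IInv ρ (orb ρ S) := by
  intro g
  have : orb ρ S ≤ (orb ρ S).comap (ρ g) := by
    refine (AddSubgroup.closure_le _).2 ?_
    rintro _ ⟨h, s, hs, rfl⟩
    exact AddSubgroup.subset_closure ⟨g * h, s, hs, (rep_mul ρ g h s).symm⟩
  exact this

theorem orb_le {ρ : Γ →* AddMonoid.End M} {S : Set M} {N : AddSubgroup M} (hN : IInv ρ N)
    (h : S ⊆ N) : orb ρ S ≤ N := by
  refine (AddSubgroup.closure_le _).2 ?_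
  rintro _ ⟨g, s, hs, rfl⟩
  exact hN g s (h hs)

theorem Simp.orb_eq_top {ρ : Γ →* AddMonoid.End M} (h : Simp ρ) {m : M} (hm : m ≠ 0) :
    orb ρ {m} = ⊤ := by
  rcases h.2 _ (iInv_orb ρ {m}) with h' | h'
  · have := subset_orb ρ (Set.mem_singleton m)
    rw [h'] at this
    exact absurd this hm
  · exact h'

/-- A proper submodule over which the module is finitely generated lies in the kernel of a
simple quotient. -/
theorem exists_simp_quotient (ρ : Γ →* AddMonoid.End M) (S : Set M) (hS : S.Finite)
    (L₀ : AddSubgroup M) (hgen : orb ρ S ⊔ L₀ = ⊤) (hL₀ : IInv ρ L₀) (hne : L₀ ≠ ⊤) :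
    ∃ L, L₀ ≤ L ∧ L ≠ ⊤ ∧ ∃ hL : IInv ρ L, Simp (quoRep ρ L hL) := by
  obtain ⟨L, hL₀L, hL⟩ := zorn_le_nonempty₀ {L : AddSubgroup M | IInv ρ L ∧ L₀ ≤ L ∧ L ≠ ⊤} (by
    intro c hc hchain N hN
    have hne : c.Nonempty := ⟨N, hN⟩
    have hdir : DirectedOn (· ≤ ·) c := hchain.directedOn
    refine ⟨sSup c, ⟨?_, (hc hN).2.1.trans (le_sSup hN), ?_⟩, fun z hz => le_sSup hz⟩
    · intro g n hn
      obtain ⟨y, hy, hny⟩ := (AddSubgroup.mem_sSup_of_directedOn hne hdir).1 hn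
      exact (le_sSup hy : y ≤ sSup c) ((hc hy).1 g n hny)
    · intro htop
      obtain ⟨y, hy, hSy⟩ : ∃ y ∈ c, S ⊆ (y : Set M) := by
        refine hS.induction_on_subset (motive := fun s _ => ∃ y ∈ c, s ⊆ (y : Set M)) S ?_ ?_
        · exact ⟨N, hN, Set.empty_subset _⟩
        · intro a s ha _ _ ⟨y, hy, hsy⟩
          have : a ∈ sSup c := by rw [htop]; trivial
          obtain ⟨z, hz, haz⟩ := (AddSubgroup.mem_sSup_of_directedOn hne hdir).1 this
          obtain ⟨w, hw, hyw, hzw⟩ := hdir y hy z hz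
          exact ⟨w, hw, Set.insert_subset (hzw haz) (hsy.trans hyw)⟩
      apply (hc hy).2.2
      rw [eq_top_iff, ← hgen]
      exact sup_le (orb_le (hc hy).1 hSy) (hc hy).2.1) L₀ ⟨hL₀, le_rfl, hne⟩
  refine ⟨L, hL₀L, hL.prop.2.2, hL.prop.1, ?_, ?_⟩
  · exact (QuotientAddGroup.nontrivial_iff).2 hL.prop.2.2
  · intro N hN
    have hc : IInv ρ (N.comap (QuotientAddGroup.mk' L)) := fun g n hn => hN g _ hn
    have hle : L ≤ N.comap (QuotientAddGroup.mk' L) := by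
      intro x hx
      rw [AddSubgroup.mem_comap]
      have : QuotientAddGroup.mk' L x = 0 := (QuotientAddGroup.eq_zero_iff x).2 hx
      rw [this]; exact zero_mem _
    have hsurj := QuotientAddGroup.mk'_surjective L
    by_cases h : N.comap (QuotientAddGroup.mk' L) = ⊤
    · right
      rw [← AddSubgroup.map_comap_eq_self_of_surjective hsurj N, h,
        AddSubgroup.map_top_of_surjective _ hsurj]
    · left
      have h2 := hL.le_of_ge ⟨hc, hL₀L.trans hle, h⟩ hle
      rw [← AddSubgroup.map_comap_eq_self_of_surjective hsurj N, eq_bot_iff]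
      rintro _ ⟨x, hx, rfl⟩
      exact (QuotientAddGroup.eq_zero_iff x).2 (h2 hx)

/-- An abelian group of finite exponent generated by a finite set is finite. -/
theorem finite_of_exponent {p : ℕ} (hp : p ≠ 0) (h : ∀ m : M, p • m = 0) {S : Set M}
    (hS : S.Finite) (hgen : AddSubgroup.closure S = ⊤) : Finite M := by
  have h1 : AddGroup.FG M := (AddGroup.fg_iff).2 ⟨S, hgen, hS⟩
  refine AddCommGroup.finite_of_fg_isAddTorsion M ?_
  intro x
  exact isOfFinAddOrder_iff_nsmul_eq_zero.2 ⟨p, Nat.pos_of_ne_zero hp, h x⟩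

theorem Simp.finite_of_finite {ρ : Γ →* AddMonoid.End M} (h : Simp ρ) [Finite Γ] {p : ℕ}
    (hp : p ≠ 0) (hpM : ∀ m : M, p • m = 0) : Finite M := by
  obtain ⟨m, hm⟩ := @exists_ne M h.1 0
  refine finite_of_exponent hp hpM (S := {x | ∃ g, ∃ s ∈ ({m} : Set M), x = ρ g s}) ?_
    (h.orb_eq_top hm)
  refine (Set.finite_range fun g => ρ g m).subset ?_
  rintro _ ⟨g, s, hs, rfl⟩
  exact ⟨g, by rw [Set.mem_singleton_iff.1 hs]⟩

/-- Simple modules over a polycyclic group have prime characteristic. -/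
theorem Simp.exists_prime (hΓ : IsPC Γ) {ρ : Γ →* AddMonoid.End M} (h : Simp ρ) :
    ∃ p : ℕ, p.Prime ∧ ∀ m : M, p • m = 0 := by
  by_contra hcon
  push Not at hcon
  -- otherwise `M` is divisible and torsion-free
  have hdiv : ∀ p : ℕ, p.Prime → ∀ m : M, ∃ m', m = p • m' := by
    intro p hp m
    rcases h.2 (nsmulAddMonoidHom (α := M) p).range (by
      rintro g _ ⟨n, rfl⟩
      exact ⟨ρ g n, by simp⟩) with h' | h'
    · obtain ⟨x, hx⟩ := hcon p hp
      have : p • x ∈ (nsmulAddMonoidHom (α := M) p).range := ⟨x, rfl⟩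
      rw [h'] at this
      exact absurd this hx
    · have : m ∈ (nsmulAddMonoidHom (α := M) p).range := by rw [h']; trivial
      obtain ⟨x, hx⟩ := this
      exact ⟨x, hx.symm⟩
  have htf : ∀ p : ℕ, p.Prime → ∀ m : M, p • m = 0 → m = 0 := by
    intro p hp m hm
    rcases h.2 (nsmulAddMonoidHom (α := M) p).ker (by
      intro g n hn
      have hn : p • n = 0 := hn
      change p • ρ g n = 0
      rw [← map_nsmul, hn, map_zero]) with h' | h'
    · have : m ∈ (nsmulAddMonoidHom (α := M) p).ker := hm
      rwa [h'] at this
    · obtain ⟨x, hx⟩ := hcon p hp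
      have : x ∈ (nsmulAddMonoidHom (α := M) p).ker := by rw [h']; trivial
      exact absurd this hx
  have htf' : ∀ n : ℕ, n ≠ 0 → ∀ m : M, n • m = 0 → m = 0 := by
    intro n
    induction n using Nat.recOnMul with
    | zero => intro h0; exact absurd rfl h0
    | one => intro _ m hm; simpa using hm
    | prime p hp => exact fun _ => htf p hp
    | mul a b ha hb =>
      intro hab m hm
      rw [mul_smul] at hm
      exact hb (right_ne_zero_of_mul hab) _ (ha (left_ne_zero_of_mul hab) _ hm)
  obtain ⟨m, hm⟩ := @exists_ne M h.1 0
  let : MulSemiringAction Γ ℤ :=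
    { smul := fun _ n => n
      one_smul := fun _ => rfl
      mul_smul := fun _ _ _ => rfl
      smul_zero := fun _ => rfl
      smul_add := fun _ _ _ => rfl
      smul_one := fun _ => rfl
      smul_mul := fun _ _ _ => rfl }
  let : DistribMulAction Γ M := DistribMulAction.compHom M ρ
  have hskew : SkewModule Γ ℤ M := ⟨fun g d x => map_zsmul (ρ g) d x⟩
  obtain ⟨l, hl, hQ⟩ := exists_torsion_or (Γ := Γ) (D := ℤ) (M := M) hΓ {m} (Set.finite_singleton m)
    (by
      rw [eq_top_iff]
      intro x _
      have hx : x ∈ orb ρ {m} := by rw [h.orb_eq_top hm]; trivial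
      have : orb ρ {m} ≤ (gen ℤ (⊤ : Subgroup Γ) {m}).toAddSubgroup := by
        refine (AddSubgroup.closure_le _).2 ?_
        rintro _ ⟨g, s, hs, rfl⟩
        exact Submodule.subset_span ⟨g, trivial, s, hs, rfl⟩
      exact this hx)
  obtain ⟨p, hpl, hp⟩ := Nat.exists_infinite_primes (l.natAbs + 1)
  have hpl' : ¬ (p : ℤ) ∣ l := by
    intro hd
    have := Int.natAbs_dvd_natAbs.2 hd
    have := Nat.le_of_dvd (Int.natAbs_pos.2 hl) this
    simp at this
    omega
  have hpZ : Prime (p : ℤ) := Nat.prime_iff_prime_int.1 hp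
  have hgood : Good Γ (Ideal.span {(p : ℤ)}) l := by
    refine ⟨fun _ q hq => hq, ?_, ?_⟩
    · rw [Ne, Ideal.span_singleton_eq_top]; exact hpZ.not_isUnit
    · have : IsCoprime (p : ℤ) l := (Irreducible.coprime_iff_not_dvd hpZ.irreducible).2 hpl'
      obtain ⟨a, b, hab⟩ := this
      exact ⟨b, Ideal.mem_span_singleton.2 ⟨-a, by linear_combination hab⟩⟩
  obtain ⟨s, hs, hsm⟩ := hQ _ hgood (by
    rw [eq_top_iff]
    intro x _
    obtain ⟨y, rfl⟩ := hdiv p hp x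
    have := Submodule.smul_mem_smul (Ideal.mem_span_singleton_self (p : ℤ))
      (Submodule.mem_top : y ∈ (⊤ : Submodule ℤ M))
    simpa using this) m
  refine hm (htf' s.natAbs (Int.natAbs_ne_zero.2 hs) m ?_)
  rcases Int.natAbs_eq s with h' | h' <;> rw [h'] at hsm
  · simpa using hsm
  · simpa using hsm

/-- A simple module over `Γ` is finite if its simple quotients over a finite-index subgroup `K` are:
such a quotient `M / L` exists, and the finitely many translates of `L` under coset representatives
intersect in 0. -/
theorem Simp.finite_of_finite_index {ρ : Γ →* AddMonoid.End M} (h : Simp ρ) (K : Subgroup Γ)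
    (hK : K.index ≠ 0)
    (hfin : ∀ (L : AddSubgroup M) (τ : K →* AddMonoid.End (M ⧸ L)), Simp τ → Finite (M ⧸ L)) :
    Finite M := by
  obtain ⟨m, hm⟩ := @exists_ne M h.1 0
  obtain ⟨T, hT, hcov⟩ : ∃ T : Set Γ, T.Finite ∧ ∀ g : Γ, ∃ k ∈ K, ∃ t ∈ T, g = k * t := by
    have : K.FiniteIndex := ⟨hK⟩
    have : Finite (Γ ⧸ K) := inferInstance
    refine ⟨Set.range fun q : Γ ⧸ K => q.out⁻¹, Set.finite_range _, fun g => ?_⟩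
    have h1 : ((g⁻¹ : Γ) : Γ ⧸ K).out⁻¹ * g⁻¹ ∈ K := by
      rw [← QuotientGroup.eq]; exact Quotient.out_eq' _
    exact ⟨_, inv_mem h1, _, ⟨((g⁻¹ : Γ) : Γ ⧸ K), rfl⟩, by group⟩
  obtain ⟨L, -, hLtop, hL, hsimp⟩ := exists_simp_quotient (ρ.comp K.subtype)
    ((fun t => ρ t m) '' T) (hT.image _) ⊥ (by
      rw [sup_bot_eq, eq_top_iff, ← h.orb_eq_top hm]
      refine (AddSubgroup.closure_le _).2 ?_
      rintro _ ⟨g, s, hs, rfl⟩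
      rw [Set.mem_singleton_iff.1 hs]
      obtain ⟨k, hk, t, ht, rfl⟩ := hcov g
      exact AddSubgroup.subset_closure ⟨⟨k, hk⟩, _, ⟨t, ht, rfl⟩, rep_mul ρ k t m⟩) (by
      intro g n hn
      rw [AddSubgroup.mem_bot] at hn ⊢
      rw [hn, map_zero]) (by
      intro hbt
      have : m ∈ (⊥ : AddSubgroup M) := by rw [hbt]; trivial
      exact hm this)
  have hML := hfin L _ hsimp
  have : Finite T := hT
  let I : AddSubgroup M := ⨅ t : T, L.comap (ρ t)
  have hI : ∀ x, x ∈ I ↔ ∀ g, ρ g x ∈ L := by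
    intro x
    simp only [I, AddSubgroup.mem_iInf]
    constructor
    · intro hx g
      obtain ⟨k, hk, t, ht, rfl⟩ := hcov g
      rw [rep_mul]
      exact hL ⟨k, hk⟩ _ (hx ⟨t, ht⟩)
    · intro hx t; exact hx t
  rcases h.2 I (by
    intro g x hx
    rw [hI] at hx ⊢
    intro g'
    rw [← rep_mul]
    exact hx _) with h' | h'
  · have hLi : L.index ≠ 0 := (AddSubgroup.finiteIndex_of_finite_quotient (H := L)).index_ne_zero
    have h1 : I.index ≠ 0 := AddSubgroup.index_iInf_ne_zero fun t => by
      have hs : Function.Surjective (ρ t) := fun x => ⟨_, rep_self_inv ρ t x⟩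
      rw [AddSubgroup.index_comap_of_surjective _ hs]
      exact hLi
    rw [h', AddSubgroup.index_bot] at h1
    exact Nat.finite_of_card_ne_zero h1
  · exfalso
    apply hLtop
    rw [eq_top_iff]
    intro x _
    have : x ∈ I := by rw [h']; trivial
    have := (hI x).1 this 1
    rwa [rep_one] at this
end Rep

end

/-! ### Primes annihilating elements of a simple module -/

section
set_option linter.unusedSectionVars false

section Ann
variable {Γ D M : Type*} [Group Γ] [CommRing D] [MulSemiringAction Γ D] [AddCommGroup M]
    [Module D M] [DistribMulAction Γ M] [SkewModule Γ D M]

/-- A maximal annihilator of a nonzero element is prime. -/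
theorem exists_max_ann [IsNoetherianRing D] [Nontrivial M] :
    ∃ (f : M) (P : Ideal D), f ≠ 0 ∧ P.IsPrime ∧ (∀ r, r • f = 0 ↔ r ∈ P) ∧
      ∀ x : M, x ≠ 0 → (∀ r ∈ P, r • x = 0) → ∀ r : D, r • x = 0 → r ∈ P := by
  obtain ⟨m, hm⟩ := exists_ne (0 : M)
  let ann : M → Ideal D := fun x => LinearMap.ker (LinearMap.toSpanSingleton D M x)
  have hann : ∀ x r, r ∈ ann x ↔ r • x = 0 := fun x r => by simp [ann]
  obtain ⟨P, ⟨f, hf, rfl⟩, hmax⟩ := set_has_maximal_iff_noetherian.2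
    (inferInstance : IsNoetherian D D) {I | ∃ x : M, x ≠ 0 ∧ ann x = I} ⟨_, m, hm, rfl⟩
  have hmax' : ∀ x : M, x ≠ 0 → (∀ r ∈ ann f, r • x = 0) → ∀ r : D, r • x = 0 → r ∈ ann f := by
    intro x hx h r hr
    by_contra hr'
    refine hmax (ann x) ⟨x, hx, rfl⟩ (lt_of_le_of_ne (fun r hr => (hann x r).2 (h r hr)) ?_)
    intro heq
    exact hr' (heq ▸ (hann x r).2 hr)
  refine ⟨f, ann f, hf, ?_, fun r => (hann f r).symm, hmax'⟩
  refine Ideal.isPrime_iff.2 ⟨?_, ?_⟩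
  · rw [Ne, Ideal.eq_top_iff_one, hann, one_smul]; exact hf
  · intro a b hab
    by_cases hb : b • f = 0
    · right; exact (hann f b).2 hb
    · left
      refine hmax' _ hb (fun r hr => ?_) a ?_
      · rw [smul_comm, (hann f r).1 hr, smul_zero]
      · rw [smul_smul]; exact (hann f _).1 hab

/-- The stabilizer of an ideal. -/
def stab (Γ : Type*) {D : Type*} [Group Γ] [CommRing D] [MulSemiringAction Γ D] (P : Ideal D) :
    Subgroup Γ where
  carrier := {g | ∀ y, y ∈ P ↔ g • y ∈ P}
  one_mem' := by intro y; rw [one_smul]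
  mul_mem' := by
    intro a b ha hb y
    rw [hb y, ha (b • y), mul_smul]
  inv_mem' := by
    intro a ha y
    rw [ha (a⁻¹ • y), smul_inv_smul]

theorem mem_stab {P : Ideal D} {g : Γ} : g ∈ stab Γ P ↔ ∀ y, y ∈ P ↔ g • y ∈ P := Iff.rfl

/-- If `M` is simple, the part of `M` generated by `f` under the stabilizer of `P = Ann f`
is simple. -/
theorem gen_stab_simple (hsimp : ∀ N : Submodule D M, Inv (⊤ : Subgroup Γ) N → N = ⊥ ∨ N = ⊤)
    {f : M} {P : Ideal D} (hP : P.IsPrime) (hPf : ∀ r, r • f = 0 ↔ r ∈ P)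
    (hmax : ∀ x : M, x ≠ 0 → (∀ r ∈ P, r • x = 0) → ∀ r : D, r • x = 0 → r ∈ P)
    (L : Submodule D M) (hL : Inv (stab Γ P) L) (hLW : L ≤ gen D (stab Γ P) {f}) (hL0 : L ≠ ⊥) :
    L = gen D (stab Γ P) {f} := by
  have hf : f ≠ 0 := by
    rintro rfl
    exact hP.ne_top ((Ideal.eq_top_iff_one P).2 ((hPf 1).1 (smul_zero _)))
  -- a translate of `P` inside `P` is equal to `P`
  have hstab : ∀ g : Γ, (∀ y ∈ P, g • y ∈ P) → g ∈ stab Γ P := by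
    intro g hg y
    refine ⟨hg y, fun hy => ?_⟩
    refine hmax (g⁻¹ • f) ?_ ?_ y ?_
    · rw [Ne, smul_eq_zero_iff_eq]; exact hf
    · intro r hr
      have := (hPf _).2 (hg r hr)
      have h2 := congrArg (g⁻¹ • ·) this
      simpa [SkewModule.smul_smul'] using h2
    · have h2 := congrArg (g⁻¹ • ·) ((hPf _).2 hy)
      simpa [SkewModule.smul_smul'] using h2
  have hWP : ∀ x ∈ gen D (stab Γ P) {f}, ∀ r ∈ P, r • x = 0 := by
    intro x hx r hr
    have : gen D (stab Γ P) {f} ≤ LinearMap.ker (LinearMap.lsmul D M r) := by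
      refine Submodule.span_le.2 ?_
      rintro _ ⟨g, hg, s, hs, rfl⟩
      rw [Set.mem_singleton_iff.1 hs]
      change r • g • f = 0
      have h1 : g⁻¹ • r ∈ P := (mem_stab.1 (inv_mem hg) r).1 hr
      have h2 := congrArg (g • ·) ((hPf _).2 h1)
      simpa [SkewModule.smul_smul'] using h2
    exact this hx
  refine le_antisymm hLW (gen_le hL ?_)
  intro s hs
  rw [Set.mem_singleton_iff.1 hs]
  let T : Submodule D M := ⨆ g : Γ, tr g L
  have hT : Inv (⊤ : Subgroup Γ) T := by
    intro g _ m hm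
    have : T ≤ tr g⁻¹ T := by
      refine iSup_le fun h => ?_
      have h1 : tr (g * h) L ≤ T := le_iSup (fun g : Γ => tr g L) _
      rwa [← tr_tr, tr_le_iff] at h1
    have := this hm
    rwa [mem_tr, inv_inv] at this
  have hTtop : T = ⊤ := by
    refine (hsimp T hT).resolve_left fun h => hL0 ?_
    rw [eq_bot_iff, ← h]
    calc L = tr (1 : Γ) L := (tr_one L).symm
      _ ≤ T := le_iSup (fun g : Γ => tr g L) 1
  have hprop : ∀ x ∈ T, ∃ l ∈ L, ∃ r, r ∉ P ∧ r • (x - l) = 0 := by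
    intro x hx
    induction hx using Submodule.iSup_induction' with
    | mem g x hx =>
      by_cases hg : g ∈ stab Γ P
      · refine ⟨x, ?_, 1, fun h => hP.ne_top ((Ideal.eq_top_iff_one P).2 h), by simp⟩
        rwa [hL.tr_eq hg] at hx
      · obtain ⟨y, hy, hgy⟩ : ∃ y ∈ P, g • y ∉ P := by
          by_contra h
          push Not at h
          exact hg (hstab g h)
        refine ⟨0, zero_mem _, g • y, hgy, ?_⟩
        rw [sub_zero]
        have h2 := congrArg (g • ·) (hWP _ (hLW (mem_tr.1 hx)) y hy)
        simpa [SkewModule.smul_smul'] using h2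
    | zero => exact ⟨0, zero_mem _, 1, fun h => hP.ne_top ((Ideal.eq_top_iff_one P).2 h), by simp⟩
    | add x y _ _ hx hy =>
      obtain ⟨l, hl, r, hr, h⟩ := hx
      obtain ⟨l', hl', r', hr', h'⟩ := hy
      refine ⟨l + l', add_mem hl hl', r * r', fun h => (hP.mem_or_mem h).elim hr hr', ?_⟩
      have : x + y - (l + l') = (x - l) + (y - l') := by abel
      rw [this, smul_add, mul_smul, mul_smul, smul_comm, h, h']
      simp
  obtain ⟨l, hl, r, hr, h⟩ := hprop f (by rw [hTtop]; trivial)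
  by_cases hfl : f - l = 0
  · rw [sub_eq_zero.1 hfl]; exact hl
  · exact absurd (hmax _ hfl (hWP _ (sub_mem (subset_gen _ _ rfl) (hLW hl))) r h) hr
end Ann

section Core
open MonoidAlgebra

/-- The action on the group algebra induced by an action on the group. -/
@[reducible] noncomputable def actR (p : ℕ) {Γ A : Type*} [Group Γ] [CommGroup A] (σ : Γ →* MulAut A) :
    MulSemiringAction Γ (MonoidAlgebra (ZMod p) A) where
  smul g y := mapDomainRingHom (ZMod p) (σ g).toMonoidHom y
  one_smul y := by
    change mapDomainRingHom (ZMod p) (σ 1).toMonoidHom y = y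
    rw [map_one]
    have : mapDomainRingHom (ZMod p) (MulEquiv.toMonoidHom (1 : MulAut A)) =
        RingHom.id (MonoidAlgebra (ZMod p) A) :=
      MonoidAlgebra.ringHom_ext (fun r => by simp) (fun a => by simp)
    rw [this]; rfl
  mul_smul g h y := by
    change mapDomainRingHom (ZMod p) (σ (g * h)).toMonoidHom y =
      mapDomainRingHom (ZMod p) (σ g).toMonoidHom (mapDomainRingHom (ZMod p) (σ h).toMonoidHom y)
    have : mapDomainRingHom (ZMod p) (σ (g * h)).toMonoidHom =
        (mapDomainRingHom (ZMod p) (σ g).toMonoidHom).comp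
          (mapDomainRingHom (ZMod p) (σ h).toMonoidHom) :=
      MonoidAlgebra.ringHom_ext (fun r => by simp) (fun a => by simp)
    rw [this]; rfl
  smul_zero g := map_zero _
  smul_add g := map_add _
  smul_one g := map_one _
  smul_mul g := map_mul _

variable {Γ A M : Type*} [Group Γ] [CommGroup A] [AddCommGroup M]

theorem SI.restrict {σ : Γ →* MulAut A} (hσ : SI σ) {K : Subgroup Γ} (hK : K.index ≠ 0) :
    SI (σ.comp K.subtype) := by
  intro L hL B hB
  refine hσ (L.map K.subtype) ?_ B ?_
  · rw [Subgroup.index_map_subtype]; exact mul_ne_zero hL hK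
  · rintro _ ⟨k, hk, rfl⟩ b hb
    exact hB k hk b hb

/-- Let `A` be finitely generated torsion-free abelian, mapped by `j` onto a normal subgroup of `Γ`, on
which `Γ` acts strongly irreducibly and, under `φ`, by multiplication by scalars. Then some power of
`A` acts trivially on the simple module. `IH` supplies finiteness for subgroups of infinite index. -/
theorem core (p : ℕ) [Fact p.Prime] [Group.FG A] [IsMulTorsionFree A] [Nontrivial A]
    (hΓ : IsPC Γ) (σ : Γ →* MulAut A) (j : A →* Γ)
    (hj : ∀ g a, j (σ g a) = g * j a * g⁻¹) (hja : ∀ a b, σ (j a) b = b) (hσ : SI σ)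
    (φ : Additive A →+ AlgebraicClosure ℚ) (hφ : Function.Injective φ)
    (hc : ∀ g, ∃ c, ∀ a : A, φ (Additive.ofMul (σ g a)) = c * φ (Additive.ofMul a))
    (ρ : Γ →* AddMonoid.End M) (hρ : Simp ρ) [Module (ZMod p) M]
    (IH : ∀ K : Subgroup Γ, K.index = 0 → ∀ (W : AddSubgroup M) (τ : K →* AddMonoid.End W),
      Simp τ → Finite W) :
    ∃ n ≠ 0, ∀ a x, ρ (j (a ^ n)) x = x := by
  classical
  -- it suffices to fix one nonzero vector
  suffices h : ∃ n ≠ 0, ∃ f : M, f ≠ 0 ∧ ∀ a, ρ (j (a ^ n)) f = f by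
    obtain ⟨n, hn, f, hf, hfix⟩ := h
    refine ⟨n, hn, ?_⟩
    let N : AddSubgroup M :=
      { carrier := {x | ∀ a, ρ (j (a ^ n)) x = x}
        zero_mem' := fun a => map_zero _
        add_mem' := fun {x y} hx hy a => by rw [map_add, hx a, hy a]
        neg_mem' := fun {x} hx a => by rw [map_neg, hx a] }
    have hN : ∀ x, x ∈ N ↔ ∀ a, ρ (j (a ^ n)) x = x := fun _ => Iff.rfl
    have := (hρ.2 N (by
      intro g x hx
      rw [hN] at hx ⊢
      intro a
      have h1 := hx (σ g⁻¹ a)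
      rw [← map_pow, hj, inv_inv, rep_mul, rep_mul] at h1
      have h2 := congrArg (ρ g) h1
      rwa [rep_self_inv] at h2)).resolve_left (fun h => hf (by
        have : f ∈ N := (hN f).2 hfix
        rwa [h] at this))
    intro a x
    exact (hN x).1 (this ▸ AddSubgroup.mem_top x) a
  have hMn : Nontrivial M := hρ.1
  let Z : Γ → Module.End (ZMod p) M := fun g =>
    { toFun := fun x => ρ g x
      map_add' := map_add (ρ g)
      map_smul' := fun r x => ZMod.map_smul (ρ g) r x }
  have hZ : ∀ (g : Γ) (x : M), Z g x = ρ g x := fun _ _ => rfl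
  let χ : A →* Module.End (ZMod p) M :=
    { toFun := fun a => Z (j a)
      map_one' := by
        refine LinearMap.ext fun x => ?_
        rw [Module.End.one_apply, hZ, map_one, rep_one]
      map_mul' := fun a b => by
        refine LinearMap.ext fun x => ?_
        rw [Module.End.mul_apply, hZ, hZ, hZ, map_mul, rep_mul] }
  let _ : Module (MonoidAlgebra (ZMod p) A) M :=
    Module.compHom M (MonoidAlgebra.lift (ZMod p) (Module.End (ZMod p) M) A χ).toRingHom
  have hsingle : ∀ (a : A) (r : ZMod p) (x : M),
      (single a r : MonoidAlgebra (ZMod p) A) • x = r • ρ (j a) x := by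
    intro a r x
    change (MonoidAlgebra.lift (ZMod p) (Module.End (ZMod p) M) A χ (single a r)) x = _
    rw [MonoidAlgebra.lift_single]
    rfl
  let _ := actR p σ
  let _ : DistribMulAction Γ M := DistribMulAction.compHom M ρ
  have hgs : ∀ (g : Γ) (x : M), g • x = ρ g x := fun _ _ => rfl
  have hskew : SkewModule Γ (MonoidAlgebra (ZMod p) A) M := by
    refine ⟨fun g d x => ?_⟩
    induction d using MonoidAlgebra.induction_linear with
    | zero => simp
    | add a b ha hb => rw [add_smul, smul_add, smul_add, add_smul, ha, hb]
    | single a r =>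
      have h1 : g • (single a r : MonoidAlgebra (ZMod p) A) = single (σ g a) r := by
        change mapDomainRingHom (ZMod p) (σ g).toMonoidHom (single a r) = _
        simp
      rw [h1, hsingle, hsingle, hj, rep_mul, rep_mul, hgs, hgs, rep_inv_self]
      have h2 : ∀ y : M, ρ g (r • y) = r • ρ g y :=
        fun y => ZMod.map_smul (ρ g) r y
      exact h2 _
  have hft : Algebra.FiniteType (ZMod p) (MonoidAlgebra (ZMod p) A) := inferInstance
  have hnoe : IsNoetherianRing (MonoidAlgebra (ZMod p) A) :=
    Algebra.FiniteType.isNoetherianRing (ZMod p) _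
  have hdom : IsDomain (MonoidAlgebra (ZMod p) A) := inferInstance
  have hsimp : ∀ N : Submodule (MonoidAlgebra (ZMod p) A) M,
      Inv (⊤ : Subgroup Γ) N → N = ⊥ ∨ N = ⊤ := by
    intro N hN
    rcases hρ.2 N.toAddSubgroup (fun g n hn => hN g trivial n hn) with h | h
    · left
      rw [eq_bot_iff]
      intro x hx
      have : x ∈ N.toAddSubgroup := hx
      rwa [h] at this
    · right
      rw [eq_top_iff]
      intro x _
      have : x ∈ N.toAddSubgroup := by rw [h]; trivial
      exact this
  obtain ⟨f, P, hf, hP, hPf, hmax⟩ :=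
    exists_max_ann (D := MonoidAlgebra (ZMod p) A) (M := M)
  -- `P = 0` is impossible: for a good ideal `Q`, `Q M = 0` contradicts `Ann f = 0` and `Q M = M`
  -- makes `M` torsion
  by_cases hP0 : P = ⊥
  · exfalso
    subst hP0
    obtain ⟨l, hl, hlQ⟩ := exists_torsion_or (D := MonoidAlgebra (ZMod p) A) (M := M) hΓ {f}
      (Set.finite_singleton f) ((hsimp _ (inv_gen _ _)).resolve_left fun h => hf (by
        have : f ∈ gen (MonoidAlgebra (ZMod p) A) (⊤ : Subgroup Γ) {f} := subset_gen _ _ rfl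
        rwa [h] at this))
    obtain ⟨q, hqp, hqndvd, ψ, hψ, hψc⟩ := exists_hom_padic (K := (⊤ : Subgroup Γ)) σ φ hφ
      (fun g _ => hc g) p (Fact.out : p.Prime).ne_zero
    obtain ⟨Q, hQ0, hQ1, hQu, hQi⟩ := exists_good_ideal p σ hqndvd ψ hψ
      (fun g => hψc g trivial) l hl
    have hgood : Good Γ Q l := ⟨hQi, hQ1, hQu⟩
    have hQinv : Inv (⊤ : Subgroup Γ) (Q • (⊤ : Submodule (MonoidAlgebra (ZMod p) A) M)) := by
      intro g _ m hm
      induction hm using Submodule.smul_induction_on' with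
      | smul r hr n hn =>
        rw [SkewModule.smul_smul']
        exact Submodule.smul_mem_smul (hQi g r hr) trivial
      | add x hx y hy hx' hy' => rw [smul_add]; exact add_mem hx' hy'
    rcases hsimp _ hQinv with h | h
    · obtain ⟨y, hy, hy0⟩ := Submodule.exists_mem_ne_zero_of_ne_bot hQ0
      have h1 : y • f ∈ Q • (⊤ : Submodule (MonoidAlgebra (ZMod p) A) M) :=
        Submodule.smul_mem_smul hy trivial
      rw [h, Submodule.mem_bot] at h1
      exact hy0 ((hPf y).1 h1)
    · obtain ⟨s, hs, hsf⟩ := hlQ Q hgood h f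
      exact hs ((hPf s).1 hsf)
  -- either `P` has infinitely many translates, or Bergman's theorem applies to its stabilizer
  by_cases hK : (stab Γ P).index = 0
  · -- the submodule generated by `f` under the stabilizer of `P` is simple, hence finite
    have hAK : ∀ a, j a ∈ stab Γ P := by
      intro a y
      have : j a • y = y := by
        change mapDomainRingHom (ZMod p) (σ (j a)).toMonoidHom y = y
        have : mapDomainRingHom (ZMod p) (σ (j a)).toMonoidHom =
            RingHom.id (MonoidAlgebra (ZMod p) A) :=
          MonoidAlgebra.ringHom_ext (fun r => by simp) (fun b => by simp [hja])
        rw [this]; rfl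
      rw [this]
    let W := gen (MonoidAlgebra (ZMod p) A) (stab Γ P) {f}
    have hfW : f ∈ W := subset_gen _ _ rfl
    have hWinv : IInv (ρ.comp (stab Γ P).subtype) W.toAddSubgroup :=
      fun g n hn => inv_gen (stab Γ P) {f} g g.2 n hn
    have hWs : Simp (resRep (ρ.comp (stab Γ P).subtype) W.toAddSubgroup hWinv) := by
      refine ⟨⟨⟨⟨f, hfW⟩, 0, fun h => hf (congrArg Subtype.val h)⟩⟩, fun N hN => ?_⟩
      have hN1 : ∀ x (hx : x ∈ W), (⟨x, hx⟩ : W.toAddSubgroup) ∈ N →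
          ∀ g (hg : g ∈ stab Γ P), ∃ hx' : ρ g x ∈ W, (⟨ρ g x, hx'⟩ : W.toAddSubgroup) ∈ N :=
        fun x hx hxN g hg => ⟨_, hN ⟨g, hg⟩ _ hxN⟩
      let L : Submodule (MonoidAlgebra (ZMod p) A) M :=
        { N.map W.toAddSubgroup.subtype with
          smul_mem' := by
            intro d x hx
            obtain ⟨⟨x, hxW⟩, hxN, rfl⟩ := hx
            change d • x ∈ N.map W.toAddSubgroup.subtype
            induction d using MonoidAlgebra.induction_linear with
            | zero => rw [zero_smul]; exact zero_mem _
            | add a b ha hb => rw [add_smul]; exact add_mem ha hb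
            | single a r =>
              rw [hsingle]
              obtain ⟨h1, h2⟩ := hN1 x hxW hxN _ (hAK a)
              have h3 : ρ (j a) x ∈ N.map W.toAddSubgroup.subtype := ⟨_, h2, rfl⟩
              have h4 : r • ρ (j a) x = r.val • ρ (j a) x := by
                rw [← Nat.cast_smul_eq_nsmul (ZMod p), ZMod.natCast_zmod_val]
              rw [h4]
              exact nsmul_mem h3 _ }
      have hLN : ∀ x, x ∈ L ↔ ∃ hx : x ∈ W, (⟨x, hx⟩ : W.toAddSubgroup) ∈ N := by
        intro x
        constructor
        · rintro ⟨⟨x, hxW⟩, hxN, rfl⟩; exact ⟨hxW, hxN⟩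
        · rintro ⟨hxW, hxN⟩; exact ⟨⟨x, hxW⟩, hxN, rfl⟩
      by_cases hL0 : L = ⊥
      · left
        rw [eq_bot_iff]
        rintro ⟨x, hx⟩ hxN
        have : x ∈ L := (hLN x).2 ⟨hx, hxN⟩
        rw [hL0, Submodule.mem_bot] at this
        exact Subtype.ext this
      · right
        have := gen_stab_simple hsimp hP hPf hmax L (fun g hg m hm => by
          obtain ⟨h1, h2⟩ := (hLN m).1 hm
          exact (hLN _).2 (hN1 m h1 h2 g hg)) (fun x hx => ((hLN x).1 hx).1) hL0
        rw [eq_top_iff]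
        rintro ⟨x, hx⟩ _
        have hx' : x ∈ L := by rw [this]; exact hx
        exact ((hLN x).1 hx').2
    have hWfin : Finite W.toAddSubgroup := IH _ hK _ _ hWs
    let St : Subgroup A :=
      { carrier := {a | ρ (j a) f = f}
        one_mem' := by simp
        mul_mem' := by
          intro a b ha hb
          simp only [Set.mem_ofPred_eq] at *
          rw [map_mul, rep_mul, hb, ha]
        inv_mem' := by
          intro a ha
          simp only [Set.mem_ofPred_eq] at *
          rw [map_inv]
          conv_lhs => rw [← ha]
          rw [rep_inv_self] }
    have hSt : ∀ a, a ∈ St ↔ ρ (j a) f = f := fun _ => Iff.rfl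
    have : Finite (A ⧸ St) := by
      refine Finite.of_injective (fun q : A ⧸ St =>
        (⟨ρ (j q.out) f, hWinv ⟨_, hAK _⟩ f hfW⟩ : W.toAddSubgroup)) ?_
      intro q q' h
      have h1 : ρ (j q.out) f = ρ (j q'.out) f := congrArg Subtype.val h
      rw [← q.out_eq', ← q'.out_eq']
      refine QuotientGroup.eq.2 ((hSt _).2 ?_)
      rw [map_mul, rep_mul, ← h1, map_inv, rep_inv_self]
    exact ⟨St.index, (Subgroup.finiteIndex_of_finite_quotient (H := St)).index_ne_zero, f, hf,
      fun a => (hSt _).1 (St.pow_index_mem a)⟩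
  · obtain ⟨n, hn, h⟩ := bergman p (σ.comp (stab Γ P).subtype) (hσ.restrict hK) P hP hP0
      (fun g y hy => (mem_stab.1 g.2 y).1 hy)
    refine ⟨n, hn, f, hf, fun a => ?_⟩
    have := (hPf _).2 (h a)
    rw [sub_smul, one_smul, hsingle, one_smul, sub_eq_zero] at this
    exact this
end Core

end

/-! ### Roseblade's theorem -/

section
universe u v w

/-- Finiteness of simple modules for all polycyclic groups of Hirsch length at most `n`. -/
def FinSimp (n : ℕ) : Prop :=
  ∀ (Γ : Type u) [Group Γ], IsPC Γ → HS n (⊤ : Subgroup Γ) → ∀ (M : Type v) [AddCommGroup M]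
    (ρ : Γ →* AddMonoid.End M), Simp ρ → Finite M

section Stages
variable {Γ : Type u} {A : Type w} {M : Type v} [Group Γ] [CommGroup A] [AddCommGroup M]
  [Group.FG A] [IsMulTorsionFree A] [Nontrivial A]

/-- A power of `A` acts trivially on `M`, and the induction hypothesis applies to the quotient by it. -/
theorem finite_of_eigen {n : ℕ} (IH : FinSimp.{u, v} n) (hΓ : IsPC Γ)
    (hn : HS (n + 1) (⊤ : Subgroup Γ)) (σ : Γ →* MulAut A) (j : A →* Γ)
    (hji : Function.Injective j)
    (hj : ∀ g a, j (σ g a) = g * j a * g⁻¹) (hja : ∀ a b, σ (j a) b = b) (hσ : SI σ)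
    (φ : Additive A →+ AlgebraicClosure ℚ) (hφ : Function.Injective φ)
    (hc : ∀ g, ∃ c, ∀ a : A, φ (Additive.ofMul (σ g a)) = c * φ (Additive.ofMul a))
    (ρ : Γ →* AddMonoid.End M) (hρ : Simp ρ) : Finite M := by
  obtain ⟨p, hp, hpM⟩ := hρ.exists_prime hΓ
  have : Fact p.Prime := ⟨hp⟩
  obtain ⟨m, hm, hfix⟩ := @core Γ A M _ _ _ p _ _ _ _ hΓ σ j hj hja hσ φ hφ hc ρ hρ
    (AddCommGroup.zmodModule hpM) (fun K hK W τ hτ =>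
      IH K (hΓ.subgroup K) (hn K le_top (by rwa [Subgroup.relIndex_top_right])).top_subgroup W τ hτ)
  let N : Subgroup Γ := (j.comp (powMonoidHom m)).range
  have hNn : N.Normal := by
    refine ⟨?_⟩
    rintro _ ⟨a, rfl⟩ g
    exact ⟨σ g a, by simp [hj]⟩
  have hNk : N ≤ ρ.ker := by
    rintro _ ⟨a, rfl⟩
    rw [MonoidHom.mem_ker]
    exact AddMonoidHom.ext fun x => hfix a x
  have hNinf : Infinite (((QuotientGroup.mk' N).ker ⊓ ⊤ : Subgroup Γ)) := by
    rw [QuotientGroup.ker_mk', inf_top_eq]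
    have hAinf : Infinite A := by
      by_contra hf
      have : Finite A := not_infinite_iff_finite.1 hf
      obtain ⟨a, ha⟩ := exists_ne (1 : A)
      exact ha ((pow_eq_one_iff_left Nat.card_pos.ne').1 (pow_card_eq_one' (x := a)))
    have hinj : Function.Injective (j.comp (powMonoidHom m)) :=
      hji.comp (pow_left_injective hm)
    exact Infinite.of_injective (fun a : A => (⟨_, a, rfl⟩ : N))
      fun x y h => hinj (congrArg Subtype.val h)
  have hHS := hn.map_of_infinite_ker (QuotientGroup.mk' N) hNinf
  rw [Subgroup.map_top_of_surjective _ (QuotientGroup.mk'_surjective N)] at hHS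
  refine IH (Γ ⧸ N) (hΓ.of_surjective _ (QuotientGroup.mk'_surjective N)) hHS M
    (QuotientGroup.lift N ρ hNk) ⟨hρ.1, fun L hL => hρ.2 L fun g x hx => hL (g : Γ ⧸ N) x hx⟩

/-- The action is by scalars on a subgroup of finite index, to which one passes. -/
theorem finite_of_SI {n : ℕ} (IH : FinSimp.{u, v} n) (hΓ : IsPC Γ)
    (hn : HS (n + 1) (⊤ : Subgroup Γ)) (σ : Γ →* MulAut A) (j : A →* Γ)
    (hji : Function.Injective j)
    (hj : ∀ g a, j (σ g a) = g * j a * g⁻¹) (hja : ∀ a b, σ (j a) b = b) (hσ : SI σ)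
    (ρ : Γ →* AddMonoid.End M) (hρ : Simp ρ) : Finite M := by
  obtain ⟨K, hK, φ, hφ, hc⟩ := exists_hom_algClosure hΓ σ hσ
  let E : Subgroup Γ :=
    { carrier := {g | ∃ c, ∀ a : A, φ (Additive.ofMul (σ g a)) = c * φ (Additive.ofMul a)}
      one_mem' := ⟨1, fun a => by simp⟩
      mul_mem' := by
        rintro g h ⟨c, hc⟩ ⟨d, hd⟩
        exact ⟨c * d, fun a => by rw [map_mul, MulAut.mul_apply, hc, hd, mul_assoc]⟩
      inv_mem' := by
        rintro g ⟨c, hc⟩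
        have hc0 : c ≠ 0 := by
          rintro rfl
          obtain ⟨a, ha⟩ := exists_ne (1 : A)
          have h1 := hc a
          rw [zero_mul, map_eq_zero_iff φ hφ] at h1
          have h2 : σ g a = 1 := h1
          exact ha ((map_eq_one_iff _ (σ g).injective).1 h2)
        refine ⟨c⁻¹, fun a => ?_⟩
        have h1 := hc (σ g⁻¹ a)
        rw [← MulAut.mul_apply, ← map_mul, mul_inv_cancel, map_one, MulAut.one_apply] at h1
        rw [h1, inv_mul_cancel_left₀ hc0] }
  have hE : E.index ≠ 0 := fun h => hK (by
    have := Subgroup.index_dvd_of_le (show K ≤ E from fun g hg => hc g hg)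
    rw [h] at this
    exact Nat.eq_zero_of_zero_dvd this)
  have hjE : ∀ a, j a ∈ E := fun a => ⟨1, fun b => by rw [hja, one_mul]⟩
  refine hρ.finite_of_finite_index E hE fun L τ hτ => ?_
  refine finite_of_eigen IH (hΓ.subgroup E) (hn.mono le_top).top_subgroup (σ.comp E.subtype)
    (j.codRestrict E hjE) (fun a b h => hji (congrArg Subtype.val h)) ?_ ?_ (hσ.restrict hE) φ hφ
    (fun g => g.2) τ hτ
  · intro g a; exact Subtype.ext (hj g a)
  · intro a b; exact hja a b
end Stages

/-- The inductive step of Roseblade's theorem: some subgroup of finite index normalizes a plinth. -/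
theorem finSimp_succ {n : ℕ} (IH : FinSimp.{u, v} n) : FinSimp.{u, v} (n + 1) := by
  intro Γ _ hΓ hn M _ ρ hρ
  rcases finite_or_infinite Γ with hfin | hinf
  · obtain ⟨p, hp, hpM⟩ := hρ.exists_prime hΓ
    exact hρ.finite_of_finite hp.ne_zero hpM
  obtain ⟨Γ₀, A₁, hΓ₀, hA, hinv, hle, hstr⟩ := hΓ.exists_plinth
  refine hρ.finite_of_finite_index Γ₀ hΓ₀ fun L τ hτ => ?_
  let A : Subgroup Γ₀ := A₁.subgroupOf Γ₀
  have hAmem : ∀ x : Γ₀, x ∈ A ↔ (x : Γ) ∈ A₁ := fun x => Subgroup.mem_subgroupOf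
  have hAn : A.Normal := ⟨fun a ha g => (hAmem _).2 (hinv g g.2 a ((hAmem _).1 ha))⟩
  let _ : CommGroup A :=
    { (inferInstance : Group A) with
      mul_comm := fun a b => Subtype.ext (Subtype.ext (hA.2.1 _ a.2 _ b.2)) }
  have hnt : Nontrivial A := by
    obtain ⟨a, ha, ha1⟩ := (Subgroup.ne_bot_iff_exists_ne_one).1 hA.1 |>.imp fun a h => (show _ ∧ _ from ⟨a.2, h⟩)
    exact ⟨⟨⟨⟨a, hle ha⟩, ha⟩, 1, fun h => ha1 (Subtype.ext (congrArg (fun z : A => ((z : Γ₀) : Γ)) h))⟩⟩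
  have htf : IsMulTorsionFree A := by
    refine ⟨fun n hn a b hab => ?_⟩
    have hab : a ^ n = b ^ n := hab
    have h1 : (a * b⁻¹) ^ n = 1 := by rw [mul_pow, inv_pow, hab, mul_inv_cancel]
    have h2 := hA.2.2 _ (a * b⁻¹).2 n hn (congrArg (fun z : A => ((z : Γ₀) : Γ)) h1)
    have h3 : a * b⁻¹ = 1 := Subtype.ext (Subtype.ext h2)
    exact mul_inv_eq_one.1 h3
  have hfg : Group.FG A := Group.fg_iff_subgroup_fg _ |>.2 ((hΓ.subgroup Γ₀).2 A)
  have hSI : SI (MulAut.conjNormal : Γ₀ →* MulAut A) := by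
    intro K hK B hB
    have hi : Function.Injective (Γ₀.subtype.comp A.subtype) :=
      Γ₀.subtype_injective.comp A.subtype_injective
    have hrange : (⊤ : Subgroup A).map (Γ₀.subtype.comp A.subtype) = A₁ := by
      ext x
      constructor
      · rintro ⟨a, -, rfl⟩; exact a.2
      · intro hx; exact ⟨⟨⟨x, hle hx⟩, hx⟩, trivial, rfl⟩
    rcases hstr (K.map Γ₀.subtype) (by
        rw [Subgroup.index_map_subtype]; exact mul_ne_zero hK hΓ₀)
      (B.map (Γ₀.subtype.comp A.subtype)) (by
        rintro _ ⟨b, hb, rfl⟩; exact b.2) (by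
        rintro _ ⟨k, hk, rfl⟩ _ ⟨b, hb, rfl⟩
        exact ⟨_, hB k hk b hb, rfl⟩) with h | h
    · left; exact (Subgroup.map_eq_bot_iff_of_injective _ hi).1 h
    · right
      rw [← hrange, Subgroup.relIndex_map_map_of_injective _ _ hi, Subgroup.relIndex_top_right] at h
      exact h
  refine finite_of_SI IH (hΓ.subgroup Γ₀) (hn.mono le_top).top_subgroup
    (MulAut.conjNormal : Γ₀ →* MulAut A) A.subtype A.subtype_injective ?_ ?_ hSI τ hτ
  · intro g a; exact MulAut.conjNormal_apply g a
  · intro a b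
    refine Subtype.ext ?_
    rw [MulAut.conjNormal_apply]
    have : a * b = b * a := mul_comm a b
    have := congrArg (fun z : A => (z : Γ₀)) this
    exact mul_inv_eq_of_eq_mul this

theorem finSimp (n : ℕ) : FinSimp.{u, v} n := by
  induction n with
  | zero =>
    intro Γ _ hΓ hn M _ ρ hρ
    have : Finite (⊤ : Subgroup Γ) := hn
    have : Finite Γ := Finite.of_equiv _ Subgroup.topEquiv.toEquiv
    obtain ⟨p, hp, hpM⟩ := hρ.exists_prime hΓ
    exact hρ.finite_of_finite hp.ne_zero hpM
  | succ n ih => exact finSimp_succ ih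

/-- Roseblade's theorem: simple modules over polycyclic groups are finite. -/
theorem Simp.finite {Γ : Type u} {M : Type v} [Group Γ] [AddCommGroup M] (hΓ : IsPC Γ)
    {ρ : Γ →* AddMonoid.End M} (hρ : Simp ρ) : Finite M := by
  obtain ⟨n, hn⟩ := hΓ.exists_HS
  exact finSimp n Γ hΓ hn M ρ hρ

end

/-! ### Bounded packing -/

section
section ModulePacking
variable {Γ M : Type*} [Group Γ] [AddCommGroup M]

theorem IInv.sup {ρ : Γ →* AddMonoid.End M} {N N' : AddSubgroup M} (h : IInv ρ N)
    (h' : IInv ρ N') : IInv ρ (N ⊔ N') := by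
  intro g n hn
  obtain ⟨a, ha, b, hb, rfl⟩ := AddSubgroup.mem_sup.1 hn
  rw [map_add]
  exact AddSubgroup.add_mem_sup (h g a ha) (h' g b hb)

/-- Packing in modules over polycyclic groups: if the pairwise differences of the finite set `X`
avoid the submodule `B` but lie in finitely many orbits modulo `B`, then the size of `X` is
bounded. -/
theorem pack_module (hΓ : IsPC Γ) (ρ : Γ →* AddMonoid.End M) (B : AddSubgroup M)
    (hB : IInv ρ B) (F : Finset M) :
    ∃ n : ℕ, ∀ X : Finset M, (∀ x ∈ X, ∀ y ∈ X, x ≠ y →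
      x - y ∉ B ∧ ∃ g, ∃ f ∈ F, ∃ b ∈ B, x - y = ρ g f + b) → X.card ≤ n := by
  classical
  induction F using Finset.strongInduction with
  | H F ih =>
  by_cases hFB : ∀ f ∈ F, f ∈ B
  · refine ⟨1, fun X hX => Finset.card_le_one.2 fun x hx y hy => ?_⟩
    by_contra hxy
    obtain ⟨h1, g, f, hf, b, hb, h2⟩ := hX x hx y hy hxy
    exact h1 (h2 ▸ add_mem (hB g f (hFB f hf)) hb)
  let N : AddSubgroup M := orb ρ (F : Set M) ⊔ B
  have hN : IInv ρ N := (iInv_orb ρ _).sup hB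
  have hBN : B ≤ N := le_sup_right
  have hFN : ∀ f ∈ F, f ∈ N := fun f hf => (le_sup_left : _ ≤ N) (subset_orb ρ hf)
  -- `N` is generated by `F` over `B`
  have hgen : orb (resRep ρ N hN) (N.subtype ⁻¹' (F : Set M)) ⊔ B.addSubgroupOf N = ⊤ := by
    have h1 : N ≤ (orb (resRep ρ N hN) (N.subtype ⁻¹' (F : Set M)) ⊔
        B.addSubgroupOf N).map N.subtype := by
      refine sup_le ?_ ?_
      · refine (AddSubgroup.closure_le _).2 ?_
        rintro _ ⟨g, s, hs, rfl⟩
        refine ⟨resRep ρ N hN g ⟨s, hFN s hs⟩, ?_, rfl⟩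
        exact AddSubgroup.mem_sup_left (iInv_orb _ _ g _ (subset_orb _ hs))
      · intro b hb
        exact ⟨⟨b, hBN hb⟩, AddSubgroup.mem_sup_right (AddSubgroup.mem_addSubgroupOf.2 hb), rfl⟩
    rw [eq_top_iff]
    rintro ⟨x, hx⟩ _
    obtain ⟨y, hy, hyx⟩ := h1 hx
    rwa [show (⟨x, hx⟩ : N) = y from Subtype.ext hyx.symm]
  obtain ⟨L, hBL, hLtop, hL, hsimp⟩ := exists_simp_quotient (resRep ρ N hN)
    (N.subtype ⁻¹' (F : Set M)) (F.finite_toSet.preimage N.subtype_injective.injOn)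
    (B.addSubgroupOf N) hgen
    (fun g n hn => AddSubgroup.mem_addSubgroupOf.2 (hB g n (AddSubgroup.mem_addSubgroupOf.1 hn))) (by
      intro h
      apply hFB
      intro f hf
      have : (⟨f, hFN f hf⟩ : N) ∈ B.addSubgroupOf N := by rw [h]; trivial
      exact AddSubgroup.mem_addSubgroupOf.1 this)
  have hfin : Finite (N ⧸ L) := hsimp.finite hΓ
  have := Fintype.ofFinite (N ⧸ L)
  obtain ⟨n, hn⟩ := ih (F.filter fun f => f ∈ L.map N.subtype) (by
    refine Finset.filter_ssubset.2 ?_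
    by_contra h
    push Not at h
    apply hLtop
    rw [eq_top_iff, ← hgen]
    refine sup_le (orb_le hL ?_) hBL
    intro s hs
    obtain ⟨y, hy, hys⟩ := h _ hs
    have : y = s := Subtype.ext hys
    exact this ▸ hy)
  refine ⟨n * Fintype.card (N ⧸ L), fun X hX => ?_⟩
  rcases X.eq_empty_or_nonempty with rfl | ⟨x₀, hx₀⟩
  · simp
  have hXN : ∀ x ∈ X, x - x₀ ∈ N := by
    intro x hx
    by_cases hxx : x = x₀
    · rw [hxx, sub_self]; exact zero_mem _
    · obtain ⟨_, g, f, hf, b, hb, h⟩ := hX x hx x₀ hx₀ hxx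
      rw [h]
      exact add_mem (hN g f (hFN f hf)) (hBN hb)
  -- within one colour the differences lie in `L`, so the elements of `F` outside `L` are not needed
  let c : M → N ⧸ L := fun x => if h : x - x₀ ∈ N then ((⟨x - x₀, h⟩ : N) : N ⧸ L) else 0
  refine (Finset.card_le_mul_card_image (f := c) X n ?_).trans
    (Nat.mul_le_mul_left n (Finset.card_le_univ _))
  intro q _
  refine hn _ fun x hx y hy hxy => ?_
  rw [Finset.mem_filter] at hx hy
  obtain ⟨h1, g, f, hf, b, hb, h⟩ := hX x hx.1 y hy.1 hxy
  refine ⟨h1, g, f, Finset.mem_filter.2 ⟨hf, ?_⟩, b, hb, h⟩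
  have h2 : c y = c x := hy.2.trans hx.2.symm
  simp only [c, dif_pos (hXN x hx.1), dif_pos (hXN y hy.1)] at h2
  have h3 := QuotientAddGroup.eq.1 h2
  have hbN : (⟨b, hBN hb⟩ : N) ∈ L := hBL (AddSubgroup.mem_addSubgroupOf.2 hb)
  have h4 : resRep ρ N hN g ⟨f, hFN f hf⟩ ∈ L := by
    have h5 := sub_mem h3 hbN
    refine (congrArg (· ∈ L) (Subtype.ext ?_)).mp h5
    change -(y - x₀) + (x - x₀) - b = ρ g f
    have : ρ g f = (x - y) - b := by rw [h]; abel
    rw [this]; abel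
  have h6 := hL g⁻¹ _ h4
  rw [rep_inv_self] at h6
  exact ⟨_, h6, rfl⟩
end ModulePacking

section GroupPacking

/-- Bounded packing without a metric: the difference of two cosets is controlled by membership in
a double coset of one of finitely many elements. -/
def BPc (G : Type*) [Group G] (H : Subgroup G) : Prop :=
  ∀ F : Finset G, ∃ n : ℕ, ∀ X : Finset G, (∀ x ∈ X, ∀ y ∈ X, x ≠ y →
    x⁻¹ * y ∉ H ∧ ∃ h ∈ H, ∃ f ∈ F, ∃ h' ∈ H, x⁻¹ * y = h * f * h') → X.card ≤ n

/-- Bounded packing lifts through extensions with abelian kernel by polycyclic groups. -/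
theorem BPc.lift_abelian {G Q N : Type*} [Group G] [Group Q] [CommGroup N] (π : G →* Q)
    (hQ : IsPC Q) (hBP : ∀ K : Subgroup Q, BPc Q K) (i : N →* G) (hi : Function.Injective i)
    (hiπ : i.range = π.ker) (α : G →* MulAut N) (hα : ∀ g n, i (α g n) = g * i n * g⁻¹)
    (H : Subgroup G) : BPc G H := by
  classical
  intro F
  have hker : ∀ g, π g = 1 → ∃ n, i n = g := fun g hg => by
    have : g ∈ i.range := by rw [hiπ]; exact hg
    exact this
  have hπi : ∀ n, π (i n) = 1 := fun n => by
    have : i n ∈ π.ker := by rw [← hiπ]; exact ⟨n, rfl⟩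
    exact this
  -- the action of `H / (H ∩ N)` on `N`
  let ρH : H →* AddMonoid.End (Additive N) :=
    { toFun := fun h => MonoidHom.toAdditive (α h).toMonoidHom
      map_one' := by
        refine AddMonoidHom.ext fun x => ?_
        change Additive.ofMul (α 1 x.toMul) = x
        rw [map_one]; rfl
      map_mul' := fun g h => by
        refine AddMonoidHom.ext fun x => ?_
        change Additive.ofMul (α (g * h) x.toMul) = Additive.ofMul (α g (α h x.toMul))
        rw [map_mul]; rfl }
  let Z : Subgroup H := (π.comp H.subtype).ker
  have hZ : Z ≤ ρH.ker := by
    intro h hh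
    obtain ⟨n, hn⟩ := hker h hh
    refine AddMonoidHom.ext fun x => ?_
    change Additive.ofMul (α h x.toMul) = x
    have : α h x.toMul = x.toMul := by
      apply hi
      rw [hα, ← hn, ← map_mul, ← map_inv, ← map_mul, mul_comm n, mul_inv_cancel_right]
    rw [this]; rfl
  have hPC : IsPC (H ⧸ Z) :=
    (hQ.subgroup (π.comp H.subtype).range).of_surjective
      (QuotientGroup.quotientKerEquivRange (π.comp H.subtype)).symm.toMonoidHom
      (QuotientGroup.quotientKerEquivRange (π.comp H.subtype)).symm.surjective
  let ρ : H ⧸ Z →* AddMonoid.End (Additive N) := QuotientGroup.lift Z ρH hZ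
  let B : AddSubgroup (Additive N) := (H.comap i).toAddSubgroup
  have hBmem : ∀ n : N, Additive.ofMul n ∈ B ↔ i n ∈ H := fun _ => Iff.rfl
  have hB : IInv ρ B := by
    intro g n hn
    obtain ⟨h, rfl⟩ := QuotientGroup.mk_surjective g
    change i (α h n.toMul) ∈ H
    rw [hα]
    exact H.mul_mem (H.mul_mem h.2 hn) (H.inv_mem h.2)
  -- components in `N` of the elements of `H N`
  have hdec : ∀ g : G, ∃ n : N, π g ∈ H.map π → ∃ h ∈ H, g = i n * h := by
    intro g
    by_cases hg : π g ∈ H.map π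
    · obtain ⟨h, hh, hhg⟩ := hg
      obtain ⟨n, hn⟩ := hker (g * h⁻¹) (by rw [map_mul, map_inv, hhg, mul_inv_cancel])
      exact ⟨n, fun _ => ⟨h, hh, by rw [hn, inv_mul_cancel_right]⟩⟩
    · exact ⟨1, fun h => absurd h hg⟩
  choose ν hν using hdec
  obtain ⟨n₁, hn₁⟩ := hBP (H.map π) (F.image π)
  obtain ⟨n₂, hn₂⟩ := pack_module hPC ρ B hB (F.image fun f => Additive.ofMul (ν f))
  refine ⟨n₂ * n₁, fun X hX => ?_⟩
  let c : G → Q ⧸ H.map π := fun x => (π x : Q ⧸ H.map π)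
  refine (Finset.card_le_mul_card_image (f := c) X n₂ ?_).trans (Nat.mul_le_mul_left n₂ ?_)
  · intro q _
    rcases (X.filter fun x => c x = q).eq_empty_or_nonempty with he | ⟨x₀, hx₀⟩
    · rw [he]; simp
    have hmem : ∀ x ∈ X.filter fun x => c x = q, π (x₀⁻¹ * x) ∈ H.map π := by
      intro x hx
      rw [Finset.mem_filter] at hx hx₀
      have := QuotientGroup.eq.1 (hx₀.2.trans hx.2.symm)
      rwa [map_mul, map_inv]
    have key : ∀ x ∈ X.filter (fun x => c x = q), ∀ y ∈ X.filter (fun x => c x = q), x ≠ y →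
        Additive.ofMul (ν (x₀⁻¹ * x)) - Additive.ofMul (ν (x₀⁻¹ * y)) ∉ B ∧ ∃ g,
          ∃ f ∈ F.image fun f => Additive.ofMul (ν f), ∃ b ∈ B,
          Additive.ofMul (ν (x₀⁻¹ * x)) - Additive.ofMul (ν (x₀⁻¹ * y)) = ρ g f + b := by
      intro x hx y hy hxy
      obtain ⟨hx', hhx, hxe⟩ := hν _ (hmem x hx)
      obtain ⟨hy', hhy, hye⟩ := hν _ (hmem y hy)
      obtain ⟨hnot, k, hk, f, hf, k', hk', he⟩ :=
        hX y (Finset.mem_filter.1 hy).1 x (Finset.mem_filter.1 hx).1 hxy.symm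
      have e1 : i (ν (x₀⁻¹ * x) / ν (x₀⁻¹ * y)) = hy' * (y⁻¹ * x) * hx'⁻¹ := by
        rw [div_eq_mul_inv, mul_comm, map_mul, map_inv]
        rw [show i (ν (x₀⁻¹ * x)) = x₀⁻¹ * x * hx'⁻¹ by rw [eq_mul_inv_iff_mul_eq]; exact hxe.symm,
          show i (ν (x₀⁻¹ * y)) = x₀⁻¹ * y * hy'⁻¹ by rw [eq_mul_inv_iff_mul_eq]; exact hye.symm]
        group
      refine ⟨?_, ?_⟩
      · change i (ν (x₀⁻¹ * x) / ν (x₀⁻¹ * y)) ∉ H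
        rw [e1]
        intro hcon
        apply hnot
        have := H.mul_mem (H.mul_mem (H.inv_mem hhy) hcon) hhx
        rwa [show hy'⁻¹ * (hy' * (y⁻¹ * x) * hx'⁻¹) * hx' = y⁻¹ * x by group] at this
      · have hfH : π f ∈ H.map π := by
          have e2 := hπi (ν (x₀⁻¹ * x) / ν (x₀⁻¹ * y))
          rw [e1, he] at e2
          refine ⟨(hy' * k)⁻¹ * (k' * hx'⁻¹)⁻¹, H.mul_mem (H.inv_mem (H.mul_mem hhy hk))
            (H.inv_mem (H.mul_mem hk' (H.inv_mem hhx))), ?_⟩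
          rw [show f = (hy' * k)⁻¹ * (hy' * (k * f * k') * hx'⁻¹) * (k' * hx'⁻¹)⁻¹ by group]
          rw [map_mul π ((hy' * k)⁻¹ * (hy' * (k * f * k') * hx'⁻¹)) ((k' * hx'⁻¹)⁻¹),
            map_mul π ((hy' * k)⁻¹) (hy' * (k * f * k') * hx'⁻¹), e2, mul_one, ← map_mul]
        obtain ⟨hf', hhf, hfe⟩ := hν f hfH
        have hkk : hy' * k ∈ H := H.mul_mem hhy hk
        have e3 : i (ν (x₀⁻¹ * x) / ν (x₀⁻¹ * y) / α (hy' * k) (ν f)) ∈ H := by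
          rw [div_eq_mul_inv, mul_comm, map_mul, map_inv, e1, he, hα]
          rw [show i (ν f) = f * hf'⁻¹ by rw [eq_mul_inv_iff_mul_eq]; exact hfe.symm]
          rw [show (hy' * k * (f * hf'⁻¹) * (hy' * k)⁻¹)⁻¹ * (hy' * (k * f * k') * hx'⁻¹) =
            (hy' * k) * hf' * k' * hx'⁻¹ by group]
          exact H.mul_mem (H.mul_mem (H.mul_mem hkk hhf) hk') (H.inv_mem hhx)
        refine ⟨((⟨hy' * k, hkk⟩ : H) : H ⧸ Z), _, Finset.mem_image_of_mem _ hf, _,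
          (hBmem _).2 e3, ?_⟩
        change _ = Additive.ofMul (α (hy' * k) (ν f)) + _
        rw [← ofMul_mul, mul_div_cancel, ofMul_div]
    have hinj : Set.InjOn (fun x => Additive.ofMul (ν (x₀⁻¹ * x)))
        (X.filter fun x => c x = q : Finset G) := by
      intro x hx y hy hxy
      by_contra hne
      apply (key x hx y hy hne).1
      have hxy : Additive.ofMul (ν (x₀⁻¹ * x)) = Additive.ofMul (ν (x₀⁻¹ * y)) := hxy
      rw [hxy, sub_self]
      exact zero_mem _
    rw [← Finset.card_image_of_injOn hinj]
    refine hn₂ _ fun x hx y hy hxy => ?_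
    obtain ⟨x', hx', rfl⟩ := Finset.mem_image.1 hx
    obtain ⟨y', hy', rfl⟩ := Finset.mem_image.1 hy
    exact key x' hx' y' hy' (fun h => hxy (by rw [h]))
  · have hr : ∀ q ∈ X.image c, ∃ x ∈ X, c x = q := fun q hq => Finset.mem_image.1 hq
    choose! r hrX hrc using hr
    have hrc' : ∀ q ∈ X.image c, ((π (r q) : Q) : Q ⧸ H.map π) = q := hrc
    have hinj : Set.InjOn (fun q => π (r q)) (X.image c : Finset (Q ⧸ H.map π)) := by
      intro q hq q' hq' h
      rw [← hrc' q hq, ← hrc' q' hq']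
      exact congrArg _ h
    rw [← Finset.card_image_of_injOn hinj]
    refine hn₁ _ fun x hx y hy hxy => ?_
    obtain ⟨q, hq, rfl⟩ := Finset.mem_image.1 hx
    obtain ⟨q', hq', rfl⟩ := Finset.mem_image.1 hy
    have hqq : q ≠ q' := fun h => hxy (by rw [h])
    refine ⟨fun h => hqq ?_, ?_⟩
    · rw [← hrc' q hq, ← hrc' q' hq']
      exact QuotientGroup.eq.2 h
    · obtain ⟨-, h, hh, f, hf, h', hh', he⟩ := hX _ (hrX q hq) _ (hrX q' hq')
        (fun h => hxy (by rw [h]))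
      refine ⟨π h, ⟨h, hh, rfl⟩, π f, Finset.mem_image_of_mem _ hf, π h', ⟨h', hh', rfl⟩, ?_⟩
      rw [← map_inv, ← map_mul, he, map_mul, map_mul]

theorem BPc.of_ker_comm {G Q : Type*} [Group G] [Group Q] (π : G →* Q)
    (hQ : IsPC Q) (hBP : ∀ K : Subgroup Q, BPc Q K) (hab : ∀ x y : π.ker, x * y = y * x)
    (H : Subgroup G) : BPc G H :=
  @BPc.lift_abelian G Q π.ker _ _ { (inferInstance : Group π.ker) with mul_comm := hab } π hQ hBP
    π.ker.subtype π.ker.subtype_injective π.ker.range_subtype MulAut.conjNormal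
    (fun g n => MulAut.conjNormal_apply g n) H

open scoped commutatorElement in
/-- Induction on the derived length, with the last term of the derived series as abelian kernel. -/
theorem IsPC.bpc {Q : Type*} [Group Q] (hQ : IsPC Q) (H : Subgroup Q) : BPc Q H := by
  obtain ⟨n, hn⟩ := hQ.1
  induction n generalizing Q with
  | zero =>
    refine fun F => ⟨1, fun X _ => Finset.card_le_one.2 fun x _ y _ => ?_⟩
    have h : ∀ z : Q, z = 1 := fun z => by
      have : z ∈ derivedSeries Q 0 := by rw [derivedSeries_zero]; trivial
      rwa [hn] at this
    rw [h x, h y]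
  | succ n ih =>
    have hs := QuotientGroup.mk'_surjective (derivedSeries Q n)
    have hPC := hQ.of_surjective _ hs
    refine BPc.of_ker_comm (QuotientGroup.mk' (derivedSeries Q n)) hPC (fun K => ih hPC K ?_) ?_ H
    · rw [← map_derivedSeries_eq hs, Subgroup.map_eq_bot_iff, QuotientGroup.ker_mk']
    · rintro ⟨x, hx⟩ ⟨y, hy⟩
      rw [QuotientGroup.ker_mk'] at hx hy
      have h : ⁅x, y⁆ ∈ derivedSeries Q (n + 1) := by
        rw [derivedSeries_succ]; exact Subgroup.commutator_mem_commutator hx hy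
      rw [hn, Subgroup.mem_bot, commutatorElement_eq_one_iff_mul_comm] at h
      exact Subtype.ext h
end GroupPacking

end

end BPack

/-- If `G` is countable, `π : G → Q` is a surjection with abelian kernel and `Q`
is polycyclic, then every subgroup of `G` has bounded packing with respect to
every proper left-invariant metric on `G`. -/
theorem abelian_by_polycyclic_hasBoundedPacking {G Q : Type*} [Group G] [Group Q]
    [Countable G] (π : G →* Q) (hπ : Function.Surjective π)
    (hab : ∀ x y : π.ker, x * y = y * x)
    (hsolv : IsSolvable Q) (hfg : ∀ K : Subgroup Q, K.FG) :
    ∀ d : G → G → ℝ, IsProperLeftInvMetric G d →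
      ∀ H : Subgroup G, HasBoundedPacking d H := by
  intro d hd H D hD
  have hPC : BPack.IsPC Q := ⟨hsolv, hfg⟩
  -- The ball has radius `D + 1` because the infimum defining `cosetDist` need not be attained.
  obtain ⟨n, hn⟩ := BPack.BPc.of_ker_comm π hPC (fun K => hPC.bpc K) hab H
    (hd.proper (D + 1) (by linarith)).toFinset
  refine ⟨n, fun S hS1 hS2 T hT => ?_⟩
  choose! g hg using hS1
  have hinj : Set.InjOn g (T : Set (Set G)) := fun A hA B hB h => by
    rw [hg A (hT hA), hg B (hT hB), h]
  classical
  rw [← Finset.card_image_of_injOn hinj]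
  refine hn _ fun x hx y hy hxy => ?_
  obtain ⟨A, hA, rfl⟩ := Finset.mem_image.1 hx
  obtain ⟨B, hB, rfl⟩ := Finset.mem_image.1 hy
  have hAS := hT hA
  have hBS := hT hB
  refine ⟨fun h => hxy (congrArg g ?_), ?_⟩
  · rw [hg A hAS, hg B hBS]
    exact (leftCoset_eq_iff H).2 h
  · have hlt : cosetDist d A B < D + 1 := (hS2 A hAS B hBS).trans_lt (lt_add_one D)
    have hgA : g A ∈ A := by
      have h1 : g A ∈ g A • (H : Set G) := ⟨1, H.one_mem, mul_one _⟩
      rwa [← hg A hAS] at h1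
    have hgB : g B ∈ B := by
      have h1 : g B ∈ g B • (H : Set G) := ⟨1, H.one_mem, mul_one _⟩
      rwa [← hg B hBS] at h1
    have hne : {r : ℝ | ∃ x ∈ A, ∃ y ∈ B, d x y = r}.Nonempty :=
      ⟨d (g A) (g B), g A, hgA, g B, hgB, rfl⟩
    obtain ⟨_, ⟨a, ha, b, hb, rfl⟩, hr⟩ := exists_lt_of_csInf_lt hne hlt
    rw [hg A hAS] at ha
    rw [hg B hBS] at hb
    obtain ⟨h, hh, rfl⟩ := ha
    obtain ⟨h', hh', rfl⟩ := hb
    refine ⟨h, hh, (g A * h)⁻¹ * (g B * h'), ?_, h'⁻¹, H.inv_mem hh', by group⟩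
    rw [Set.Finite.mem_toFinset]
    have := hd.left_invariant (g A * h)⁻¹ (g A * h) (g B * h')
    rw [inv_mul_cancel] at this
    exact (this.trans_lt hr).le
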